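/- arXiv:2407.20521 — 6 statements merged into one kernel-verified Lean document; each statement's English description precedes it below -/
import Mathlib

section
/- Let ζ ∈ ℂ satisfy ζ³ = 1 and ζ ≠ 1, and consider the polynomial ring ℂ[x₁, x₂, x₃]. A polynomial F ∈ ℂ[x₁, x₂, x₃] satisfies x₁·∂F/∂x₁ + ζ·x₂·∂F/∂x₂ + ζ²·x₃·∂F/∂x₃ = 0 if and only if F lies in the ℂ-subalgebra of ℂ[x₁, x₂, x₃] generated by the single monomial x₁·x₂·x₃. -/
open MvPolynomial

/-!
The operator `x₁∂₁ + ζx₂∂₂ + ζ²x₃∂₃` is diagonal in the monomial basis, with eigenvalue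
`a + bζ + cζ²` on `x₁ᵃx₂ᵇx₃ᶜ`. Since `1 + ζ + ζ² = 0` and `1, ζ` are linearly independent over `ℤ`
(the norm form `u² - uv + v²` is anisotropic), the eigenvalue vanishes only for `a = b = c`
(`exponents_eq`). Hence every monomial of a first integral is a power of `x₁x₂x₃`. Conversely,
the operator is a derivation killing `x₁x₂x₃`, so it kills the subalgebra generated by it.
-/

theorem coeff_X_mul_pderiv (i : Fin 3) (F : MvPolynomial (Fin 3) ℂ) (m : Fin 3 →₀ ℕ) :
    coeff m (X i * pderiv i F) = (m i : ℂ) * coeff m F := by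
  induction F using MvPolynomial.induction_on' with
  | monomial n a =>
    rw [X_mul_pderiv_monomial, coeff_smul, coeff_monomial]
    split_ifs with h
    · simp [h]
    · simp
  | add p q hp hq =>
    rw [map_add, mul_add, coeff_add, hp, hq, coeff_add, mul_add]

theorem exponents_eq {ζ : ℂ} (hζ : ζ ^ 2 + ζ + 1 = 0) {a b c : ℕ}
    (h : (a : ℂ) + ζ * b + ζ ^ 2 * c = 0) : a = c ∧ b = c := by
  -- The norm of `(a - c) + (b - c)ζ`, whose conjugate factor is `(a - c) + (b - c)ζ²`.
  have hN : ((a : ℤ) - c) ^ 2 - ((a : ℤ) - c) * (b - c) + ((b : ℤ) - c) ^ 2 = 0 := by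
    have : ((a : ℂ) - c) ^ 2 - ((a : ℂ) - c) * (b - c) + ((b : ℂ) - c) ^ 2 = 0 := by
      have h' : ((a : ℂ) - c) + (b - c) * ζ = 0 := by linear_combination h - c * hζ
      linear_combination (((a : ℂ) - c) + (b - c) * ζ ^ 2) * h'
        - (((a : ℂ) - c) * (b - c) + (b - c) ^ 2 * (ζ - 1)) * hζ
    exact_mod_cast this
  have hu : ((a : ℤ) - c) ^ 2 = 0 := by
    nlinarith [sq_nonneg ((a : ℤ) - c), sq_nonneg ((a : ℤ) - c - 2 * (b - c))]
  have hv : ((b : ℤ) - c) ^ 2 = 0 := by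
    nlinarith [sq_nonneg ((b : ℤ) - c), sq_nonneg ((b : ℤ) - c - 2 * (a - c))]
  have hu' := pow_eq_zero_iff (two_ne_zero) |>.mp hu
  have hv' := pow_eq_zero_iff (two_ne_zero) |>.mp hv
  omega

/-- For ζ a primitive cube root of unity, a polynomial
F ∈ ℂ[x₁, x₂, x₃] satisfies x₁∂F/∂x₁ + ζx₂∂F/∂x₂ + ζ²x₃∂F/∂x₃ = 0 iff F lies in
the ℂ-subalgebra generated by x₁x₂x₃. -/
theorem stmt_11 (ζ : ℂ) (h3 : ζ ^ 3 = 1) (h1 : ζ ≠ 1)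
    (F : MvPolynomial (Fin 3) ℂ) :
    X 0 * pderiv 0 F + C ζ * X 1 * pderiv 1 F + C (ζ ^ 2) * X 2 * pderiv 2 F = 0 ↔
      F ∈ Algebra.adjoin ℂ ({X 0 * X 1 * X 2} : Set (MvPolynomial (Fin 3) ℂ)) := by
  have hζ : ζ ^ 2 + ζ + 1 = 0 :=
    mul_left_cancel₀ (sub_ne_zero.mpr h1) (by linear_combination h3)
  constructor
  · intro h
    rw [F.as_sum]
    refine Subalgebra.sum_mem _ fun m hm => ?_
    have hc := congrArg (coeff m) h
    rw [mul_assoc, mul_assoc, coeff_add, coeff_add, coeff_C_mul, coeff_C_mul,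
      coeff_X_mul_pderiv, coeff_X_mul_pderiv, coeff_X_mul_pderiv, coeff_zero] at hc
    obtain ⟨h02, h12⟩ := exponents_eq hζ (a := m 0) (b := m 1) (c := m 2)
      (mul_right_cancel₀ (mem_support_iff.mp hm) (by linear_combination hc))
    have hmon : monomial m (coeff m F) = coeff m F • (X 0 * X 1 * X 2) ^ m 2 := by
      rw [monomial_eq, Finsupp.prod_fintype _ _ (by simp), Fin.prod_univ_three, h02, h12,
        smul_eq_C_mul, mul_pow, mul_pow]
    rw [hmon]
    exact Subalgebra.smul_mem _
      (Subalgebra.pow_mem _ (Algebra.subset_adjoin (Set.mem_singleton _)) _) _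
  · intro h
    induction h using Algebra.adjoin_induction with
    | mem x hx =>
      rw [Set.mem_singleton_iff.mp hx]
      have hC : (C (ζ ^ 2) + C ζ + 1 : MvPolynomial (Fin 3) ℂ) = 0 := by
        rw [← C_1, ← C_add, ← C_add, hζ, C_0]
      simp only [Derivation.leibniz, pderiv_X, smul_eq_mul, Pi.single_apply]
      simp
      simp only [map_pow] at hC
      linear_combination (X 0 * X 1 * X 2) * hC
    | algebraMap r => simp [algebraMap_eq]
    | add x y _ _ hx hy =>
      simp only [map_add]
      linear_combination hx + hy
    | mul x y _ _ hx hy =>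
      simp only [Derivation.leibniz, smul_eq_mul]
      linear_combination x * hy + y * hx
end

section
/- Let ζ ∈ ℂ satisfy ζ³ = 1 and ζ ≠ 1, and let c₁, c₂ ∈ ℂ. Define ξ : ℂ → ℂ by ξ(z) = Σ_{j≥0} (ζ^(j+2) · c₁ · c₂^j / (j! · (ζ·j + ζ²))) · z^j. Then for every z ∈ ℂ, ξ is differentiable at z and satisfies the linear ODE ζ·z·ξ′(z) + ζ²·ξ(z) = ζ²·c₁·exp(ζ·c₂·z). -/
/-!
Multiplying the `j`-th coefficient of `ξ` by `ζ j + ζ²` cancels its denominator, so applying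
`ζ z d/dz + ζ²` term by term turns the series of `ξ` into `ζ² c₁ ∑ (ζ c₂ z)^j / j!`, the series of
the right-hand side. Termwise differentiation is justified on discs by the Weierstrass M-test: by
`one_le_norm_denominator` the denominators `ζ j + ζ²` have norm at least `1`, so on the disc of
radius `R` the series is dominated by `‖c₁‖ ∑ (‖c₂‖ R)^j / j!`.
-/

/-- Since `ζ` has norm one, `‖ζ j + ζ²‖² = ‖j + ζ‖² = j² - j + 1`, which is at least `1` for
every natural number `j`. -/
lemma one_le_norm_denominator {ζ : ℂ} (h3 : ζ ^ 3 = 1) (h1 : ζ ≠ 1) (j : ℕ) :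
    1 ≤ ‖ζ * (j : ℂ) + ζ ^ 2‖ := by
  have hn : ‖ζ‖ = 1 := Complex.norm_eq_one_of_pow_eq_one h3 (by norm_num)
  have hq : ζ ^ 2 + ζ + 1 = 0 := by
    have : (ζ - 1) * (ζ ^ 2 + ζ + 1) = 0 := by linear_combination h3
    exact (mul_eq_zero.mp this).resolve_left (sub_ne_zero.mpr h1)
  have hc : (starRingEnd ℂ) ζ = ζ ^ 2 := by
    rw [← Complex.inv_eq_conj hn]
    exact inv_eq_of_mul_eq_one_right (by linear_combination h3)
  have hs : ‖(j : ℂ) + ζ‖ ^ 2 = (j : ℝ) ^ 2 - j + 1 := by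
    have h := Complex.mul_conj' ((j : ℂ) + ζ)
    rw [map_add, hc, Complex.conj_natCast] at h
    have h' : ((‖(j : ℂ) + ζ‖ ^ 2 : ℝ) : ℂ) = (((j : ℝ) ^ 2 - j + 1 : ℝ) : ℂ) := by
      push_cast
      rw [← h]
      linear_combination (j : ℂ) * hq + h3
    exact_mod_cast h'
  have hj : (j : ℝ) ≤ (j : ℝ) ^ 2 := by
    exact_mod_cast Nat.le_self_pow (by norm_num) j
  have he : ζ * (j : ℂ) + ζ ^ 2 = ζ * (j + ζ) := by ring
  rw [he, norm_mul, hn, one_mul]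
  nlinarith [norm_nonneg ((j : ℂ) + ζ)]

/-- For ζ a primitive cube root of unity and c₁, c₂ ∈ ℂ, the
function ξ(z) = Σ_{j≥0} (ζ^(j+2)c₁c₂^j/(j!(ζj+ζ²)))z^j is differentiable at
every z ∈ ℂ and satisfies ζ·z·ξ′(z) + ζ²·ξ(z) = ζ²·c₁·exp(ζc₂z). -/
theorem stmt_13 (ζ : ℂ) (h3 : ζ ^ 3 = 1) (h1 : ζ ≠ 1) (c₁ c₂ : ℂ)
    (ξ : ℂ → ℂ)
    (hξ : ∀ z : ℂ, ξ z =
      ∑' j : ℕ, ζ ^ (j + 2) * c₁ * c₂ ^ j / ((j.factorial : ℂ) * (ζ * (j : ℂ) + ζ ^ 2)) * z ^ j)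
    (z : ℂ) :
    DifferentiableAt ℂ ξ z ∧
      ζ * z * deriv ξ z + ζ ^ 2 * ξ z = ζ ^ 2 * c₁ * Complex.exp (ζ * c₂ * z) := by
  have hn : ‖ζ‖ = 1 := Complex.norm_eq_one_of_pow_eq_one h3 (by norm_num)
  have hd := one_le_norm_denominator h3 h1
  set a : ℕ → ℂ := fun j =>
    ζ ^ (j + 2) * c₁ * c₂ ^ j / ((j.factorial : ℂ) * (ζ * (j : ℂ) + ζ ^ 2)) with ha
  have hξ' : ξ = fun w => ∑' j : ℕ, a j * w ^ j := funext hξ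
  set R : ℝ := ‖z‖ + 1 with hR
  have hu : Summable fun j : ℕ => ‖c₁‖ * ((‖c₂‖ * R) ^ j / (j.factorial : ℝ)) :=
    (Real.summable_pow_div_factorial _).mul_left _
  have hf : ∀ j : ℕ, DifferentiableOn ℂ (fun w : ℂ => a j * w ^ j) (Metric.ball 0 R) :=
    fun j => by fun_prop
  have hle : ∀ (j : ℕ) (w : ℂ), w ∈ Metric.ball (0 : ℂ) R →
      ‖a j * w ^ j‖ ≤ ‖c₁‖ * ((‖c₂‖ * R) ^ j / (j.factorial : ℝ)) := by
    intro j w hw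
    have hw' : ‖w‖ ≤ R := (mem_ball_zero_iff.mp hw).le
    have hf0 : (0 : ℝ) < j.factorial := by exact_mod_cast j.factorial_pos
    have haj : ‖a j‖ ≤ ‖c₁‖ * ‖c₂‖ ^ j / (j.factorial : ℝ) := by
      simp only [ha, norm_div, norm_mul, norm_pow, hn, one_pow, one_mul, Complex.norm_natCast]
      gcongr
      exact le_mul_of_one_le_right hf0.le (hd j)
    calc ‖a j * w ^ j‖ = ‖a j‖ * ‖w‖ ^ j := by rw [norm_mul, norm_pow]
      _ ≤ ‖c₁‖ * ‖c₂‖ ^ j / (j.factorial : ℝ) * R ^ j := by gcongr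
      _ = _ := by rw [mul_pow]; ring
  have hz : z ∈ Metric.ball (0 : ℂ) R := by simp [hR]
  have hdiff := (Complex.differentiableOn_tsum_of_summable_norm hu hf Metric.isOpen_ball hle)
  have hder := Complex.hasSum_deriv_of_summable_norm hu hf Metric.isOpen_ball hle hz
  rw [← hξ'] at hdiff hder
  refine ⟨hdiff.differentiableAt (Metric.isOpen_ball.mem_nhds hz), ?_⟩
  have hsum : HasSum (fun j : ℕ => a j * z ^ j) (ξ z) := by
    rw [hξ']
    exact (Summable.of_norm_bounded hu fun j => hle j z hz).hasSum
  have hexp : HasSum (fun j : ℕ => (ζ * c₂ * z) ^ j / (j.factorial : ℂ))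
      (Complex.exp (ζ * c₂ * z)) := by
    rw [Complex.exp_eq_exp_ℂ]
    exact NormedSpace.expSeries_div_hasSum_exp _
  refine ((hder.mul_left (ζ * z)).add (hsum.mul_left (ζ ^ 2))).unique ?_
  convert hexp.mul_left (ζ ^ 2 * c₁) using 2 with j
  have hd0 : ζ * (j : ℂ) + ζ ^ 2 ≠ 0 := norm_pos_iff.mp (one_pos.trans_le (hd j))
  have hac : a j * (ζ * (j : ℂ) + ζ ^ 2) = ζ ^ (j + 2) * c₁ * c₂ ^ j / (j.factorial : ℂ) := by
    simp only [ha]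
    rw [← div_div, div_mul_cancel₀ _ hd0]
  have hpow : z * ((j : ℂ) * z ^ (j - 1)) = j * z ^ j := by
    cases j with
    | zero => simp
    | succ k => rw [Nat.add_sub_cancel, pow_succ]; ring
  have hdj : deriv (fun w : ℂ => a j * w ^ j) z = a j * ((j : ℂ) * z ^ (j - 1)) :=
    ((hasDerivAt_pow j z).const_mul (a j)).deriv
  rw [hdj]
  calc ζ * z * (a j * ((j : ℂ) * z ^ (j - 1))) + ζ ^ 2 * (a j * z ^ j)
      = a j * (ζ * (j : ℂ) + ζ ^ 2) * z ^ j := by linear_combination ζ * a j * hpow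
    _ = _ := by rw [hac, mul_pow, mul_pow]; ring
end

section
/- Let ζ ∈ ℂ satisfy ζ³ = 1 and ζ ≠ 1. Let F : ℂ³ → ℂ³ be a polynomial map of the form F(x) = (x₁ + p(x), ζ·(x₂ + q(x)), ζ²·(x₃ + r(x))), where p, q, r are polynomials all of whose monomials have total degree at least 2. Suppose F is ζ-reversible: there exist α, β, γ ∈ ℂ with α·β·γ = 1 such that, with A the 3×3 matrix sending (x₁, x₂, x₃) to (α·x₂, β·x₃, γ·x₁), one has A·F(x) = ζ·F(A·x) for all x ∈ ℂ³. Then there exists a function Φ : ℂ³ → ℂ, analytic on a neighborhood of the origin, such that (i) the function x ↦ Φ(x) − x₁·x₂·x₃ vanishes to order at least 4 at the origin (its derivatives of orders 0, 1, 2, 3 at 0 are all zero), and (ii) for all x in a neighborhood of the origin, F₁(x)·∂Φ/∂x₁(x) + F₂(x)·∂Φ/∂x₂(x) + F₃(x)·∂Φ/∂x₃(x) = 0. -/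
/-!
The linear part `diag(1, ζ, ζ²)` has the resonant monomials `x₁ (x₁x₂x₃)ᵏ` in the first equation and
their cyclic images in the others. Reversibility forces the three resonant series to coincide, so
the normal form is `(1 + g) · (y₁, ζ y₂, ζ² y₃)` with `g` a series in `y₁y₂y₃`. This field has the
first integral `y₁y₂y₃`, because `1 + ζ + ζ² = 0`. There are no small divisors, since the nonzero
numbers `m₀ - 1 + ζ m₁ + ζ² m₂` are Eisenstein integers and have modulus at least `1`; hence the
normalizing change of coordinates converges.

Convergence is obtained from the Banach fixed point theorem. Let `Wiener` be the Banach algebra of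
power series in three variables with absolutely summable coefficients, and let `L` be the
derivation along `(y₁, ζ y₂, ζ² y₃)`. A parametrization compatible with the reversing symmetry has
the form `X(z) = (ρ ξ(z), ρ α⁻¹ ξ(rot z), ρ γ ξ(rot² z))` with a single unknown series
`ξ = y₁ + H u`, where `rot` permutes the coordinates cyclically and `H` inverts `L - 1` on the
nonresonant monomials. With `M = L H` and with `S` the operator extracting the resonant part
(`u = M u - H u + y₁ · S u`, see `Wiener.decomp`), the conjugacy equation
`(1 + g) · L ξ = ξ + ρ G(ρ, u)`, `g = S u`, is equivalent to `u = ρ G(ρ, u) - S u * M u`. All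
operators here are bounded, thanks to the division by `L - 1`, so that for small `ρ` the right-hand
side is a contraction of a small ball (`exists_fixed`, `Wiener.exists_normal_form`).

The symmetry turns the first equation of the conjugacy into the other two, giving
`(1 + g(z)) DX(z)(z₁, ζ z₂, ζ² z₃) = F(X(z))`. By the inverse function theorem `X` has an analytic
local inverse `Y`, and `Φ = ρ³ α⁻¹ γ · Y₁Y₂Y₃` is the required first integral
(`Wiener.exists_integral`).
-/

open scoped Topology

/-! ### The Banach algebra of absolutely summable power series -/

/-- Exponents of monomials in three variables. -/
abbrev Idx := Fin 3 →₀ ℕ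

/-- A sequence dominated by the Cauchy product of two nonnegative summable families is summable, and
its sum is at most the product of the two sums. -/
lemma summable_conv_real {f g h : Idx → ℝ} (hf : Summable f) (hg : Summable g)
    (hf0 : ∀ m, 0 ≤ f m) (hg0 : ∀ m, 0 ≤ g m) (hh0 : ∀ m, 0 ≤ h m)
    (hle : ∀ m, h m ≤ ∑ k ∈ Finset.HasAntidiagonal.antidiagonal m, f k.1 * g k.2) :
    Summable h ∧ ∑' m, h m ≤ (∑' m, f m) * ∑' m, g m := by
  have hfg : Summable fun x : Idx × Idx => f x.1 * g x.2 := hf.mul_of_nonneg hg hf0 hg0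
  have hs := summable_sum_mul_antidiagonal_of_summable_mul hfg
  have h1 := Summable.of_nonneg_of_le hh0 hle hs
  refine ⟨h1, ?_⟩
  rw [hf.tsum_mul_tsum_eq_tsum_sum_antidiagonal hg hfg]
  exact h1.tsum_le_tsum hle hs

lemma summable_conv {a b : MvPowerSeries (Fin 3) ℂ}
    (ha : Summable fun m : Idx => ‖MvPowerSeries.coeff m a‖)
    (hb : Summable fun m : Idx => ‖MvPowerSeries.coeff m b‖) :
    (Summable fun m : Idx => ‖MvPowerSeries.coeff m (a * b)‖) ∧
      ∑' m : Idx, ‖MvPowerSeries.coeff m (a * b)‖ ≤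
        (∑' m : Idx, ‖MvPowerSeries.coeff m a‖) * ∑' m : Idx, ‖MvPowerSeries.coeff m b‖ := by
  refine summable_conv_real ha hb (fun _ => norm_nonneg _) (fun _ => norm_nonneg _)
    (fun _ => norm_nonneg _) fun m => ?_
  rw [MvPowerSeries.coeff_mul]
  refine (norm_sum_le _ _).trans (Finset.sum_le_sum fun k _ => ?_)
  rw [norm_mul]

lemma summable_monomial (m : Idx) (c : ℂ) :
    Summable fun n : Idx => ‖MvPowerSeries.coeff n (MvPowerSeries.monomial m c)‖ := by
  classical
  refine summable_of_ne_finset_zero (s := {m}) fun n hn => ?_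
  rw [MvPowerSeries.coeff_monomial, if_neg (by simpa using hn), norm_zero]

/-- Absolutely summable power series as a subalgebra of all power series. -/
def wienerSub : Subalgebra ℂ (MvPowerSeries (Fin 3) ℂ) where
  carrier := {a | Summable fun m : Idx => ‖MvPowerSeries.coeff m a‖}
  mul_mem' ha hb := (summable_conv ha hb).1
  add_mem' ha hb := by
    refine Summable.of_nonneg_of_le (fun _ => norm_nonneg _) (fun m => ?_) (Summable.add ha hb)
    rw [map_add]
    exact norm_add_le _ _
  algebraMap_mem' c := by
    have := summable_monomial 0 c
    simpa [MvPowerSeries.algebraMap_apply] using this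

/-- The Wiener algebra: power series in three variables with absolutely summable coefficients. It is
a type synonym of `wienerSub`, so that the `ℓ¹` norm can be put on it. -/
def Wiener : Type := wienerSub

namespace Wiener

noncomputable instance : CommRing Wiener := inferInstanceAs (CommRing wienerSub)
noncomputable instance : Algebra ℂ Wiener := inferInstanceAs (Algebra ℂ wienerSub)

/-- The inclusion into all formal power series. -/
noncomputable def incl : Wiener →ₐ[ℂ] MvPowerSeries (Fin 3) ℂ := wienerSub.val

/-- The coefficient of the monomial with exponent `m`. -/
noncomputable def co (m : Idx) : Wiener →ₗ[ℂ] ℂ := MvPowerSeries.coeff m ∘ₗ incl.toLinearMap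

lemma ext {a b : Wiener} (h : ∀ m, co m a = co m b) : a = b :=
  Subtype.ext (MvPowerSeries.ext h)

lemma summable (a : Wiener) : Summable fun m => ‖co m a‖ := a.2

/-- The series with prescribed summable coefficients. -/
noncomputable def mk (f : Idx → ℂ) (hf : Summable fun m => ‖f m‖) : Wiener := ⟨f, hf⟩

@[simp] lemma co_mk (f : Idx → ℂ) (hf) (m) : co m (mk f hf) = f m := rfl

lemma co_mul (m : Idx) (a b : Wiener) :
    co m (a * b) = ∑ k ∈ Finset.HasAntidiagonal.antidiagonal m, co k.1 a * co k.2 b := by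
  simp [co, MvPowerSeries.coeff_mul]

/-- The sequence of coefficients, as an element of Mathlib's `ℓ¹` space; the norm of `Wiener` is
transported along this map. -/
noncomputable def toLp : Wiener →ₗ[ℂ] lp (fun _ : Idx => ℂ) 1 where
  toFun a := ⟨fun m => co m a, (memℓp_gen_iff (by simp)).2 (by simpa using a.summable)⟩
  map_add' a b := by ext m; exact map_add (co m) a b
  map_smul' c a := by ext m; simp

@[simp] lemma toLp_apply (a : Wiener) (m : Idx) : toLp a m = co m a := rfl

lemma toLp_injective : Function.Injective toLp := fun a b h =>
  ext fun m => by rw [← toLp_apply, h, toLp_apply]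

lemma toLp_surjective : Function.Surjective toLp := fun f =>
  ⟨mk f (by simpa using (memℓp_gen_iff (by simp)).1 f.2), by ext m; simp⟩

lemma norm_toLp (a : Wiener) : ‖toLp a‖ = ∑' m, ‖co m a‖ := by
  rw [lp.norm_eq_tsum_rpow (by simp)]
  simp

noncomputable instance : NormedCommRing Wiener where
  __ := (inferInstance : CommRing Wiener)
  __ := NormedAddCommGroup.induced _ _ toLp toLp_injective
  norm_mul_le a b := by
    change ‖toLp (a * b)‖ ≤ ‖toLp a‖ * ‖toLp b‖
    rw [norm_toLp, norm_toLp, norm_toLp]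
    exact (summable_conv a.2 b.2).2

lemma norm_def (a : Wiener) : ‖a‖ = ∑' m, ‖co m a‖ := norm_toLp a

noncomputable instance : NormedAlgebra ℂ Wiener where
  norm_smul_le c a := by
    rw [norm_def, norm_def, ← tsum_mul_left]
    simp

/-- `toLp` as an isometric isomorphism, whence the completeness of `Wiener`. -/
noncomputable def toLpᵢ : Wiener ≃ₗᵢ[ℂ] lp (fun _ : Idx => ℂ) 1 where
  toLinearEquiv := LinearEquiv.ofBijective toLp ⟨toLp_injective, toLp_surjective⟩
  norm_map' _ := rfl

instance : CompleteSpace Wiener :=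
  (completeSpace_congr (e := toLpᵢ.toEquiv) toLpᵢ.isometry.isUniformEmbedding).2 inferInstance

/-- The monomial with exponent `m` and coefficient `1`. -/
noncomputable def δ (m : Idx) : Wiener := ⟨MvPowerSeries.monomial m 1, summable_monomial m 1⟩

lemma co_δ (m n : Idx) : co n (δ m) = if n = m then 1 else 0 := by
  classical
  exact (MvPowerSeries.coeff_monomial n m (1 : ℂ)).trans (by congr)

lemma δ_mul (m n : Idx) : δ m * δ n = δ (m + n) :=
  Subtype.ext ((MvPowerSeries.monomial_mul_monomial m n (1 : ℂ) 1).trans (by rw [mul_one]; rfl))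

lemma δ_zero : δ 0 = 1 := Subtype.ext rfl

lemma hasSum_δ (a : Wiener) : HasSum (fun m => co m a • δ m) a := by
  classical
  have h := (lp.hasSum_single (by simp) (toLp a)).mapL (toLpᵢ.symm : _ →L[ℂ] Wiener)
  have e : toLpᵢ.symm (toLp a) = a := toLpᵢ.symm_apply_apply a
  convert! h using 1
  · ext m
    apply toLpᵢ.injective
    apply lp.ext
    ext n
    change co n (co m a • δ m) = (toLpᵢ (toLpᵢ.symm _)) n
    rw [LinearIsometryEquiv.apply_symm_apply, lp.single_apply]
    by_cases hn : n = m <;> simp [co_δ, hn]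
  · exact e.symm

/-- Monomials span a dense subspace, so a bounded linear map is determined by its values on them. -/
lemma clm_ext {E : Type*} [NormedAddCommGroup E] [NormedSpace ℂ E] {f g : Wiener →L[ℂ] E}
    (h : ∀ m, f (δ m) = g (δ m)) : f = g := by
  ext a
  refine ((hasSum_δ a).mapL f).unique ?_
  convert! (hasSum_δ a).mapL g using 2 with m
  simp [h]

lemma norm_co_le (m : Idx) (a : Wiener) : ‖co m a‖ ≤ ‖a‖ := by
  rw [norm_def]
  exact a.summable.le_tsum m fun _ _ => norm_nonneg _

lemma continuous_co (m : Idx) : Continuous (co m) :=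
  ((co m).mkContinuous 1 fun a => by simpa using norm_co_le m a).continuous

/-- The bounded operator sending the series with coefficients `a m` to the one with coefficients
`k m * a (σ m)`, for a bounded multiplier `k` and an injective map `σ` of the exponents. -/
noncomputable def op (k : Idx → ℂ) (C : ℝ) (hk : ∀ m, ‖k m‖ ≤ C) (σ : Idx → Idx)
    (hσ : Function.Injective σ) : Wiener →L[ℂ] Wiener :=
  have hC : 0 ≤ C := (norm_nonneg _).trans (hk 0)
  have hle : ∀ (a : Wiener) (m : Idx), ‖k m * co (σ m) a‖ ≤ C * ‖co (σ m) a‖ := fun a m => by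
    rw [norm_mul]
    exact mul_le_mul_of_nonneg_right (hk m) (norm_nonneg _)
  have hs : ∀ a : Wiener, Summable fun m => C * ‖co (σ m) a‖ := fun a =>
    (a.summable.comp_injective hσ).mul_left C
  have hs' : ∀ a : Wiener, Summable fun m => ‖k m * co (σ m) a‖ := fun a =>
    Summable.of_nonneg_of_le (fun _ => norm_nonneg _) (hle a) (hs a)
  LinearMap.mkContinuous
    { toFun := fun a => mk (fun m => k m * co (σ m) a) (hs' a)
      map_add' := fun a b => ext fun m => by simp [mul_add]
      map_smul' := fun c a => ext fun m => by simp; ring }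
    C fun a => by
      rw [norm_def, norm_def]
      refine ((hs' a).tsum_le_tsum (hle a) (hs a)).trans ?_
      rw [tsum_mul_left]
      refine mul_le_mul_of_nonneg_left ?_ hC
      exact tsum_comp_le_tsum_of_inj a.summable (fun _ => norm_nonneg _) hσ

@[simp] lemma co_op (k : Idx → ℂ) (C hk σ hσ) (a : Wiener) (m : Idx) :
    co m (op k C hk σ hσ a) = k m * co (σ m) a := rfl

lemma norm_op_le (k : Idx → ℂ) (C : ℝ) (hk : ∀ m, ‖k m‖ ≤ C) (σ : Idx → Idx)
    (hσ : Function.Injective σ) : ‖op k C hk σ hσ‖ ≤ C := by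
  unfold op
  exact LinearMap.mkContinuous_norm_le _ ((norm_nonneg _).trans (hk 0)) _

/-! ### Evaluation of series in the unit polydisc -/

/-- The phase space `ℂ³`, with the sup norm. -/
abbrev C3 := ℂ × ℂ × ℂ

/-- The monomial `z ^ m`. -/
def mon (z : C3) (m : Idx) : ℂ := z.1 ^ m 0 * z.2.1 ^ m 1 * z.2.2 ^ m 2

lemma mon_add (z : C3) (m n : Idx) : mon z (m + n) = mon z m * mon z n := by
  simp only [mon, Finsupp.add_apply]; ring

lemma norm_mon_le (z : C3) (m : Idx) : ‖mon z m‖ ≤ ‖z‖ ^ (m 0 + m 1 + m 2) := by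
  have h1 : ‖z.1‖ ≤ ‖z‖ := norm_fst_le z
  have h2 : ‖z.2.1‖ ≤ ‖z‖ := (norm_fst_le z.2).trans (norm_snd_le z)
  have h3 : ‖z.2.2‖ ≤ ‖z‖ := (norm_snd_le z.2).trans (norm_snd_le z)
  simp only [mon, norm_mul, norm_pow, pow_add]
  gcongr

lemma norm_mon_le_one {z : C3} (hz : ‖z‖ ≤ 1) (m : Idx) : ‖mon z m‖ ≤ 1 :=
  (norm_mon_le z m).trans (pow_le_one₀ (norm_nonneg _) hz)

/-- The sum of all coefficients. -/
noncomputable def sumL : Wiener →L[ℂ] ℂ :=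
  LinearMap.mkContinuous
    { toFun := fun a => ∑' m, co m a
      map_add' := fun a b => by
        simp only [map_add]
        exact a.summable.of_norm.tsum_add b.summable.of_norm
      map_smul' := fun c a => by simp [tsum_mul_left] }
    1 fun a => by
      rw [one_mul, norm_def]
      exact norm_tsum_le_tsum_norm a.summable

lemma sumL_δ (m : Idx) : sumL (δ m) = 1 := by
  change ∑' n, co n (δ m) = 1
  simp [co_δ]

/-- Evaluation at a point `z` of the closed polydisc, as the sum of the series. -/
noncomputable def chi (z : C3) (hz : ‖z‖ ≤ 1) : Wiener →L[ℂ] ℂ :=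
  sumL ∘L op (mon z) 1 (norm_mon_le_one hz) id Function.injective_id

lemma op_id_δ (k : Idx → ℂ) (C hk) (m : Idx) :
    op k C hk id Function.injective_id (δ m) = k m • δ m := by
  refine ext fun n => ?_
  by_cases h : n = m <;> simp [co_δ, h]

lemma chi_δ (z : C3) (hz : ‖z‖ ≤ 1) (m : Idx) : chi z hz (δ m) = mon z m := by
  simp [chi, op_id_δ, sumL_δ]

/-- The backward shift in the variable `i`: divides by `yᵢ` the monomials containing `yᵢ` and kills the
others. -/
noncomputable def shift (i : Fin 3) : Wiener →L[ℂ] Wiener :=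
  op (fun _ => 1) 1 (by simp) (· + Finsupp.single i 1) (add_left_injective _)

lemma norm_shift_le (i : Fin 3) : ‖shift i‖ ≤ 1 := norm_op_le _ _ _ _ _

lemma shift_δ_zero (i : Fin 3) (m : Idx) (h : m i = 0) : shift i (δ m) = 0 := by
  refine ext fun n => ?_
  have : n + Finsupp.single i 1 ≠ m := by
    rintro rfl
    simp at h
  simp [shift, co_δ, this]

lemma shift_δ_add (i : Fin 3) (m : Idx) : shift i (δ (m + Finsupp.single i 1)) = δ m := by
  refine ext fun n => ?_
  simp [shift, co_δ]

lemma exists_eq_add_single (i : Fin 3) (m : Idx) (h : m i ≠ 0) :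
    ∃ n : Idx, m = n + Finsupp.single i 1 := by
  refine ⟨m - Finsupp.single i 1, ?_⟩
  ext j
  by_cases hj : j = i
  · subst hj
    simp
    omega
  · simp [Ne.symm hj]

/-- The inverse of `1 - t • shift i` (the junk value `0` if that operator is not invertible). -/
noncomputable def res (i : Fin 3) (t : ℂ) : Wiener →L[ℂ] Wiener := Ring.inverse (1 - t • shift i)

lemma isUnit_one_sub_shift (i : Fin 3) {t : ℂ} (ht : ‖t‖ < 1) : IsUnit (1 - t • shift i) := by
  apply isUnit_one_sub_of_norm_lt_one
  rw [norm_smul]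
  have := mul_le_mul_of_nonneg_left (norm_shift_le i) (norm_nonneg t)
  linarith

/-- Evaluation at `z` is evaluation at `w`, where `w` is `z` with its coordinate `zᵢ = t` replaced by
`0`, preceded by the inverse of `1 - t • shift i`. The three hypotheses on monomials encode this
relation between `z`, `w` and `t`. -/
lemma chi_comp_res (i : Fin 3) {t : ℂ} (ht : ‖t‖ < 1) {z w : C3} (hz : ‖z‖ ≤ 1) (hw : ‖w‖ ≤ 1)
    (h0 : ∀ m : Idx, m i = 0 → mon w m = mon z m)
    (h1 : ∀ m : Idx, mon w (m + Finsupp.single i 1) = 0)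
    (h2 : ∀ m : Idx, mon z (m + Finsupp.single i 1) = t * mon z m) :
    chi z hz = chi w hw ∘L res i t := by
  have key : chi z hz ∘L (1 - t • shift i) = chi w hw := by
    refine clm_ext fun m => ?_
    by_cases hm : m i = 0
    · simp [shift_δ_zero i m hm, chi_δ, h0 m hm]
    · obtain ⟨n, rfl⟩ := exists_eq_add_single i m hm
      simp [shift_δ_add, chi_δ, h1, h2]
  rw [← key, ContinuousLinearMap.comp_assoc]
  have := Ring.mul_inverse_cancel _ (isUnit_one_sub_shift i ht)
  change (1 - t • shift i) ∘L res i t = 1 at this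
  rw [this]
  rfl

lemma norm_zero_le_one : ‖(0 : C3)‖ ≤ 1 := by simp

/-- Evaluation at `z`, written through inverses of `1 - zᵢ • shift i`. In the open polydisc it agrees
with `chi` (`ev_eq_chi`); this form makes the analytic dependence on `z` evident, since inversion is
analytic. -/
noncomputable def ev (z : C3) : Wiener →L[ℂ] ℂ :=
  chi 0 norm_zero_le_one ∘L (res 2 z.2.2 * res 1 z.2.1 * res 0 z.1)

lemma ev_def (z : C3) : ev z =
    ((chi 0 norm_zero_le_one ∘L res 2 z.2.2) ∘L res 1 z.2.1) ∘L res 0 z.1 := by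
  rw [ev, ContinuousLinearMap.mul_def, ContinuousLinearMap.mul_def,
    ContinuousLinearMap.comp_assoc, ContinuousLinearMap.comp_assoc, ContinuousLinearMap.comp_assoc]

lemma norm_coords {z : C3} (hz : ‖z‖ < 1) : ‖z.1‖ < 1 ∧ ‖z.2.1‖ < 1 ∧ ‖z.2.2‖ < 1 :=
  ⟨(norm_fst_le z).trans_lt hz, ((norm_fst_le z.2).trans (norm_snd_le z)).trans_lt hz,
    ((norm_snd_le z.2).trans (norm_snd_le z)).trans_lt hz⟩

lemma ev_eq_chi {z : C3} (hz : ‖z‖ < 1) : ev z = chi z hz.le := by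
  obtain ⟨h1, h2, h3⟩ := norm_coords hz
  have hz1 : ‖((0, z.2.1, z.2.2) : C3)‖ ≤ 1 := by simp [Prod.norm_def, h2.le, h3.le]
  have hz2 : ‖((0, 0, z.2.2) : C3)‖ ≤ 1 := by simp [Prod.norm_def, h3.le]
  have e0 : chi z hz.le = chi _ hz1 ∘L res 0 z.1 := by
    refine chi_comp_res 0 h1 hz.le hz1 (fun m hm => ?_) (fun m => ?_) (fun m => ?_)
    · simp [mon, hm]
    · simp [mon]
    · simp [mon, pow_succ]; ring
  have e1 : chi _ hz1 = chi _ hz2 ∘L res 1 z.2.1 := by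
    refine chi_comp_res 1 h2 hz1 hz2 (fun m hm => ?_) (fun m => ?_) (fun m => ?_)
    · simp [mon, hm]
    · simp [mon]
    · simp [mon, pow_succ]; ring
  have e2 : chi _ hz2 = chi _ norm_zero_le_one ∘L res 2 z.2.2 := by
    refine chi_comp_res 2 h3 hz2 norm_zero_le_one (fun m hm => ?_) (fun m => ?_) (fun m => ?_)
    · simp [mon, hm]
    · simp [mon]
    · simp [mon, pow_succ]; ring
  rw [ev_def, e0, e1, e2]

lemma ev_δ {z : C3} (hz : ‖z‖ < 1) (m : Idx) : ev z (δ m) = mon z m := by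
  rw [ev_eq_chi hz, chi_δ]

lemma analyticAt_res (i : Fin 3) {t : ℂ} (ht : ‖t‖ < 1) : AnalyticAt ℂ (res i) t := by
  obtain ⟨x, hx⟩ := isUnit_one_sub_shift i ht
  have h1 : AnalyticAt ℂ (Ring.inverse : (Wiener →L[ℂ] Wiener) → _) (1 - t • shift i) :=
    hx ▸ analyticAt_inverse x
  have h2 : AnalyticAt ℂ (fun s : ℂ => 1 - s • shift i) t := by fun_prop
  exact AnalyticAt.fun_comp (f := fun s : ℂ => 1 - s • shift i) h1 h2

lemma analyticAt_ev {z : C3} (hz : ‖z‖ < 1) : AnalyticAt ℂ ev z := by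
  obtain ⟨h1, h2, h3⟩ := norm_coords hz
  have a1 : AnalyticAt ℂ (fun z : C3 => res 0 z.1) z :=
    AnalyticAt.fun_comp (analyticAt_res 0 h1) analyticAt_fst
  have a2 : AnalyticAt ℂ (fun z : C3 => res 1 z.2.1) z :=
    AnalyticAt.fun_comp (f := fun z : C3 => z.2.1) (analyticAt_res 1 h2)
      (analyticAt_fst.fun_comp analyticAt_snd)
  have a3 : AnalyticAt ℂ (fun z : C3 => res 2 z.2.2) z :=
    AnalyticAt.fun_comp (f := fun z : C3 => z.2.2) (analyticAt_res 2 h3)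
      (analyticAt_snd.fun_comp analyticAt_snd)
  have a4 := (a3.mul a2).mul a1
  exact ((ContinuousLinearMap.compL ℂ Wiener Wiener ℂ (chi 0 norm_zero_le_one)).analyticAt _).fun_comp a4

lemma analyticAt_ev_apply {z : C3} (hz : ‖z‖ < 1) (a : Wiener) :
    AnalyticAt ℂ (fun z => ev z a) z :=
  ((ContinuousLinearMap.apply ℂ ℂ a).analyticAt _).fun_comp (analyticAt_ev hz)

lemma ev_mul {z : C3} (hz : ‖z‖ < 1) (a b : Wiener) : ev z (a * b) = ev z a * ev z b := by
  have h1 : ∀ m, ev z (δ m * b) = ev z (δ m) * ev z b := by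
    intro m
    have : ev z ∘L ContinuousLinearMap.mul ℂ Wiener (δ m) = ev z (δ m) • ev z := by
      refine clm_ext fun n => ?_
      simp [δ_mul, ev_δ hz, mon_add]
    simpa using congrArg (fun f => f b) this
  have : ev z ∘L (ContinuousLinearMap.mul ℂ Wiener).flip b = (ev z b) • ev z := by
    refine clm_ext fun n => ?_
    simpa [mul_comm (ev z b), mul_comm b] using h1 n
  simpa [mul_comm] using congrArg (fun f => f a) this

/-- Evaluation at a point of the open polydisc, as a homomorphism of algebras. -/
noncomputable def evHom {z : C3} (hz : ‖z‖ < 1) : Wiener →ₐ[ℂ] ℂ :=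
  AlgHom.ofLinearMap (ev z).toLinearMap
    (by rw [← δ_zero]; simpa [mon] using ev_δ hz 0) (ev_mul hz)

@[simp] lemma evHom_apply {z : C3} (hz : ‖z‖ < 1) (a : Wiener) : evHom hz a = ev z a := rfl

lemma hasFDerivAt_ev_apply {z : C3} (hz : ‖z‖ < 1) (a : Wiener) :
    HasFDerivAt (fun z => ev z a) ((fderiv ℂ ev z).flip a) z := by
  have := (analyticAt_ev hz).differentiableAt.hasFDerivAt
  exact ((ContinuousLinearMap.apply ℂ ℂ a).hasFDerivAt).comp z this

/-- The eigenvalue `m₀ + ζ m₁ + ζ² m₂` of the monomial with exponent `m` under the derivation along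
the linear field `lin ζ`. -/
def spec (ζ : ℂ) (m : Idx) : ℂ := m 0 + ζ * m 1 + ζ ^ 2 * m 2

/-- The linear field `diag(1, ζ, ζ²)`. -/
def lin (ζ : ℂ) (z : C3) : C3 := (z.1, ζ * z.2.1, ζ ^ 2 * z.2.2)

lemma pow_pred_mul (k : ℕ) (x : ℂ) : (k : ℂ) * x ^ (k - 1) * x = k * x ^ k := by
  cases k with
  | zero => simp
  | succ k => simp [pow_succ]; ring

lemma fderiv_mon (ζ : ℂ) (z : C3) (m : Idx) :
    fderiv ℂ (fun z => mon z m) z (lin ζ z) = spec ζ m * mon z m := by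
  have h1 : HasFDerivAt (fun z : C3 => z.1) (ContinuousLinearMap.fst ℂ ℂ (ℂ × ℂ)) z := hasFDerivAt_fst
  have h23 : HasFDerivAt (fun z : C3 => z.2) (ContinuousLinearMap.snd ℂ ℂ (ℂ × ℂ)) z := hasFDerivAt_snd
  have h := ((h1.pow (m 0)).mul (h23.fst.pow (m 1))).mul (h23.snd.pow (m 2))
  have h' : HasFDerivAt (fun z => mon z m) _ z := h
  rw [h'.fderiv]
  have e0 := pow_pred_mul (m 0) z.1
  have e1 := pow_pred_mul (m 1) z.2.1
  have e2 := pow_pred_mul (m 2) z.2.2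
  simp [lin, spec, mon]
  linear_combination (z.2.1 ^ m 1 * z.2.2 ^ m 2) * e0 + ζ * (z.1 ^ m 0 * z.2.2 ^ m 2) * e1 +
    ζ ^ 2 * (z.1 ^ m 0 * z.2.1 ^ m 1) * e2

lemma fderiv_ev_δ (ζ : ℂ) {z : C3} (hz : ‖z‖ < 1) (m : Idx) :
    fderiv ℂ ev z (lin ζ z) (δ m) = spec ζ m * mon z m := by
  rw [← fderiv_mon]
  have h : (fun z => ev z (δ m)) =ᶠ[𝓝 z] fun z => mon z m := by
    filter_upwards [(isOpen_lt continuous_norm continuous_const).mem_nhds hz] with w hw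
    exact ev_δ hw m
  rw [← h.fderiv_eq, (hasFDerivAt_ev_apply hz _).fderiv]
  rfl

/-- The series `a` has no monomials of total degree less than `n`. -/
def Ord (n : ℕ) (a : Wiener) : Prop := ∀ m : Idx, m 0 + m 1 + m 2 < n → co m a = 0

lemma Ord.add {n a b} (ha : Ord n a) (hb : Ord n b) : Ord n (a + b) := fun m hm => by
  rw [map_add, ha m hm, hb m hm, add_zero]

lemma Ord.sub {n a b} (ha : Ord n a) (hb : Ord n b) : Ord n (a - b) := fun m hm => by
  rw [map_sub, ha m hm, hb m hm, sub_zero]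

lemma Ord.smul {n a} (c : ℂ) (ha : Ord n a) : Ord n (c • a) := fun m hm => by
  rw [map_smul, ha m hm, smul_zero]

lemma Ord.zero (n : ℕ) : Ord n 0 := fun _ _ => map_zero _

lemma Ord.mono {n k a} (h : k ≤ n) (ha : Ord n a) : Ord k a := fun m hm => ha m (hm.trans_le h)

lemma Ord.mul {n k a b} (ha : Ord n a) (hb : Ord k b) : Ord (n + k) (a * b) := fun m hm => by
  rw [co_mul]
  refine Finset.sum_eq_zero fun x hx => ?_
  rw [Finset.HasAntidiagonal.mem_antidiagonal] at hx
  subst hx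
  simp only [Finsupp.add_apply] at hm
  by_cases h : x.1 0 + x.1 1 + x.1 2 < n
  · rw [ha _ h, zero_mul]
  · rw [hb _ (by omega), mul_zero]

lemma Ord.pow {a} (ha : Ord 1 a) (k : ℕ) : Ord k (a ^ k) := by
  induction k with
  | zero => intro m hm; omega
  | succ k ih => rw [pow_succ]; exact ih.mul ha

lemma Ord.sum {ι : Type*} {n : ℕ} (s : Finset ι) (f : ι → Wiener) (h : ∀ i ∈ s, Ord n (f i)) :
    Ord n (∑ i ∈ s, f i) := fun m hm => by
  rw [map_sum]
  exact Finset.sum_eq_zero fun i hi => h i hi m hm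

lemma isClosed_ord (n : ℕ) : IsClosed {a | Ord n a} := by
  simp only [Ord, Set.ofPred_forall]
  exact isClosed_iInter fun m => isClosed_iInter fun _ =>
    isClosed_eq (continuous_co m) continuous_const

lemma norm_ev_le {z : C3} (hz : ‖z‖ < 1) {n : ℕ} {a : Wiener} (ha : Ord n a) :
    ‖ev z a‖ ≤ ‖a‖ * ‖z‖ ^ n := by
  have h := (hasSum_δ a).mapL (ev z)
  rw [← h.tsum_eq, norm_def, ← tsum_mul_right]
  refine tsum_of_norm_bounded (a.summable.mul_right _).hasSum fun m => ?_
  rw [map_smul, ev_δ hz, norm_smul]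
  by_cases hm : m 0 + m 1 + m 2 < n
  · simp [ha m hm]
  · refine mul_le_mul_of_nonneg_left ((norm_mon_le z m).trans ?_) (norm_nonneg _)
    exact pow_le_pow_of_le_one (norm_nonneg _) hz.le (not_lt.1 hm)

/-! ### Small divisors -/

/-- The exponents resonant in the first equation, `m = (k + 1, k, k)`. -/
def Reso (m : Idx) : Prop := m 1 = m 2 ∧ m 0 = m 1 + 1

/-- A nonzero Eisenstein integer has modulus at least `1`: its norm `a² - ab + b²` is a positive
integer. -/
lemma one_le_norm_eisenstein {ζ : ℂ} (h3 : ζ ^ 3 = 1) (h1 : ζ ≠ 1) {a b : ℤ}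
    (h : ¬ (a = 0 ∧ b = 0)) : 1 ≤ ‖(a : ℂ) + b * ζ‖ := by
  have hq : ζ ^ 2 + ζ + 1 = 0 := by
    have : (ζ - 1) * (ζ ^ 2 + ζ + 1) = 0 := by linear_combination h3
    exact (mul_eq_zero.1 this).resolve_left (sub_ne_zero.2 h1)
  have hn : ‖ζ‖ = 1 := Complex.norm_eq_one_of_pow_eq_one h3 (by norm_num)
  have hc : (starRingEnd ℂ) ζ = ζ ^ 2 := by
    have h0 : ζ ≠ 0 := by rintro rfl; simp at hn
    have : ζ * (starRingEnd ℂ) ζ = 1 := by rw [Complex.mul_conj', hn]; simp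
    exact mul_left_cancel₀ h0 (by rw [this]; linear_combination -h3)
  have hsq : ((‖(a : ℂ) + b * ζ‖ ^ 2 : ℝ) : ℂ) = ((a ^ 2 - a * b + b ^ 2 : ℤ) : ℂ) := by
    push_cast
    rw [← Complex.mul_conj']
    simp only [map_add, map_mul, hc, map_intCast]
    linear_combination (a * b : ℂ) * hq + (b ^ 2 : ℂ) * h3
  have hsq' : ‖(a : ℂ) + b * ζ‖ ^ 2 = ((a ^ 2 - a * b + b ^ 2 : ℤ) : ℝ) := by exact_mod_cast hsq
  have hpos : 1 ≤ a ^ 2 - a * b + b ^ 2 := by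
    by_contra hlt
    have h4 : (2 * a - b) ^ 2 + 3 * b ^ 2 ≤ 0 := by nlinarith
    have hb : b = 0 := by
      have : b ^ 2 ≤ 0 := by nlinarith [sq_nonneg (2 * a - b)]
      exact pow_eq_zero_iff (two_ne_zero) |>.1 (le_antisymm this (sq_nonneg b))
    have ha : a = 0 := by
      subst hb
      have : a ^ 2 ≤ 0 := by nlinarith
      exact pow_eq_zero_iff (two_ne_zero) |>.1 (le_antisymm this (sq_nonneg a))
    exact h ⟨ha, hb⟩
  have : (1 : ℝ) ≤ ‖(a : ℂ) + b * ζ‖ ^ 2 := by rw [hsq']; exact_mod_cast hpos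
  nlinarith [norm_nonneg ((a : ℂ) + b * ζ)]

lemma one_le_norm_spec_sub_one {ζ : ℂ} (h3 : ζ ^ 3 = 1) (h1 : ζ ≠ 1) {m : Idx} (hm : ¬ Reso m) :
    1 ≤ ‖spec ζ m - 1‖ := by
  have hq : ζ ^ 2 + ζ + 1 = 0 := by
    have : (ζ - 1) * (ζ ^ 2 + ζ + 1) = 0 := by linear_combination h3
    exact (mul_eq_zero.1 this).resolve_left (sub_ne_zero.2 h1)
  have := one_le_norm_eisenstein h3 h1 (a := m 0 - 1 - m 2) (b := m 1 - m 2) (by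
    rintro ⟨ha, hb⟩
    exact hm ⟨by omega, by omega⟩)
  convert! this using 2
  simp only [spec]
  push_cast
  linear_combination (m 2 : ℂ) * hq

open Classical in
/-- The inverse of the divisor `spec ζ m - 1`, set to `0` at resonant exponents. -/
noncomputable def invDiv (ζ : ℂ) (m : Idx) : ℂ := if Reso m then 0 else (spec ζ m - 1)⁻¹

/-- `ζ` is a primitive cube root of unity. -/
def IsCubeRoot (ζ : ℂ) : Prop := ζ ^ 3 = 1 ∧ ζ ≠ 1

lemma norm_invDiv_le {ζ : ℂ} (hζ : IsCubeRoot ζ) (m : Idx) : ‖invDiv ζ m‖ ≤ 1 := by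
  unfold invDiv
  split_ifs with h
  · simp
  · rw [norm_inv]
    exact inv_le_one_of_one_le₀ (one_le_norm_spec_sub_one hζ.1 hζ.2 h)

lemma spec_mul_invDiv {ζ : ℂ} (hζ : IsCubeRoot ζ) {m : Idx} (hm : ¬ Reso m) :
    spec ζ m * invDiv ζ m = 1 + invDiv ζ m := by
  have h := one_le_norm_spec_sub_one hζ.1 hζ.2 hm
  have h0 : spec ζ m - 1 ≠ 0 := by
    intro h0
    rw [h0] at h
    norm_num at h
  rw [invDiv, if_neg hm]
  field_simp
  ring

lemma norm_spec_mul_invDiv_le {ζ : ℂ} (hζ : IsCubeRoot ζ) (m : Idx) :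
    ‖spec ζ m * invDiv ζ m‖ ≤ 2 := by
  by_cases hm : Reso m
  · simp [invDiv, hm]
  · rw [spec_mul_invDiv hζ hm]
    refine (norm_add_le _ _).trans ?_
    have := norm_invDiv_le hζ m
    rw [norm_one]
    linarith

/-- The operator `H`, inverting `L - 1` on nonresonant monomials and killing the resonant ones, where
`L` is the derivation along `lin ζ`. -/
noncomputable def opH {ζ : ℂ} (hζ : IsCubeRoot ζ) : Wiener →L[ℂ] Wiener :=
  op (invDiv ζ) 1 (norm_invDiv_le hζ) id Function.injective_id

/-- The operator `M = L H`. It is bounded although `L` is not. -/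
noncomputable def opM {ζ : ℂ} (hζ : IsCubeRoot ζ) : Wiener →L[ℂ] Wiener :=
  op (fun m => spec ζ m * invDiv ζ m) 2 (norm_spec_mul_invDiv_le hζ) id Function.injective_id

/-- The exponent of the first coordinate function. -/
noncomputable abbrev e0 : Idx := Finsupp.single 0 1

open Classical in
/-- The operator `S` extracting the resonant part: `S u` is the series in `y₁y₂y₃` such that `y₁ · S u`
consists of the resonant monomials of `u`. -/
noncomputable def opS : Wiener →L[ℂ] Wiener :=
  op (fun m => if m 0 = m 1 ∧ m 1 = m 2 then 1 else 0) 1 (fun m => by split_ifs <;> simp)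
    (· + e0) (add_left_injective _)

lemma opS_δ_of_not {m : Idx} (hm : ¬ Reso m) : opS (δ m) = 0 := by
  refine ext fun n => ?_
  simp only [opS, co_op, co_δ, map_zero, mul_ite, mul_one, mul_zero]
  split_ifs with h1 h2
  · exfalso
    subst h1
    refine hm ⟨?_, ?_⟩ <;> simp [h2.2, h2.1]
  all_goals rfl

lemma opS_δ_add {n : Idx} (hn : n 0 = n 1 ∧ n 1 = n 2) : opS (δ (n + e0)) = δ n := by
  refine ext fun k => ?_
  simp only [opS, co_op, co_δ, add_left_inj]
  by_cases h : k = n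
  · subst h
    simp [hn]
  · simp [h]

lemma Reso.exists_eq {m : Idx} (hm : Reso m) :
    ∃ n : Idx, m = n + e0 ∧ n 0 = n 1 ∧ n 1 = n 2 := by
  obtain ⟨n, rfl⟩ := exists_eq_add_single 0 m (by have := hm.2; omega)
  refine ⟨n, rfl, ?_⟩
  have h1 := hm.1
  have h2 := hm.2
  simp at h1 h2
  exact ⟨h2, h1⟩

/-- The nonresonant part of `u` is `(L - 1) H u = M u - H u`, the resonant part is `y₁ · S u`. -/
lemma decomp {ζ : ℂ} (hζ : IsCubeRoot ζ) (u : Wiener) :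
    u = opM hζ u - opH hζ u + δ e0 * opS u := by
  have : ContinuousLinearMap.id ℂ Wiener =
      opM hζ - opH hζ + ContinuousLinearMap.mul ℂ Wiener (δ e0) ∘L opS := by
    refine clm_ext fun m => ?_
    by_cases hm : Reso m
    · have h0 : invDiv ζ m = 0 := by simp [invDiv, hm]
      obtain ⟨n, rfl, hn⟩ := hm.exists_eq
      simp [opM, opH, op_id_δ, h0, opS_δ_add hn, δ_mul, add_comm]
    · simp [opM, opH, op_id_δ, opS_δ_of_not hm, spec_mul_invDiv hζ hm, add_smul]
  exact congrArg (fun f => f u) this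

/-- Differentiation of `H u` along the linear field gives `M u`. -/
lemma fderiv_ev_opH {ζ : ℂ} (hζ : IsCubeRoot ζ) {z : C3} (hz : ‖z‖ < 1) (u : Wiener) :
    fderiv ℂ ev z (lin ζ z) (opH hζ u) = ev z (opM hζ u) := by
  have : (fderiv ℂ ev z (lin ζ z)) ∘L opH hζ = ev z ∘L opM hζ := by
    refine clm_ext fun m => ?_
    simp [opM, opH, op_id_δ, ev_δ hz, fderiv_ev_δ ζ hz]
    ring
  exact congrArg (fun f => f u) this

/-! ### Cyclic symmetry -/

/-- The cyclic permutation `(z₁, z₂, z₃) ↦ (z₂, z₃, z₁)` of the coordinates. -/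
def rot (z : C3) : C3 := (z.2.1, z.2.2, z.1)

lemma norm_rot (z : C3) : ‖rot z‖ = ‖z‖ := by
  simp only [rot, Prod.norm_def]
  rw [← max_assoc, max_comm]

/-- The permutation of exponents induced by composing monomials with `rot`. -/
noncomputable def rotIdx : Idx ≃ Idx := Finsupp.equivCongrLeft (Equiv.addRight (1 : Fin 3))

lemma rotIdx_zero (m : Idx) : rotIdx m 0 = m 2 := rfl
lemma rotIdx_one (m : Idx) : rotIdx m 1 = m 0 := rfl
lemma rotIdx_two (m : Idx) : rotIdx m 2 = m 1 := rfl

/-- Composition of a series with `rot`. -/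
noncomputable def opR : Wiener →L[ℂ] Wiener :=
  op (fun _ => 1) 1 (by simp) rotIdx.symm rotIdx.symm.injective

lemma opR_δ (m : Idx) : opR (δ m) = δ (rotIdx m) := by
  refine ext fun n => ?_
  simp [opR, co_δ, Equiv.symm_apply_eq]

lemma ev_opR {z : C3} (hz : ‖z‖ < 1) (a : Wiener) : ev z (opR a) = ev (rot z) a := by
  have : ev z ∘L opR = ev (rot z) := by
    refine clm_ext fun m => ?_
    have hz' : ‖rot z‖ < 1 := by rwa [norm_rot]
    rw [ContinuousLinearMap.comp_apply, opR_δ, ev_δ hz, ev_δ hz']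
    simp only [mon, rot, rotIdx_zero, rotIdx_one, rotIdx_two]
    ring
  exact congrArg (fun f => f a) this

/-- Series in `y₁y₂y₃` are invariant under the cyclic permutation. -/
lemma ev_rot_opS {z : C3} (hz : ‖z‖ < 1) (a : Wiener) : ev (rot z) (opS a) = ev z (opS a) := by
  have : ev (rot z) ∘L opS = ev z ∘L opS := by
    refine clm_ext fun m => ?_
    have hz' : ‖rot z‖ < 1 := by rwa [norm_rot]
    by_cases hm : Reso m
    · obtain ⟨n, rfl, hn⟩ := hm.exists_eq
      rw [ContinuousLinearMap.comp_apply, ContinuousLinearMap.comp_apply, opS_δ_add hn, ev_δ hz,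
        ev_δ hz']
      simp only [mon, rot, hn.1, hn.2]
      ring
    · simp [opS_δ_of_not hm]
  exact congrArg (fun f => f a) this

lemma Ord.opH {ζ : ℂ} (hζ : IsCubeRoot ζ) {n : ℕ} {a : Wiener} (ha : Ord n a) :
    Ord n (opH hζ a) := fun m hm => by
  simp [Wiener.opH, ha m hm]

lemma Ord.opM {ζ : ℂ} (hζ : IsCubeRoot ζ) {n : ℕ} {a : Wiener} (ha : Ord n a) :
    Ord n (opM hζ a) := fun m hm => by
  simp [Wiener.opM, ha m hm]

lemma Ord.opR {n : ℕ} {a : Wiener} (ha : Ord n a) : Ord n (opR a) := fun m hm => by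
  obtain ⟨k, rfl⟩ := rotIdx.surjective m
  rw [rotIdx_zero, rotIdx_one, rotIdx_two] at hm
  simp [Wiener.opR, ha k (by omega)]

lemma ord_δ {n : ℕ} {m : Idx} (h : n ≤ m 0 + m 1 + m 2) : Ord n (δ m) := fun k hk => by
  rw [co_δ, if_neg]
  rintro rfl
  omega

end Wiener

/-! ### The fixed point equation -/

/-- For small `ρ ≠ 0` the map `u ↦ ρ G(ρ, u) - S u * M u` is a contraction of a small closed ball: the
first term is small with `ρ`, the second one is quadratic. The fixed point lies in any closed
invariant set `V` containing `0`. -/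
lemma exists_fixed {B : Type*} [NormedCommRing B] [NormedAlgebra ℂ B] [CompleteSpace B]
    (G : ℂ × B → B) (hG : ContDiff ℂ 1 G) (S M : B →L[ℂ] B) (V : Set B) (hV : IsClosed V)
    (h0 : 0 ∈ V) (hinv : ∀ ρ u, u ∈ V → ρ • G (ρ, u) - S u * M u ∈ V) :
    ∃ ρ : ℂ, ρ ≠ 0 ∧ ∃ u ∈ V, ρ • G (ρ, u) - S u * M u = u := by
  obtain ⟨K, t, ht, hK⟩ := (hG.contDiffAt (x := 0)).exists_lipschitzOnWith
  obtain ⟨ε, hε, hεt⟩ := Metric.mem_nhds_iff.1 ht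
  -- The ball has radius `r`, on which the quadratic term has Lipschitz constant at most `1 / 4`.
  set c : ℝ := ‖S‖ * ‖M‖ with hc
  have hc0 : 0 ≤ c := by positivity
  obtain ⟨r, hr, hrε, hrc⟩ : ∃ r : ℝ, 0 < r ∧ r < ε ∧ 2 * c * r ≤ 1 / 4 := by
    refine ⟨min (ε / 2) (1 / (8 * (c + 1))), by positivity, ?_, ?_⟩
    · exact (min_le_left _ _).trans_lt (by linarith)
    · calc 2 * c * min (ε / 2) (1 / (8 * (c + 1))) ≤ 2 * c * (1 / (8 * (c + 1))) := by
            gcongr; exact min_le_right _ _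
        _ ≤ 1 / 4 := by
            rw [mul_one_div, div_le_div_iff₀ (by positivity) (by positivity)]
            linarith
  -- The parameter `ρ = s` is taken so small that `ρ G` has Lipschitz constant at most `1 / 4` and
  -- the image of `0` has norm at most `r / 2`; here `g0` bounds `G` on the points `(s, 0)`.
  set g0 : ℝ := ‖G 0‖ + K * ε with hg0
  have hg00 : 0 ≤ g0 := by positivity
  obtain ⟨s, hs, hsε, hsK, hsg⟩ : ∃ s : ℝ, 0 < s ∧ s < ε ∧ s * K ≤ 1 / 4 ∧ s * g0 ≤ r / 2 := by
    have hf : Filter.Tendsto (fun s : ℝ => s * K) (𝓝[>] 0) (𝓝 0) :=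
      tendsto_nhdsWithin_of_tendsto_nhds
        ((by fun_prop : Continuous fun s : ℝ => s * K).tendsto' 0 0 (by simp))
    have hg : Filter.Tendsto (fun s : ℝ => s * g0) (𝓝[>] 0) (𝓝 0) :=
      tendsto_nhdsWithin_of_tendsto_nhds
        ((by fun_prop : Continuous fun s : ℝ => s * g0).tendsto' 0 0 (by simp))
    have hpos : ∀ᶠ s : ℝ in 𝓝[>] 0, 0 < s := self_mem_nhdsWithin
    have hlt : ∀ᶠ s : ℝ in 𝓝[>] 0, s < ε := nhdsWithin_le_nhds (Iio_mem_nhds hε)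
    obtain ⟨s, h1, h2, h3, h4⟩ := (hpos.and
      ((hf.eventually_le_const (show (0 : ℝ) < 1 / 4 by norm_num)).and
        ((hg.eventually_le_const (show (0 : ℝ) < r / 2 by positivity)).and hlt))).exists
    exact ⟨s, h1, h4, h2, h3⟩
  have hsn : ‖(s : ℂ)‖ = s := by simp [abs_of_pos hs]
  set Ψ : B → B := fun u => (s : ℂ) • G ((s : ℂ), u) - S u * M u with hΨ
  have hmem : ∀ u : B, ‖u‖ ≤ r → ((s : ℂ), u) ∈ t := fun u hu => by
    apply hεt
    rw [mem_ball_zero_iff, Prod.norm_def, hsn]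
    exact max_lt hsε (hu.trans_lt hrε)
  have hlip : ∀ u v : B, ‖u‖ ≤ r → ‖v‖ ≤ r → ‖Ψ u - Ψ v‖ ≤ 1 / 2 * ‖u - v‖ := by
    intro u v hu hv
    have e : Ψ u - Ψ v = (s : ℂ) • (G ((s : ℂ), u) - G ((s : ℂ), v)) -
        (S (u - v) * M u + S v * M (u - v)) := by
      simp only [hΨ, map_sub, smul_sub]; ring
    have b1 : ‖G ((s : ℂ), u) - G ((s : ℂ), v)‖ ≤ K * ‖u - v‖ := by
      have := hK.norm_sub_le (hmem u hu) (hmem v hv)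
      simpa [Prod.norm_def] using this
    have b2 : ‖S (u - v) * M u‖ ≤ c * r * ‖u - v‖ := by
      calc ‖S (u - v) * M u‖ ≤ ‖S (u - v)‖ * ‖M u‖ := norm_mul_le _ _
        _ ≤ (‖S‖ * ‖u - v‖) * (‖M‖ * r) := by
          gcongr
          · exact S.le_opNorm _
          · exact (M.le_opNorm _).trans (by gcongr)
        _ = c * r * ‖u - v‖ := by rw [hc]; ring
    have b3 : ‖S v * M (u - v)‖ ≤ c * r * ‖u - v‖ := by
      calc ‖S v * M (u - v)‖ ≤ ‖S v‖ * ‖M (u - v)‖ := norm_mul_le _ _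
        _ ≤ (‖S‖ * r) * (‖M‖ * ‖u - v‖) := by
          gcongr
          · exact (S.le_opNorm _).trans (by gcongr)
          · exact M.le_opNorm _
        _ = c * r * ‖u - v‖ := by rw [hc]; ring
    have b4 : ‖(s : ℂ) • (G ((s : ℂ), u) - G ((s : ℂ), v))‖ ≤ s * (K * ‖u - v‖) := by
      rw [norm_smul, hsn]
      gcongr
    rw [e]
    have := norm_sub_le ((s : ℂ) • (G ((s : ℂ), u) - G ((s : ℂ), v)))
      (S (u - v) * M u + S v * M (u - v))
    have := norm_add_le (S (u - v) * M u) (S v * M (u - v))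
    nlinarith [norm_nonneg (u - v)]
  have hΨ0 : ‖Ψ 0‖ ≤ r / 2 := by
    have e : Ψ 0 = (s : ℂ) • G ((s : ℂ), 0) := by simp [hΨ]
    rw [e, norm_smul, hsn]
    refine le_trans ?_ hsg
    gcongr
    have h1 := hK.norm_sub_le (hmem 0 (by simpa using hr.le)) (hεt (Metric.mem_ball_self hε))
    have h2 : ‖(((s : ℂ), (0 : B)) - 0 : ℂ × B)‖ ≤ ε := by
      rw [sub_zero, Prod.norm_def, hsn, norm_zero]
      exact max_le hsε.le hε.le
    have h3 := norm_le_norm_add_norm_sub' (G ((s : ℂ), 0)) (G 0)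
    have h4 : (K : ℝ) * ‖(((s : ℂ), (0 : B)) - 0 : ℂ × B)‖ ≤ K * ε := by gcongr
    rw [hg0]
    linarith
  have hself : Set.MapsTo Ψ (V ∩ Metric.closedBall 0 r) (V ∩ Metric.closedBall 0 r) := by
    rintro u ⟨huV, hur⟩
    rw [mem_closedBall_zero_iff] at hur
    refine ⟨hinv _ _ huV, ?_⟩
    rw [mem_closedBall_zero_iff]
    have h1 := hlip u 0 hur (by simpa using hr.le)
    have h2 := norm_le_norm_add_norm_sub' (Ψ u) (Ψ 0)
    rw [sub_zero] at h1
    linarith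
  have hcontr : ContractingWith (1 / 2) (hself.restrict Ψ _ _) := by
    refine ⟨by norm_num [← NNReal.coe_lt_coe], LipschitzWith.of_dist_le_mul ?_⟩
    rintro ⟨u, hu⟩ ⟨v, hv⟩
    rw [Subtype.dist_eq, Subtype.dist_eq, dist_eq_norm, dist_eq_norm]
    simpa using hlip u v (mem_closedBall_zero_iff.1 hu.2) (mem_closedBall_zero_iff.1 hv.2)
  obtain ⟨u, hu, hfix, -⟩ := hcontr.exists_fixedPoint' (hV.inter Metric.isClosed_closedBall).isComplete
    hself (x := 0) ⟨h0, by simpa using hr.le⟩ (edist_ne_top _ _)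
  exact ⟨s, by exact_mod_cast hs.ne', u, hu.1, hfix⟩

/-! ### The normal form -/

namespace Wiener

/-- The series `ξ = y₁ + H u`. -/
noncomputable def ser {ζ : ℂ} (hζ : IsCubeRoot ζ) (u : Wiener) : Wiener := δ e0 + opH hζ u

/-- The nonlinearity `G(ρ, u) = ρ⁻² p(ρ ξ, ρ a ξ ∘ rot, ρ b ξ ∘ rot²)`. Since `p` has no terms of degree
less than `2`, the negative power of `ρ` cancels and the exponents below are not truncated. -/
noncomputable def nonlin {ζ : ℂ} (hζ : IsCubeRoot ζ) (p : MvPolynomial (Fin 3) ℂ) (a b : ℂ)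
    (x : ℂ × Wiener) : Wiener :=
  ∑ m ∈ p.support, (p.coeff m * a ^ m 1 * b ^ m 2 * x.1 ^ (m 0 + m 1 + m 2 - 2)) •
    (ser hζ x.2 ^ m 0 * opR (ser hζ x.2) ^ m 1 * opR (opR (ser hζ x.2)) ^ m 2)

lemma contDiff_nonlin {ζ : ℂ} (hζ : IsCubeRoot ζ) (p : MvPolynomial (Fin 3) ℂ) (a b : ℂ) :
    ContDiff ℂ 1 (nonlin hζ p a b) := by
  unfold nonlin ser
  fun_prop

lemma ord_ser {ζ : ℂ} (hζ : IsCubeRoot ζ) {u : Wiener} (hu : Ord 2 u) : Ord 1 (ser hζ u) :=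
  (ord_δ (by simp)).add ((hu.mono one_le_two).opH hζ)

lemma ord_nonlin {ζ : ℂ} (hζ : IsCubeRoot ζ) {p : MvPolynomial (Fin 3) ℂ}
    (hp : ∀ m ∈ p.support, 2 ≤ m 0 + m 1 + m 2) (a b ρ : ℂ) {u : Wiener} (hu : Ord 2 u) :
    Ord 2 (nonlin hζ p a b (ρ, u)) := by
  refine Ord.sum _ _ fun m hm => Ord.smul _ (Ord.mono (hp m hm) ?_)
  have h := ord_ser hζ hu
  exact ((h.pow _).mul (h.opR.pow _)).mul (h.opR.opR.pow _)

lemma ev_nonlin {ζ : ℂ} (hζ : IsCubeRoot ζ) {p : MvPolynomial (Fin 3) ℂ}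
    (hp : ∀ m ∈ p.support, 2 ≤ m 0 + m 1 + m 2) (a b ρ : ℂ) (u : Wiener) {z : C3} (hz : ‖z‖ < 1) :
    ρ ^ 2 * ev z (nonlin hζ p a b (ρ, u)) =
      MvPolynomial.eval ![ρ * ev z (ser hζ u), ρ * a * ev (rot z) (ser hζ u),
        ρ * b * ev (rot (rot z)) (ser hζ u)] p := by
  have hz' : ‖rot z‖ < 1 := by rwa [norm_rot]
  rw [← ev_opR hz', ← ev_opR hz, ← ev_opR hz, MvPolynomial.eval_eq']
  simp only [← evHom_apply hz, nonlin, map_sum, map_smul, map_mul, map_pow, Finset.mul_sum]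
  refine Finset.sum_congr rfl fun m hm => ?_
  have h2 : ρ ^ (m 0 + m 1 + m 2) = ρ ^ 2 * ρ ^ (m 0 + m 1 + m 2 - 2) := by
    rw [← pow_add, Nat.add_sub_cancel' (hp m hm)]
  simp only [Fin.prod_univ_three, Matrix.cons_val_zero, Matrix.cons_val_one, Matrix.cons_val,
    mul_pow, smul_eq_mul]
  rw [pow_add, pow_add] at h2
  linear_combination (-(p.coeff m) * a ^ m 1 * b ^ m 2 * (evHom hz) (ser hζ u) ^ m 0 *
    (evHom hz) (opR (ser hζ u)) ^ m 1 * (evHom hz) (opR (opR (ser hζ u))) ^ m 2) * h2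

lemma hasFDerivAt_ev_zero {a : Wiener} (ha : Ord 2 a) :
    HasFDerivAt (fun z => ev z a) (0 : C3 →L[ℂ] ℂ) 0 := by
  have h : (fun z : C3 => ev z a) =O[𝓝 0] fun z => ‖z - 0‖ ^ 2 := by
    refine Asymptotics.IsBigO.of_bound ‖a‖ ?_
    filter_upwards [Metric.ball_mem_nhds (0 : C3) one_pos] with z hz
    simpa using norm_ev_le (mem_ball_zero_iff.1 hz) ha
  exact h.hasFDerivAt one_lt_two

/-- The first component of the conjugacy to the normal form: there are an analytic `ξ` tangent to the
first coordinate and a cyclically invariant `g` such that differentiating `ρ ξ` along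
`(1 + g) • lin ζ` gives the first component of the field at `(ρ ξ, ρ a ξ ∘ rot, ρ b ξ ∘ rot²)`. -/
theorem exists_normal_form {ζ : ℂ} (hζ : IsCubeRoot ζ) {p : MvPolynomial (Fin 3) ℂ}
    (hp : ∀ m ∈ p.support, 2 ≤ m 0 + m 1 + m 2) (a b : ℂ) :
    ∃ ρ : ℂ, ρ ≠ 0 ∧ ∃ ξ g : C3 → ℂ, (∀ z, ‖z‖ < 1 → AnalyticAt ℂ ξ z) ∧ ξ 0 = 0 ∧
      HasFDerivAt ξ (ContinuousLinearMap.fst ℂ ℂ (ℂ × ℂ)) 0 ∧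
      (∀ z, ‖z‖ < 1 → g (rot z) = g z) ∧
      ∀ z, ‖z‖ < 1 → (1 + g z) * (ρ * fderiv ℂ ξ z (lin ζ z)) =
        ρ * ξ z + MvPolynomial.eval ![ρ * ξ z, ρ * a * ξ (rot z), ρ * b * ξ (rot (rot z))] p := by
  obtain ⟨ρ, hρ, u, hu, hfix⟩ := exists_fixed (nonlin hζ p a b) (contDiff_nonlin hζ p a b)
    opS (opM hζ) {u | Ord 2 u} (isClosed_ord 2) (Ord.zero 2) fun ρ u hu => by
      refine ((ord_nonlin hζ hp a b ρ hu).smul ρ).sub ?_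
      have h0 : Ord 0 (opS u) := fun m hm => by omega
      simpa using h0.mul (Ord.opM hζ hu)
  have hcoord : ∀ z : C3, ‖z‖ < 1 → ev z (δ e0) = z.1 := fun z hz => by
    simp [ev_δ hz, mon]
  refine ⟨ρ, hρ, fun z => ev z (ser hζ u), fun z => ev z (opS u),
    fun z hz => analyticAt_ev_apply hz _, ?_, ?_, fun z hz => ev_rot_opS hz u, fun z hz => ?_⟩
  · have h1 := norm_ev_le (z := 0) (by simp) (ord_ser hζ hu)
    simpa using h1
  · have h1 : HasFDerivAt (fun z : C3 => z.1 + ev z (opH hζ u))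
        (ContinuousLinearMap.fst ℂ ℂ (ℂ × ℂ) + 0) 0 :=
      hasFDerivAt_fst.add (hasFDerivAt_ev_zero (Ord.opH hζ hu))
    rw [add_zero] at h1
    refine h1.congr_of_eventuallyEq ?_
    filter_upwards [Metric.ball_mem_nhds (0 : C3) one_pos] with z hz
    rw [ser, map_add, hcoord z (mem_ball_zero_iff.1 hz)]
  -- Combined with `decomp`, the fixed point equation reads `(1 + S u) (y₁ + M u) = ξ + ρ G`.
  · have hd : fderiv ℂ (fun z => ev z (ser hζ u)) z (lin ζ z) = z.1 + ev z (opM hζ u) := by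
      rw [(hasFDerivAt_ev_apply hz _).fderiv, ContinuousLinearMap.flip_apply, ser, map_add,
        fderiv_ev_opH hζ hz, fderiv_ev_δ ζ hz]
      simp [spec, mon]
    have e1 := congrArg (ev z) hfix
    have e2 := congrArg (ev z) (decomp hζ u)
    simp only [map_sub, map_add, map_smul, ev_mul hz, smul_eq_mul, hcoord z hz] at e1 e2
    have e3 : ev z (ser hζ u) = z.1 + ev z (opH hζ u) := by rw [ser, map_add, hcoord z hz]
    rw [hd, ← ev_nonlin hζ hp a b ρ u hz]
    beta_reduce
    rw [e3]
    linear_combination -ρ * e1 - ρ * e2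

end Wiener

/-! ### Order of vanishing -/

/-- The function `f` is analytic at `0` and all its derivatives of order less than `n` vanish there. -/
def VanishTo {E : Type*} [NormedAddCommGroup E] [NormedSpace ℂ E] (n : ℕ) (f : E → ℂ) : Prop :=
  AnalyticAt ℂ f 0 ∧ ∀ k < n, iteratedFDeriv ℂ k f 0 = 0

namespace VanishTo

variable {E : Type*} [NormedAddCommGroup E] [NormedSpace ℂ E]

lemma mono {m n : ℕ} {f : E → ℂ} (hf : VanishTo n f) (h : m ≤ n) : VanishTo m f :=
  ⟨hf.1, fun k hk => hf.2 k (hk.trans_le h)⟩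

lemma add {n : ℕ} {f g : E → ℂ} (hf : VanishTo n f) (hg : VanishTo n g) :
    VanishTo n (fun x => f x + g x) := by
  refine ⟨hf.1.fun_add hg.1, fun k hk => ?_⟩
  have h := iteratedFDeriv_add_apply (i := k) hf.1.contDiffAt hg.1.contDiffAt
  rw [hf.2 k hk, hg.2 k hk, add_zero] at h
  exact h

lemma mul {m n : ℕ} {f g : E → ℂ} (hf : VanishTo m f) (hg : VanishTo n g) :
    VanishTo (m + n) (fun x => f x * g x) := by
  refine ⟨hf.1.fun_mul hg.1, fun k hk => ?_⟩
  obtain ⟨s, hs, hso, h0⟩ := eventually_nhds_iff.1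
    (hf.1.eventually_analyticAt.and hg.1.eventually_analyticAt)
  have hcf : ContDiffOn ℂ k f s := fun x hx => (hs x hx).1.contDiffAt.contDiffWithinAt
  have hcg : ContDiffOn ℂ k g s := fun x hx => (hs x hx).2.contDiffAt.contDiffWithinAt
  have h := norm_iteratedFDerivWithin_mul_le hcf hcg hso.uniqueDiffOn h0 le_rfl
  rw [← norm_le_zero_iff, ← iteratedFDerivWithin_of_isOpen k hso h0]
  refine h.trans (Finset.sum_nonpos fun i hi => ?_)
  rw [iteratedFDerivWithin_of_isOpen _ hso h0, iteratedFDerivWithin_of_isOpen _ hso h0]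
  by_cases him : i < m
  · simp [hf.2 i him]
  · have hin : k - i < n := by
      rw [Finset.mem_range] at hi
      omega
    simp [hg.2 _ hin]

lemma one {f : E → ℂ} (hf : AnalyticAt ℂ f 0) (h0 : f 0 = 0) : VanishTo 1 f := by
  refine ⟨hf, fun k hk => ?_⟩
  obtain rfl : k = 0 := by omega
  rw [← norm_eq_zero, norm_iteratedFDeriv_zero, h0, norm_zero]

lemma two {f : E → ℂ} (hf : AnalyticAt ℂ f 0) (h0 : f 0 = 0) (h1 : HasFDerivAt f (0 : E →L[ℂ] ℂ) 0) :
    VanishTo 2 f := by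
  refine ⟨hf, fun k hk => ?_⟩
  obtain rfl | rfl : k = 0 ∨ k = 1 := by omega
  · exact (one hf h0).2 0 one_pos
  · rw [← norm_eq_zero, norm_iteratedFDeriv_one, h1.fderiv, norm_zero]

/-- Perturbing the factors of a product of three functions of order `1` by terms of order `2` changes
the product by terms of order `4`. -/
lemma mul_mul_sub {f g h f' g' h' : E → ℂ} (hf : VanishTo 1 f) (hg : VanishTo 1 g)
    (hh : VanishTo 1 h) (hf' : VanishTo 2 f') (hg' : VanishTo 2 g') (hh' : VanishTo 2 h') :
    VanishTo 4 (fun x => (f x + f' x) * (g x + g' x) * (h x + h' x) - f x * g x * h x) := by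
  have hgg := hg.add (hg'.mono one_le_two)
  have hhh := hh.add (hh'.mono one_le_two)
  have := (((hf'.mul hgg).mul hhh).add ((hf.mul hg').mul hhh)).add ((hf.mul hg).mul hh')
  convert! this using 2
  ring

end VanishTo

/-! ### The first integral -/

namespace Wiener

/-- The diagonal linear automorphism of `ℂ³` with nonzero entries `d₁, d₂, d₃`. -/
noncomputable def diag (d₁ d₂ d₃ : ℂˣ) : C3 ≃L[ℂ] C3 :=
  (ContinuousLinearEquiv.unitsEquivAut ℂ d₁).prodCongr
    ((ContinuousLinearEquiv.unitsEquivAut ℂ d₂).prodCongr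
      (ContinuousLinearEquiv.unitsEquivAut ℂ d₃))

lemma diag_apply (d₁ d₂ d₃ : ℂˣ) (z : C3) :
    diag d₁ d₂ d₃ z = (z.1 * d₁, z.2.1 * d₂, z.2.2 * d₃) := by
  simp [diag]

lemma diag_symm_apply (d₁ d₂ d₃ : ℂˣ) (z : C3) :
    (diag d₁ d₂ d₃).symm z = (z.1 * (d₁⁻¹ : ℂˣ), z.2.1 * (d₂⁻¹ : ℂˣ), z.2.2 * (d₃⁻¹ : ℂˣ)) := by
  rw [ContinuousLinearEquiv.symm_apply_eq, diag_apply]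
  simp

/-- If the analytic map `X`, with derivative `diag d₁ d₂ d₃` at the fixed point `0`, carries the field
`h • lin ζ` to `F`, then `F` has an analytic first integral `x₁x₂x₃ + O(4)`: the function
`d₁d₂d₃ z₁z₂z₃`, which is a first integral of `h • lin ζ`, composed with the inverse of `X`. -/
lemma exists_integral {ζ : ℂ} (hζ : IsCubeRoot ζ) (F X : C3 → C3) (h : C3 → ℂ) (d₁ d₂ d₃ : ℂˣ)
    (hX : ∀ z, ‖z‖ < 1 → AnalyticAt ℂ X z) (hX0 : X 0 = 0)
    (hX1 : HasFDerivAt X (diag d₁ d₂ d₃ : C3 →L[ℂ] C3) 0)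
    (hconj : ∀ z, ‖z‖ < 1 → h z • fderiv ℂ X z (lin ζ z) = F (X z)) :
    ∃ (Φ : C3 → ℂ) (U : Set C3), U ∈ 𝓝 (0 : C3) ∧ (∀ x ∈ U, AnalyticAt ℂ Φ x) ∧
      VanishTo 4 (fun x => Φ x - x.1 * x.2.1 * x.2.2) ∧ ∀ x ∈ U, fderiv ℂ Φ x (F x) = 0 := by
  have hq : ζ ^ 2 + ζ + 1 = 0 := by
    have : (ζ - 1) * (ζ ^ 2 + ζ + 1) = 0 := by linear_combination hζ.1
    exact (mul_eq_zero.1 this).resolve_left (sub_ne_zero.2 hζ.2)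
  have hX1s : HasStrictFDerivAt X (diag d₁ d₂ d₃ : C3 →L[ℂ] C3) 0 := by
    have := (hX 0 (by simp)).hasStrictFDerivAt
    rwa [hX1.fderiv] at this
  set f := hX1s.toOpenPartialHomeomorph X with hf
  have hfX : ⇑f = X := hX1s.toOpenPartialHomeomorph_coe
  have h0s : (0 : C3) ∈ f.source := hX1s.mem_toOpenPartialHomeomorph_source
  have h0t : (0 : C3) ∈ f.target := by
    have := f.map_source h0s
    rwa [hfX, hX0] at this
  set Y : C3 → C3 := ⇑f.symm with hY
  have hY0 : Y 0 = 0 := by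
    have := f.left_inv h0s
    rwa [hfX, hX0] at this
  have hYan : AnalyticAt ℂ Y 0 := by
    have := f.analyticAt_symm' h0s (by rw [hfX]; exact hX 0 (by simp))
      (i := diag d₁ d₂ d₃) (by rw [hfX]; exact hX1.fderiv)
    rwa [hfX, hX0] at this
  have hY1 : HasFDerivAt Y ((diag d₁ d₂ d₃).symm : C3 →L[ℂ] C3) 0 := by
    refine f.hasFDerivAt_symm h0t ?_
    rw [hfX, ← hY, hY0]
    exact hX1
  set v : C3 → ℂ := fun z => (d₁ * z.1) * (d₂ * z.2.1) * (d₃ * z.2.2) with hv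
  have hvan : ∀ z, AnalyticAt ℂ v z := fun z => by
    have a1 : AnalyticAt ℂ (fun z : C3 => z.1) z := analyticAt_fst
    have a2 : AnalyticAt ℂ (fun z : C3 => z.2.1) z := analyticAt_fst.fun_comp analyticAt_snd
    have a3 : AnalyticAt ℂ (fun z : C3 => z.2.2) z := analyticAt_snd.fun_comp analyticAt_snd
    exact ((analyticAt_const.fun_mul a1).fun_mul (analyticAt_const.fun_mul a2)).fun_mul
      (analyticAt_const.fun_mul a3)
  have hvlin : ∀ z, fderiv ℂ v z (lin ζ z) = 0 := fun z => by
    have h1 : HasFDerivAt (fun z : C3 => z.1) (ContinuousLinearMap.fst ℂ ℂ (ℂ × ℂ)) z :=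
      hasFDerivAt_fst
    have h23 : HasFDerivAt (fun z : C3 => z.2) (ContinuousLinearMap.snd ℂ ℂ (ℂ × ℂ)) z :=
      hasFDerivAt_snd
    have hd : HasFDerivAt v _ z :=
      ((h1.const_mul (d₁ : ℂ)).mul (h23.fst.const_mul (d₂ : ℂ))).mul (h23.snd.const_mul (d₃ : ℂ))
    rw [hd.fderiv]
    simp [lin]
    linear_combination ((d₁ : ℂ) * d₂ * d₃ * z.1 * z.2.1 * z.2.2) * hq
  have hball : ∀ᶠ x in 𝓝 (0 : C3), ‖Y x‖ < 1 := by
    have : Filter.Tendsto (fun x => ‖Y x‖) (𝓝 0) (𝓝 0) := by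
      simpa [hY0] using hYan.continuousAt.norm.tendsto
    exact this.eventually_lt_const one_pos
  have hnear : ∀ᶠ x in 𝓝 (0 : C3), AnalyticAt ℂ Y x ∧ ‖Y x‖ < 1 ∧ x ∈ f.target :=
    hYan.eventually_analyticAt.and (hball.and (f.open_target.mem_nhds h0t))
  refine ⟨fun x => v (Y x), _, hnear, fun x hx => (hvan _).fun_comp hx.1, ?_, fun x hx => ?_⟩
  · have aY1 : AnalyticAt ℂ (fun x => (Y x).1) 0 := analyticAt_fst.fun_comp hYan
    have aY2 : AnalyticAt ℂ (fun x => (Y x).2.1) 0 :=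
      (analyticAt_fst.fun_comp analyticAt_snd).fun_comp hYan
    have aY3 : AnalyticAt ℂ (fun x => (Y x).2.2) 0 :=
      (analyticAt_snd.fun_comp analyticAt_snd).fun_comp hYan
    have a1 : AnalyticAt ℂ (fun z : C3 => z.1) 0 := analyticAt_fst
    have a2 : AnalyticAt ℂ (fun z : C3 => z.2.1) 0 := analyticAt_fst.fun_comp analyticAt_snd
    have a3 : AnalyticAt ℂ (fun z : C3 => z.2.2) 0 := analyticAt_snd.fun_comp analyticAt_snd
    have k1 : VanishTo 2 (fun x => d₁ * (Y x).1 - x.1) := by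
      refine VanishTo.two ((analyticAt_const.fun_mul aY1).fun_sub a1) (by simp [hY0]) ?_
      refine ((hY1.fst.const_mul (d₁ : ℂ)).fun_sub hasFDerivAt_fst).congr_fderiv ?_
      refine ContinuousLinearMap.ext fun w => ?_
      have := congrArg (fun w : C3 => w.1) (diag_symm_apply d₁ d₂ d₃ w)
      simp [this, mul_left_comm (d₁ : ℂ)]
    have k2 : VanishTo 2 (fun x => d₂ * (Y x).2.1 - x.2.1) := by
      refine VanishTo.two ((analyticAt_const.fun_mul aY2).fun_sub a2) (by simp [hY0]) ?_
      refine ((hY1.snd.fst.const_mul (d₂ : ℂ)).fun_sub hasFDerivAt_snd.fst).congr_fderiv ?_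
      refine ContinuousLinearMap.ext fun w => ?_
      have := congrArg (fun w : C3 => w.2.1) (diag_symm_apply d₁ d₂ d₃ w)
      simp [this, mul_left_comm (d₂ : ℂ)]
    have k3 : VanishTo 2 (fun x => d₃ * (Y x).2.2 - x.2.2) := by
      refine VanishTo.two ((analyticAt_const.fun_mul aY3).fun_sub a3) (by simp [hY0]) ?_
      refine ((hY1.snd.snd.const_mul (d₃ : ℂ)).fun_sub hasFDerivAt_snd.snd).congr_fderiv ?_
      refine ContinuousLinearMap.ext fun w => ?_
      have := congrArg (fun w : C3 => w.2.2) (diag_symm_apply d₁ d₂ d₃ w)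
      simp [this, mul_left_comm (d₃ : ℂ)]
    have := VanishTo.mul_mul_sub (VanishTo.one a1 rfl) (VanishTo.one a2 rfl) (VanishTo.one a3 rfl)
      k1 k2 k3
    simpa [hv] using this
  · obtain ⟨hxan, hxb, hxt⟩ := hx
    have hXY : X (Y x) = x := by
      have := f.right_inv hxt
      rwa [hfX] at this
    have hYX : fderiv ℂ Y x (fderiv ℂ X (Y x) (lin ζ (Y x))) = lin ζ (Y x) := by
      have hev : (fun w => Y (X w)) =ᶠ[𝓝 (Y x)] fun w => w := by
        filter_upwards [f.open_source.mem_nhds (f.map_target hxt)] with w hw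
        have := f.left_inv hw
        rwa [hfX] at this
      have hcomp : HasFDerivAt (fun w => Y (X w))
          ((fderiv ℂ Y x).comp (fderiv ℂ X (Y x))) (Y x) := by
        refine HasFDerivAt.comp (g := Y) (Y x) ?_ (hX _ hxb).differentiableAt.hasFDerivAt
        rw [hXY]
        exact hxan.differentiableAt.hasFDerivAt
      have := (hcomp.congr_of_eventuallyEq hev.symm).unique (hasFDerivAt_id (Y x))
      exact congrArg (fun T : C3 →L[ℂ] C3 => T (lin ζ (Y x))) this
    have hΦ : HasFDerivAt (fun x => v (Y x)) ((fderiv ℂ v (Y x)).comp (fderiv ℂ Y x)) x :=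
      (hvan (Y x)).differentiableAt.hasFDerivAt.comp x hxan.differentiableAt.hasFDerivAt
    have hFx : F x = h (Y x) • fderiv ℂ X (Y x) (lin ζ (Y x)) := by
      rw [hconj _ hxb, hXY]
    rw [hΦ.fderiv, ContinuousLinearMap.comp_apply, hFx, map_smul, hYX, map_smul, hvlin, smul_zero]

/-- `rot` as a continuous linear map. -/
noncomputable def rotL : C3 →L[ℂ] C3 :=
  ((ContinuousLinearMap.fst ℂ ℂ ℂ).comp (ContinuousLinearMap.snd ℂ ℂ (ℂ × ℂ))).prod
    (((ContinuousLinearMap.snd ℂ ℂ ℂ).comp (ContinuousLinearMap.snd ℂ ℂ (ℂ × ℂ))).prod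
      (ContinuousLinearMap.fst ℂ ℂ (ℂ × ℂ)))

lemma rotL_apply (z : C3) : rotL z = rot z := rfl

lemma hasFDerivAt_rot (z : C3) : HasFDerivAt rot rotL z := rotL.hasFDerivAt

lemma analyticAt_rot (z : C3) : AnalyticAt ℂ rot z := rotL.analyticAt z

lemma rot_lin {ζ : ℂ} (h3 : ζ ^ 3 = 1) (z : C3) : rot (lin ζ z) = ζ • lin ζ (rot z) := by
  simp only [rot, lin, Prod.smul_mk, smul_eq_mul, Prod.mk.injEq, true_and]
  refine ⟨by ring, ?_⟩
  linear_combination -z.1 * h3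

end Wiener

open Wiener

/-- If the polynomial system F(x) = (x₁ + p(x), ζ(x₂ + q(x)),
ζ²(x₃ + r(x))) (with p, q, r polynomials whose monomials all have degree ≥ 2) is
ζ-reversible, then it admits a local analytic first integral
Φ = x₁x₂x₃ + h.o.t. near the origin. -/
theorem stmt_15 (ζ : ℂ) (h3 : ζ ^ 3 = 1) (h1 : ζ ≠ 1)
    (p q r : MvPolynomial (Fin 3) ℂ)
    (hp : ∀ d ∈ p.support, 2 ≤ d 0 + d 1 + d 2)
    (hq : ∀ d ∈ q.support, 2 ≤ d 0 + d 1 + d 2)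
    (hr : ∀ d ∈ r.support, 2 ≤ d 0 + d 1 + d 2)
    (F : ℂ × ℂ × ℂ → ℂ × ℂ × ℂ)
    (hF : ∀ x : ℂ × ℂ × ℂ, F x =
      (x.1 + MvPolynomial.eval ![x.1, x.2.1, x.2.2] p,
       ζ * (x.2.1 + MvPolynomial.eval ![x.1, x.2.1, x.2.2] q),
       ζ ^ 2 * (x.2.2 + MvPolynomial.eval ![x.1, x.2.1, x.2.2] r)))
    (hrev : ∃ α β γ : ℂ, α * β * γ = 1 ∧ ∀ x : ℂ × ℂ × ℂ,
      (α * (F x).2.1, β * (F x).2.2, γ * (F x).1) =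
        ζ • F (α * x.2.1, β * x.2.2, γ * x.1)) :
    ∃ (Φ : ℂ × ℂ × ℂ → ℂ) (U : Set (ℂ × ℂ × ℂ)), U ∈ nhds (0 : ℂ × ℂ × ℂ) ∧
      (∀ x ∈ U, AnalyticAt ℂ Φ x) ∧
      (∀ k : ℕ, k ≤ 3 →
        iteratedFDeriv ℂ k (fun x : ℂ × ℂ × ℂ => Φ x - x.1 * x.2.1 * x.2.2) 0 = 0) ∧
      (∀ x ∈ U,
        (F x).1 * fderiv ℂ Φ x (1, 0, 0) + (F x).2.1 * fderiv ℂ Φ x (0, 1, 0) +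
          (F x).2.2 * fderiv ℂ Φ x (0, 0, 1) = 0) := by
  obtain ⟨α, β, γ, habc, hrev⟩ := hrev
  have hζ : IsCubeRoot ζ := ⟨h3, h1⟩
  have hα : α ≠ 0 := by rintro rfl; simp at habc
  have hβ : β ≠ 0 := by rintro rfl; simp at habc
  have hγ : γ ≠ 0 := by rintro rfl; simp at habc
  obtain ⟨ρ, hρ, ξ, g, hξ, hξ0, hξ1, hg, hnf⟩ := exists_normal_form hζ hp α⁻¹ γ
  set X : C3 → C3 := fun z => (ρ * ξ z, ρ * α⁻¹ * ξ (rot z), ρ * γ * ξ (rot (rot z))) with hX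
  have hrot : ∀ {z : C3}, ‖z‖ < 1 → ‖rot z‖ < 1 := fun {z} hz => by rwa [norm_rot]
  -- The reversing symmetry acts on the parametrization `X` as the cyclic permutation.
  have hAX : ∀ z : C3, (α * (X z).2.1, β * (X z).2.2, γ * (X z).1) = X (rot z) := fun z => by
    have hr3 : rot (rot (rot z)) = z := rfl
    simp only [hX, hr3, Prod.mk.injEq]
    refine ⟨by field_simp, ?_, by ring⟩
    field_simp
    linear_combination ξ (rot (rot z)) * habc
  have hA1 : ∀ z : C3, α * (F (X z)).2.1 = ζ * (F (X (rot z))).1 := fun z => by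
    have := hrev (X z)
    rw [hAX] at this
    exact congrArg (fun w : C3 => w.1) this
  have hA2 : ∀ z : C3, β * (F (X z)).2.2 = ζ * (F (X (rot z))).2.1 := fun z => by
    have := hrev (X z)
    rw [hAX] at this
    exact congrArg (fun w : C3 => w.2.1) this
  have hF1 : ∀ z : C3, ‖z‖ < 1 →
      (F (X z)).1 = (1 + g z) * (ρ * fderiv ℂ ξ z (lin ζ z)) := fun z hz => by
    rw [hnf z hz, hF]
  have hF2 : ∀ z : C3, ‖z‖ < 1 → (F (X z)).2.1 =
      (1 + g z) * (ρ * α⁻¹ * ζ * fderiv ℂ ξ (rot z) (lin ζ (rot z))) := fun z hz => by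
    have := hA1 z
    rw [hF1 _ (hrot hz), hg z hz] at this
    field_simp
    linear_combination this
  have hF3 : ∀ z : C3, ‖z‖ < 1 → (F (X z)).2.2 = (1 + g z) *
      (ρ * γ * ζ ^ 2 * fderiv ℂ ξ (rot (rot z)) (lin ζ (rot (rot z)))) := fun z hz => by
    have := hA2 z
    rw [hF2 _ (hrot hz), hg z hz] at this
    have hγ' : γ = α⁻¹ * β⁻¹ := by
      field_simp
      linear_combination habc
    rw [hγ']
    field_simp
    field_simp at this
    linear_combination this
  have hdX : ∀ z : C3, ‖z‖ < 1 → HasFDerivAt X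
      (((ρ • fderiv ℂ ξ z).prod (((ρ * α⁻¹) • (fderiv ℂ ξ (rot z)).comp rotL).prod
        ((ρ * γ) • (fderiv ℂ ξ (rot (rot z))).comp (rotL.comp rotL))))) z := fun z hz => by
    have d0 := (hξ z hz).differentiableAt.hasFDerivAt
    have d1 := (hξ _ (hrot hz)).differentiableAt.hasFDerivAt.comp z (hasFDerivAt_rot z)
    have d2 := (hξ _ (hrot (hrot hz))).differentiableAt.hasFDerivAt.comp z
      ((hasFDerivAt_rot (rot z)).comp z (hasFDerivAt_rot z))
    exact (d0.const_mul ρ).prodMk ((d1.const_mul (ρ * α⁻¹)).prodMk (d2.const_mul (ρ * γ)))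
  obtain ⟨Φ, U, hU, hΦ, hvan, hint⟩ := exists_integral hζ F X (fun z => 1 + g z)
    (Units.mk0 ρ hρ) (Units.mk0 (ρ * α⁻¹) (mul_ne_zero hρ (inv_ne_zero hα)))
    (Units.mk0 (ρ * γ) (mul_ne_zero hρ hγ))
    (fun z hz => by
      have a1 := (hξ _ (hrot hz)).fun_comp (analyticAt_rot z)
      have a2 := (hξ _ (hrot (hrot hz))).fun_comp (f := fun w => rot (rot w)) (x := z)
        ((analyticAt_rot (rot z)).fun_comp (analyticAt_rot z))
      exact (analyticAt_const.fun_mul (hξ z hz)).prod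
        ((analyticAt_const.fun_mul a1).prod (analyticAt_const.fun_mul a2)))
    (by
      have hr0 : rot 0 = 0 := rfl
      simp [hX, hr0, hξ0])
    (by
      refine (hdX 0 (by simp)).congr_fderiv ?_
      have hr0 : rot 0 = 0 := rfl
      refine ContinuousLinearMap.ext fun w => ?_
      rw [hr0, hr0, hξ1.fderiv]
      simp [diag_apply, rotL_apply, rot, mul_comm])
    (fun z hz => by
      have e2 : rot (rot (lin ζ z)) = ζ ^ 2 • lin ζ (rot (rot z)) := by
        rw [rot_lin h3, ← rotL_apply, map_smul, rotL_apply, rot_lin h3, smul_smul, sq]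
      rw [(hdX z hz).fderiv]
      refine Prod.ext ?_ (Prod.ext ?_ ?_)
      · rw [hF1 z hz]
        simp
      · rw [hF2 z hz]
        simp [rotL_apply, rot_lin h3]
        exact Or.inl (by ring)
      · rw [hF3 z hz]
        simp [rotL_apply, e2]
        exact Or.inl (by ring))
  refine ⟨Φ, U, hU, hΦ, fun k hk => hvan.2 k (by omega), fun x hx => ?_⟩
  have hsplit : F x = (F x).1 • ((1, 0, 0) : C3) + (F x).2.1 • ((0, 1, 0) : C3) +
      (F x).2.2 • ((0, 0, 1) : C3) := by simp
  have := hint x hx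
  rw [hsplit] at this
  simpa only [map_add, map_smul, smul_eq_mul] using this
end

section
/- Let ζ ∈ ℂ satisfy ζ³ = 1 and ζ ≠ 1, and let a₁₀₀, a₀₁₀, b₁₀₀, b₀₁₀, c₀₁₀ ∈ ℂ. Consider the vector field F : ℂ³ → ℂ³ given by F(x₁, x₂, x₃) = (x₁·(1 + a₁₀₀x₁ + a₀₁₀x₂), ζ·x₂·(1 + b₁₀₀x₁ + b₀₁₀x₂), ζ²·x₃·(1 + c₀₁₀x₂)). Then this system is analytically linearizable: there exist a neighborhood U of the origin in ℂ³ and a map H : ℂ³ → ℂ³ analytic on U with H(0) = 0 and derivative at 0 equal to the identity, such that for all y ∈ U, F(H(y)) = DH(y)·(y₁, ζ·y₂, ζ²·y₃), where DH(y) denotes the (Fréchet) derivative of H at y. -/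
/-!
Look for the linearization in the form `H(y) = (y₁ e^{u₁(y)}, y₂ e^{u₂(y)}, y₃ e^{u₃(y)})`. With
`L = y₁∂₁ + ζy₂∂₂ + ζ²y₃∂₃`, the conjugacy equation becomes
`L u₁ = a₁₀₀x₁ + a₀₁₀x₂`, `L u₂ = ζ(b₁₀₀x₁ + b₀₁₀x₂)`, `L u₃ = ζ²c₀₁₀x₂`, where `x_j = y_j e^{u_j}`.
Only `x₁` and `x₂` occur on the right, and their eigenvalues `1, ζ` lie in the Poincaré domain:
multiplying the field by `μ = -ζ` gives `κ₁ = -ζ` and `κ₂ = -ζ²`, both of real part `1/2`.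

Along the trajectory `Y(s) = (e^{-κ₁s}y₁, e^{-κ₂s}y₂, e^{-κ₃s}y₃)`, where `κ₃ = -ζ³`, the functions
`U_i(s) = u_i(Y(s))` should therefore satisfy
`U_i(s) = ∫_s^∞ (p_i y₁ e^{-κ₁τ} e^{U₁(τ)} + q_i y₂ e^{-κ₂τ} e^{U₂(τ)}) dτ`.
This is an equation in the Banach algebra of bounded continuous functions, analytic in `(y, U)`,
with solution `U = 0` at `y = 0` and partial derivative in `U` equal to the identity there. The
analytic implicit function theorem gives a locally unique solution `U = ψ(y)` depending analytically
on `y`, and `u_i(y) = ψ(y)_i(0)` is analytic. Translation in time maps a solution at `y` to a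
solution at `Y(r)` (`integralEq_shift`), so by uniqueness `u_i(Y(r)) = ψ(y)_i(r)` for small `r ≥ 0`.
Differentiating this at `r = 0⁺` yields the equations for `L u_i` (`exists_exponents`).
-/
open Set Filter Topology MeasureTheory BoundedContinuousFunction
open scoped ContDiff

lemma weighted_integrableOn {κ : ℂ} (hκ : 0 < κ.re) (g : ℝ →ᵇ ℂ) (s : ℝ) :
    IntegrableOn (fun τ : ℝ => Complex.exp (-κ * τ) * g τ) (Ioi s) := by
  have h : IntegrableOn (fun τ : ℝ => Real.exp (-κ.re * τ) * ‖g‖) (Ioi s) :=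
    (integrableOn_exp_mul_Ioi (by linarith) s).mul_const _
  refine Integrable.mono' h ?_ ?_
  · exact (by fun_prop : Continuous fun τ : ℝ => Complex.exp (-κ * τ) * g τ).aestronglyMeasurable
  · refine Eventually.of_forall fun τ => ?_
    rw [norm_mul, Complex.norm_exp]
    have : (-κ * (τ : ℂ)).re = -κ.re * τ := by simp
    rw [this]
    gcongr
    exact g.norm_coe_le_norm τ

/-- Existence of the operator `g ↦ ∫_s^∞ e^{-κτ} g(τ) dτ`, bounded by `1 / Re κ`. The functions are
taken on all of `ℝ`; only `s ≥ 0` matters, and the value at negative `s` is that at `0`. -/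
lemma exists_tail_operator {κ : ℂ} (hκ : 0 < κ.re) :
    ∃ K : (ℝ →ᵇ ℂ) →L[ℂ] (ℝ →ᵇ ℂ), ∀ g s,
      K g s = ∫ τ in Ioi (max s 0), Complex.exp (-κ * τ) * g τ := by
  have hbd : ∀ (g : ℝ →ᵇ ℂ) (s : ℝ),
      ‖∫ τ in Ioi (max s 0), Complex.exp (-κ * τ) * g τ‖ ≤ (1 / κ.re) * ‖g‖ := by
    intro g s
    have h : IntegrableOn (fun τ : ℝ => Real.exp (-κ.re * τ) * ‖g‖) (Ioi (max s 0)) :=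
      (integrableOn_exp_mul_Ioi (by linarith) _).mul_const _
    refine (norm_integral_le_of_norm_le h (Eventually.of_forall fun τ => ?_)).trans ?_
    · rw [norm_mul, Complex.norm_exp]
      have : (-κ * (τ : ℂ)).re = -κ.re * τ := by simp
      rw [this]
      gcongr
      exact g.norm_coe_le_norm τ
    · rw [integral_mul_const, integral_exp_mul_Ioi (by linarith)]
      rw [neg_div_neg_eq]
      gcongr
      rw [Real.exp_le_one_iff]
      nlinarith [le_max_right s 0]
  have hcont : ∀ g : ℝ →ᵇ ℂ, Continuous
      fun s : ℝ => ∫ τ in Ioi (max s 0), Complex.exp (-κ * τ) * g τ := by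
    intro g
    have hc : Continuous fun τ : ℝ => Complex.exp (-κ * τ) * g τ := by fun_prop
    have : (fun s : ℝ => ∫ τ in Ioi (max s 0), Complex.exp (-κ * τ) * g τ) =
        fun s : ℝ => (∫ τ in Ioi (0 : ℝ), Complex.exp (-κ * τ) * g τ) -
          ∫ τ in (0 : ℝ)..(max s 0), Complex.exp (-κ * τ) * g τ := by
      funext s
      rw [intervalIntegral.integral_Ioi_sub_Ioi' (weighted_integrableOn hκ g _)
        (weighted_integrableOn hκ g _) |>.symm]
      ring
    rw [this]
    have h2 : Continuous fun s : ℝ => ∫ τ in (0 : ℝ)..s, Complex.exp (-κ * τ) * g τ :=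
      intervalIntegral.continuous_primitive (fun a b => hc.intervalIntegrable a b) 0
    exact continuous_const.sub (h2.comp (continuous_id.max continuous_const))
  let L : (ℝ →ᵇ ℂ) →ₗ[ℂ] (ℝ →ᵇ ℂ) :=
    { toFun := fun g => BoundedContinuousFunction.ofNormedAddCommGroup _ (hcont g) _ (hbd g)
      map_add' := by
        intro f g
        ext s
        simp only [BoundedContinuousFunction.coe_ofNormedAddCommGroup,
          BoundedContinuousFunction.add_apply, mul_add]
        exact integral_add (weighted_integrableOn hκ f _) (weighted_integrableOn hκ g _)
      map_smul' := by
        intro c g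
        ext s
        simp only [BoundedContinuousFunction.coe_ofNormedAddCommGroup,
          BoundedContinuousFunction.coe_smul, smul_eq_mul, RingHom.id_apply]
        rw [← integral_const_mul]
        congr 1
        funext τ
        ring }
  refine ⟨L.mkContinuous (1 / κ.re) fun g => ?_, fun g s => rfl⟩
  exact BoundedContinuousFunction.norm_ofNormedAddCommGroup_le _ (by positivity) (hbd g)

/-- The bounded operator `(K g)(s) = ∫_{max s 0}^∞ e^{-κτ} g(τ) dτ` on bounded continuous functions,
for `Re κ > 0`. -/
noncomputable def tailOp (κ : ℂ) (hκ : 0 < κ.re) : (ℝ →ᵇ ℂ) →L[ℂ] (ℝ →ᵇ ℂ) :=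
  (exists_tail_operator hκ).choose

lemma tailOp_apply {κ : ℂ} (hκ : 0 < κ.re) (g : ℝ →ᵇ ℂ) (s : ℝ) :
    tailOp κ hκ g s = ∫ τ in Ioi (max s 0), Complex.exp (-κ * τ) * g τ :=
  (exists_tail_operator hκ).choose_spec g s

lemma tailOp_hasDerivWithinAt {κ : ℂ} (hκ : 0 < κ.re) (g : ℝ →ᵇ ℂ) :
    HasDerivWithinAt (fun s => tailOp κ hκ g s) (-g 0) (Ici 0) 0 := by
  have hc : Continuous fun τ : ℝ => Complex.exp (-κ * τ) * g τ := by fun_prop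
  have h : HasDerivAt (fun s : ℝ => (∫ τ in Ioi (0 : ℝ), Complex.exp (-κ * τ) * g τ) -
          ∫ τ in (0 : ℝ)..s, Complex.exp (-κ * τ) * g τ) (-g 0) 0 := by
    have := (hc.integral_hasStrictDerivAt 0 0).hasDerivAt.const_sub
      (∫ τ in Ioi (0 : ℝ), Complex.exp (-κ * τ) * g τ)
    simpa using this
  refine h.hasDerivWithinAt.congr_of_mem (fun s hs => ?_) (by simp)
  rw [tailOp_apply, max_eq_left (mem_Ici.1 hs),
    (intervalIntegral.integral_Ioi_sub_Ioi' (weighted_integrableOn hκ g 0)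
        (weighted_integrableOn hκ g s)).symm]
  ring

/-- Translation of the half-line `[0, ∞)` by `r`: the function `s ↦ g (max s 0 + r)`. -/
noncomputable def shift (r : ℝ) (g : ℝ →ᵇ ℂ) : ℝ →ᵇ ℂ :=
  g.compContinuous ⟨fun s => max s 0 + r, by fun_prop⟩

lemma shift_apply (r : ℝ) (g : ℝ →ᵇ ℂ) (s : ℝ) : shift r g s = g (max s 0 + r) := rfl

lemma norm_shift_le (r : ℝ) (g : ℝ →ᵇ ℂ) : ‖shift r g‖ ≤ ‖g‖ :=
  (BoundedContinuousFunction.norm_le (norm_nonneg g)).2 fun _ => g.norm_coe_le_norm _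

/-- The exponential of the Banach algebra of bounded continuous functions is computed pointwise. -/
lemma exp_bcf_apply (g : ℝ →ᵇ ℂ) (s : ℝ) : NormedSpace.exp g s = Complex.exp (g s) := by
  let ev : (ℝ →ᵇ ℂ) →+* ℂ :=
    { toFun := fun f => f s, map_one' := rfl, map_mul' := fun _ _ => rfl,
      map_zero' := rfl, map_add' := fun _ _ => rfl }
  have hev : Continuous ev :=
    (BoundedContinuousFunction.lipschitz_eval_const s).continuous
  have := NormedSpace.map_exp_of_mem_ball (𝕂 := ℂ) ev hev g
    ((NormedSpace.expSeries_radius_eq_top ℂ (ℝ →ᵇ ℂ)).symm ▸ edist_lt_top _ _)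
  rw [Complex.exp_eq_exp_ℂ]
  exact this

lemma exp_shift (r : ℝ) (g : ℝ →ᵇ ℂ) :
    NormedSpace.exp (shift r g) = shift r (NormedSpace.exp g) := by
  ext s
  simp only [exp_bcf_apply, shift_apply]

lemma shift_tailOp {κ : ℂ} (hκ : 0 < κ.re) {r : ℝ} (hr : 0 ≤ r) (g : ℝ →ᵇ ℂ) :
    shift r (tailOp κ hκ g) = Complex.exp (-κ * r) • tailOp κ hκ (shift r g) := by
  ext s
  rw [BoundedContinuousFunction.smul_apply, smul_eq_mul, shift_apply, tailOp_apply, tailOp_apply,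
    max_eq_left (by positivity : (0 : ℝ) ≤ max s 0 + r), ← integral_const_mul,
    ← (measurePreserving_add_right volume r).setIntegral_preimage_emb
      (measurableEmbedding_addRight r), preimage_add_const_Ioi, add_sub_cancel_right]
  refine setIntegral_congr_fun measurableSet_Ioi fun τ hτ => ?_
  have hτ0 : 0 ≤ τ := (le_max_right s 0).trans (le_of_lt hτ)
  simp only [shift_apply, max_eq_left hτ0]
  rw [← mul_assoc, ← Complex.exp_add]
  push_cast
  ring_nf

/-- The defect `U_i - (p_i y₁ K₁(e^{U₁}) + q_i y₂ K₂(e^{U₂}))`, as a function of `v = (y, U)`; its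
zeros are the solutions of the integral equation for the exponents along the trajectory of `y`.
The components of `U` are indexed from `0`. -/
noncomputable def integralEq (K₁ K₂ : (ℝ →ᵇ ℂ) →L[ℂ] (ℝ →ᵇ ℂ)) (p q : Fin 3 → ℂ)
    (v : (ℂ × ℂ × ℂ) × (Fin 3 → (ℝ →ᵇ ℂ))) : Fin 3 → (ℝ →ᵇ ℂ) := fun i =>
  v.2 i - ((p i * v.1.1) • K₁ (NormedSpace.exp (v.2 0)) +
    (q i * v.1.2.1) • K₂ (NormedSpace.exp (v.2 1)))

lemma contDiff_integralEq (K₁ K₂ : (ℝ →ᵇ ℂ) →L[ℂ] (ℝ →ᵇ ℂ)) (p q : Fin 3 → ℂ) :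
    ContDiff ℂ ω (integralEq K₁ K₂ p q) := by
  have hexp : ContDiff ℂ ω (NormedSpace.exp : (ℝ →ᵇ ℂ) → (ℝ →ᵇ ℂ)) :=
    contDiff_iff_contDiffAt.2 fun x => (NormedSpace.exp_analytic (𝕂 := ℂ) x).contDiffAt
  have hc : ∀ i : Fin 3, ContDiff ℂ ω
      fun v : (ℂ × ℂ × ℂ) × (Fin 3 → (ℝ →ᵇ ℂ)) => v.2 i := fun i =>
    (contDiff_apply ℂ (ℝ →ᵇ ℂ) i).comp contDiff_snd
  refine contDiff_pi.2 fun i => ?_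
  have hp : ContDiff ℂ ω
      fun v : (ℂ × ℂ × ℂ) × (Fin 3 → (ℝ →ᵇ ℂ)) => p i * v.1.1 := by fun_prop
  have hq : ContDiff ℂ ω
      fun v : (ℂ × ℂ × ℂ) × (Fin 3 → (ℝ →ᵇ ℂ)) => q i * v.1.2.1 := by fun_prop
  exact (hc i).sub ((hp.smul (K₁.contDiff.comp (hexp.comp (hc 0)))).add
    (hq.smul (K₂.contDiff.comp (hexp.comp (hc 1)))))

/-- At `y = 0` the defect is `U` itself, so its partial derivative in `U` is the identity. -/
lemma fderiv_integralEq_comp_inr (K₁ K₂ : (ℝ →ᵇ ℂ) →L[ℂ] (ℝ →ᵇ ℂ)) (p q : Fin 3 → ℂ) :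
    fderiv ℂ (integralEq K₁ K₂ p q) 0 ∘L .inr ℂ (ℂ × ℂ × ℂ) (Fin 3 → (ℝ →ᵇ ℂ)) =
      ContinuousLinearMap.id ℂ _ := by
  have h := ((contDiff_integralEq K₁ K₂ p q).contDiffAt (x := 0)).differentiableAt (by simp)
  have hinr := (ContinuousLinearMap.inr ℂ (ℂ × ℂ × ℂ) (Fin 3 → (ℝ →ᵇ ℂ))).hasFDerivAt (x := 0)
  have h1 := HasFDerivAt.comp (g := integralEq K₁ K₂ p q) (0 : Fin 3 → (ℝ →ᵇ ℂ))
    h.hasFDerivAt hinr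
  have h2 : integralEq K₁ K₂ p q ∘ Prod.mk 0 = id := by
    funext U i
    simp [integralEq]
  rw [h2] at h1
  exact h1.unique (hasFDerivAt_id _)

/-- The time translate by `r` of a solution at `y` is a solution at the point reached from `y` at
time `r`. -/
lemma integralEq_shift {κ₁ κ₂ : ℂ} (h₁ : 0 < κ₁.re) (h₂ : 0 < κ₂.re) (κ₃ : ℂ) (p q : Fin 3 → ℂ)
    {r : ℝ} (hr : 0 ≤ r) {y : ℂ × ℂ × ℂ} {U : Fin 3 → (ℝ →ᵇ ℂ)}
    (h : integralEq (tailOp κ₁ h₁) (tailOp κ₂ h₂) p q (y, U) = 0) :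
    integralEq (tailOp κ₁ h₁) (tailOp κ₂ h₂) p q
      ((Complex.exp (-κ₁ * r) * y.1, Complex.exp (-κ₂ * r) * y.2.1,
        Complex.exp (-κ₃ * r) * y.2.2), fun i => shift r (U i)) = 0 := by
  funext i
  have hi := congrFun h i
  simp only [integralEq, Pi.zero_apply, sub_eq_zero] at hi ⊢
  have e₁ := shift_tailOp h₁ hr (NormedSpace.exp (U 0))
  have e₂ := shift_tailOp h₂ hr (NormedSpace.exp (U 1))
  rw [exp_shift, exp_shift]
  ext s
  have e₁ := DFunLike.congr_fun e₁ s
  have e₂ := DFunLike.congr_fun e₂ s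
  have hi := DFunLike.congr_fun hi (max s 0 + r)
  simp only [BoundedContinuousFunction.smul_apply, BoundedContinuousFunction.add_apply, smul_eq_mul,
    shift_apply] at e₁ e₂ hi ⊢
  rw [hi, e₁, e₂]
  ring

/-- Local analytic solvability of
`(κ₁y₁∂₁ + κ₂y₂∂₂ + κ₃y₃∂₃) u_i = p_i y₁ e^{u₁} + q_i y₂ e^{u₂}`, `u_i(0) = 0`. No condition on `κ₃`
is needed, since `y₃` does not occur on the right-hand side. -/
lemma exists_exponents {κ₁ κ₂ : ℂ} (h₁ : 0 < κ₁.re) (h₂ : 0 < κ₂.re) (κ₃ : ℂ)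
    (p q : Fin 3 → ℂ) :
    ∃ u : Fin 3 → ℂ × ℂ × ℂ → ℂ, (∀ i, u i 0 = 0) ∧ ∀ᶠ y in 𝓝 (0 : ℂ × ℂ × ℂ), ∀ i,
      AnalyticAt ℂ (u i) y ∧
      fderiv ℂ (u i) y (κ₁ * y.1, κ₂ * y.2.1, κ₃ * y.2.2) =
        p i * y.1 * Complex.exp (u 0 y) + q i * y.2.1 * Complex.exp (u 1 y) := by
  set G := integralEq (tailOp κ₁ h₁) (tailOp κ₂ h₂) p q with hG
  have hG0 : G 0 = 0 := by funext i; simp [hG, integralEq]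
  have cd : ContDiffAt ℂ ω G 0 := (contDiff_integralEq _ _ p q).contDiffAt
  have hinv : (fderiv ℂ G 0 ∘L .inr ℂ (ℂ × ℂ × ℂ) (Fin 3 → (ℝ →ᵇ ℂ))).IsInvertible := by
    rw [hG, fderiv_integralEq_comp_inr]
    exact ⟨ContinuousLinearEquiv.refl ℂ _, rfl⟩
  have hω : (ω : ℕ∞ω) ≠ 0 := by simp
  set ψ := cd.implicitFunction hω hinv with hψ
  have hψ0 : ψ 0 = 0 := cd.implicitFunction_apply_self hω hinv
  have hsol : ∀ᶠ y in 𝓝 (0 : ℂ × ℂ × ℂ), G (y, ψ y) = 0 := by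
    simpa [hG0] using cd.eventually_apply_implicitFunction hω hinv
  have huniq : ∀ᶠ v in 𝓝 (0 : (ℂ × ℂ × ℂ) × (Fin 3 → (ℝ →ᵇ ℂ))), G v = 0 → ψ v.1 = v.2 := by
    filter_upwards [cd.eventually_apply_eq_iff_implicitFunction hω hinv] with v hv h
    exact hv.1 (h.trans hG0.symm)
  have hcd : ContDiffAt ℂ ω ψ 0 := cd.contDiffAt_implicitFunction hω hinv
  have han : ∀ᶠ y in 𝓝 (0 : ℂ × ℂ × ℂ), AnalyticAt ℂ ψ y := hcd.analyticAt.eventually_analyticAt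
  obtain ⟨ε, hε, hball⟩ := Metric.eventually_nhds_iff_ball.1 huniq
  have hsmall : ∀ᶠ y in 𝓝 (0 : ℂ × ℂ × ℂ), ‖ψ y‖ < ε := by
    have := hcd.continuousAt.norm
    rw [ContinuousAt, hψ0, norm_zero] at this
    exact this.eventually_lt_const hε
  have hy : ∀ᶠ y in 𝓝 (0 : ℂ × ℂ × ℂ), ‖y‖ < ε := by
    filter_upwards [Metric.ball_mem_nhds (0 : ℂ × ℂ × ℂ) hε] with y hy
    exact mem_ball_zero_iff.1 hy
  refine ⟨fun i y => ψ y i 0, fun i => by simp [hψ0], ?_⟩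
  filter_upwards [hsol, han, hsmall, hy] with y hsol han hsmall hy i
  have hani : AnalyticAt ℂ (fun y => ψ y i 0) y :=
    (((BoundedContinuousFunction.evalCLM ℂ (0 : ℝ)).comp
      (ContinuousLinearMap.proj (R := ℂ) (φ := fun _ : Fin 3 => (ℝ →ᵇ ℂ)) i)).analyticAt _).comp han
  refine ⟨hani, ?_⟩
  let Y : ℝ → ℂ × ℂ × ℂ := fun r => (Complex.exp (-κ₁ * r) * y.1,
    Complex.exp (-κ₂ * r) * y.2.1, Complex.exp (-κ₃ * r) * y.2.2)
  have hY0 : Y 0 = y := by simp [Y]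
  have hexp : ∀ κ c : ℂ, HasDerivAt (fun r : ℝ => Complex.exp (-κ * r) * c) (-(κ * c)) 0 := by
    intro κ c
    have h := ((((hasDerivAt_id (0 : ℝ)).ofReal_comp).const_mul (-κ)).cexp).mul_const c
    simpa using h
  have hYd : HasDerivAt Y (-(κ₁ * y.1, κ₂ * y.2.1, κ₃ * y.2.2)) 0 :=
    (hexp κ₁ y.1).prodMk ((hexp κ₂ y.2.1).prodMk (hexp κ₃ y.2.2))
  have hYs : ∀ᶠ r in 𝓝 (0 : ℝ), ‖Y r‖ < ε := by
    have := hYd.continuousAt.norm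
    rw [ContinuousAt, hY0] at this
    exact this.eventually_lt_const hy
  -- Uniqueness identifies `ψ (Y r)` with the translate of `ψ y`, which stays in the same ball
  -- because translation does not increase the norm.
  have hflow : ∀ᶠ r in 𝓝[≥] (0 : ℝ), ψ (Y r) i 0 = ψ y i r := by
    filter_upwards [nhdsWithin_le_nhds hYs, self_mem_nhdsWithin] with r hr hr0
    have hs := integralEq_shift h₁ h₂ κ₃ p q (mem_Ici.1 hr0) hsol
    have := hball (Y r, fun i => shift r (ψ y i)) (by
      rw [mem_ball_zero_iff, Prod.norm_def, max_lt_iff]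
      refine ⟨hr, (pi_norm_lt_iff hε).2 fun j => ?_⟩
      exact (norm_shift_le r _).trans_lt ((norm_le_pi_norm (ψ y) j).trans_lt hsmall)) hs
    have := DFunLike.congr_fun (congrFun this i) 0
    simpa [shift_apply] using this
  have hl : HasDerivWithinAt (fun r => ψ (Y r) i 0)
      (fderiv ℂ (fun y => ψ y i 0) y (-(κ₁ * y.1, κ₂ * y.2.1, κ₃ * y.2.2))) (Ici 0) 0 := by
    have hd : HasFDerivAt (fun y => ψ y i 0) (fderiv ℂ (fun y => ψ y i 0) y) (Y 0) := by
      rw [hY0]; exact hani.differentiableAt.hasFDerivAt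
    exact ((hd.restrictScalars ℝ).comp_hasDerivAt 0 hYd).hasDerivWithinAt
  have hr : HasDerivWithinAt (fun r => ψ y i r)
      (p i * y.1 * (-NormedSpace.exp (ψ y 0) 0) + q i * y.2.1 * (-NormedSpace.exp (ψ y 1) 0))
      (Ici 0) 0 := by
    have hi := congrFun hsol i
    simp only [hG, integralEq, Pi.zero_apply, sub_eq_zero] at hi
    rw [hi]
    exact ((tailOp_hasDerivWithinAt h₁ _).const_mul (p i * y.1)).add
      ((tailOp_hasDerivWithinAt h₂ _).const_mul (q i * y.2.1))
  have hlr := hr.congr_of_eventuallyEq hflow (by rw [hY0])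
  have := (uniqueDiffWithinAt_Ici (0 : ℝ)).eq_deriv _ hl hlr
  rw [map_neg, exp_bcf_apply, exp_bcf_apply] at this
  linear_combination -this

lemma cube_root_re {ζ : ℂ} (h3 : ζ ^ 3 = 1) (h1 : ζ ≠ 1) : ζ.re = -1 / 2 := by
  have h : ζ ^ 2 + ζ + 1 = 0 :=
    mul_left_cancel₀ (sub_ne_zero.2 h1) (by linear_combination h3)
  have hre := congrArg Complex.re h
  have him := congrArg Complex.im h
  simp [pow_two] at hre him
  have : ζ.im * (2 * ζ.re + 1) = 0 := by linarith
  rcases mul_eq_zero.1 this with h0 | h0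
  · rw [h0] at hre
    nlinarith [sq_nonneg (2 * ζ.re + 1)]
  · linarith

/-- The quadratic system
ẋ₁ = x₁(1 + a₁₀₀x₁ + a₀₁₀x₂), ẋ₂ = ζx₂(1 + b₁₀₀x₁ + b₀₁₀x₂),
ẋ₃ = ζ²x₃(1 + c₀₁₀x₂) is analytically linearizable. -/
theorem stmt_16 (ζ : ℂ) (h3 : ζ ^ 3 = 1) (h1 : ζ ≠ 1)
    (a₁₀₀ a₀₁₀ b₁₀₀ b₀₁₀ c₀₁₀ : ℂ)
    (F : ℂ × ℂ × ℂ → ℂ × ℂ × ℂ)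
    (hF : ∀ x : ℂ × ℂ × ℂ, F x =
      (x.1 * (1 + a₁₀₀ * x.1 + a₀₁₀ * x.2.1),
       ζ * x.2.1 * (1 + b₁₀₀ * x.1 + b₀₁₀ * x.2.1),
       ζ ^ 2 * x.2.2 * (1 + c₀₁₀ * x.2.1))) :
    ∃ (U : Set (ℂ × ℂ × ℂ)) (H : ℂ × ℂ × ℂ → ℂ × ℂ × ℂ),
      U ∈ nhds (0 : ℂ × ℂ × ℂ) ∧ (∀ y ∈ U, AnalyticAt ℂ H y) ∧
      H 0 = 0 ∧ fderiv ℂ H 0 = ContinuousLinearMap.id ℂ (ℂ × ℂ × ℂ) ∧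
      ∀ y ∈ U, F (H y) = fderiv ℂ H y (y.1, ζ * y.2.1, ζ ^ 2 * y.2.2) := by
  have hre := cube_root_re h3 h1
  have hsum : ζ ^ 2 + ζ + 1 = 0 :=
    mul_left_cancel₀ (sub_ne_zero.2 h1) (by linear_combination h3)
  have hζ0 : ζ ≠ 0 := by rintro rfl; simp at h3
  have hκ₁ : 0 < (-ζ).re := by rw [Complex.neg_re, hre]; norm_num
  have hκ₂ : 0 < (-ζ ^ 2).re := by
    rw [show -ζ ^ 2 = ζ + 1 by linear_combination -hsum, Complex.add_re, hre]; norm_num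
  obtain ⟨u, hu0, hu⟩ := exists_exponents hκ₁ hκ₂ (-ζ ^ 3)
    ![-ζ * a₁₀₀, -ζ * (ζ * b₁₀₀), 0] ![-ζ * a₀₁₀, -ζ * (ζ * b₀₁₀), -ζ * (ζ ^ 2 * c₀₁₀)]
  have hL : ∀ y : ℂ × ℂ × ℂ, ((-ζ * y.1, -ζ ^ 2 * y.2.1, -ζ ^ 3 * y.2.2) : ℂ × ℂ × ℂ) =
      (-ζ) • (y.1, ζ * y.2.1, ζ ^ 2 * y.2.2) := by
    intro y
    ext <;> simp <;> ring
  let H : ℂ × ℂ × ℂ → ℂ × ℂ × ℂ := fun y =>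
    (y.1 * Complex.exp (u 0 y), y.2.1 * Complex.exp (u 1 y), y.2.2 * Complex.exp (u 2 y))
  have hH : ∀ y, (∀ i, AnalyticAt ℂ (u i) y) → ∀ w : ℂ × ℂ × ℂ, fderiv ℂ H y w =
      (Complex.exp (u 0 y) * (w.1 + y.1 * fderiv ℂ (u 0) y w),
       Complex.exp (u 1 y) * (w.2.1 + y.2.1 * fderiv ℂ (u 1) y w),
       Complex.exp (u 2 y) * (w.2.2 + y.2.2 * fderiv ℂ (u 2) y w)) := by
    intro y han w
    have e := fun i => (han i).differentiableAt.hasFDerivAt.cexp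
    have d := (hasFDerivAt_fst.mul (e 0)).prodMk
      ((hasFDerivAt_snd.fst.mul (e 1)).prodMk (hasFDerivAt_snd.snd.mul (e 2)))
    rw [show fderiv ℂ H y = _ from d.fderiv]
    ext <;> simp <;> ring
  refine ⟨{y | ∀ i, AnalyticAt ℂ (u i) y ∧ fderiv ℂ (u i) y _ = _}, H, hu, ?_, ?_, ?_, ?_⟩
  · intro y hy
    have h0 := (hy 0).1
    have h1 := (hy 1).1
    have h2 := (hy 2).1
    exact (analyticAt_fst.mul h0.cexp).prod
      (((analyticAt_fst.comp analyticAt_snd).mul h1.cexp).prod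
        ((analyticAt_snd.comp analyticAt_snd).mul h2.cexp))
  · simp [H]
  · ext <;> simp [hH 0 (fun i => (hu.self_of_nhds i).1), hu0]
  · intro y hy
    have hd : ∀ i, -ζ * fderiv ℂ (u i) y (y.1, ζ * y.2.1, ζ ^ 2 * y.2.2) =
        fderiv ℂ (u i) y (-ζ * y.1, -ζ ^ 2 * y.2.1, -ζ ^ 3 * y.2.2) := fun i => by
      rw [hL, map_smul, smul_eq_mul]
    have hneg : -ζ ≠ 0 := neg_ne_zero.2 hζ0
    have d0 : fderiv ℂ (u 0) y (y.1, ζ * y.2.1, ζ ^ 2 * y.2.2) =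
        a₁₀₀ * (y.1 * Complex.exp (u 0 y)) + a₀₁₀ * (y.2.1 * Complex.exp (u 1 y)) :=
      mul_left_cancel₀ hneg ((hd 0).trans ((hy 0).2.trans (by simp only [Matrix.cons_val]; ring)))
    have d1 : fderiv ℂ (u 1) y (y.1, ζ * y.2.1, ζ ^ 2 * y.2.2) =
        ζ * (b₁₀₀ * (y.1 * Complex.exp (u 0 y)) + b₀₁₀ * (y.2.1 * Complex.exp (u 1 y))) :=
      mul_left_cancel₀ hneg ((hd 1).trans ((hy 1).2.trans (by simp only [Matrix.cons_val]; ring)))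
    have d2 : fderiv ℂ (u 2) y (y.1, ζ * y.2.1, ζ ^ 2 * y.2.2) =
        ζ ^ 2 * (c₀₁₀ * (y.2.1 * Complex.exp (u 1 y))) :=
      mul_left_cancel₀ hneg ((hd 2).trans ((hy 2).2.trans (by simp only [Matrix.cons_val]; ring)))
    rw [hF, hH y fun i => (hy i).1, d0, d1, d2]
    ext <;> simp [H] <;> ring
end

section
/- Let ζ ∈ ℂ satisfy ζ³ = 1 and ζ ≠ 1, and let a₁₀₀, a₀₁₀, c₀₁₀, c₀₀₁ ∈ ℂ. Consider the vector field F : ℂ³ → ℂ³ given by F(x₁, x₂, x₃) = (x₁·(1 + a₁₀₀x₁ + a₀₁₀x₂), ζ·x₂·(1 + x₂), ζ²·x₃·(1 + c₀₁₀x₂ + c₀₀₁x₃)). Then this system is analytically linearizable: there exist a neighborhood U of the origin in ℂ³ and a map H : ℂ³ → ℂ³ analytic on U with H(0) = 0 and derivative at 0 equal to the identity, such that for all y ∈ U, F(H(y)) = DH(y)·(y₁, ζ·y₂, ζ²·y₃), where DH(y) denotes the (Fréchet) derivative of H at y. -/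
/-!
The second equation decouples and is linearized by `x₂ = y₂ / (1 - y₂)`.  Substituting this in the
first (or third) equation leaves a Bernoulli equation whose coefficients depend on `y₂` only, and
its solution is `x = y g(y₂) / (1 - a y h(y₂))`, where
`μ z g' = b z / (1 - z) g` with `g 0 = 1`, and `μ z h' + h = g`,
`μ` being the ratio of the eigenvalue `ζ` to that of the equation considered (`μ = ζ` for the first
equation and `μ = ζ²` for the third).  Explicitly `g = (1 - z) ^ (-b / μ)`.  The coefficients of `h`
are those of `g` divided by `1 + μ n`; since `μ` is not real these divisors are bounded away from
zero, so `h` converges (`exists_euler_solution`).  The Bernoulli solution is checked by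
differentiating along lines (`hasDerivAt_bernoulliSol`).
-/

open Filter Topology

/-- Absence of small divisors for a nonreal `μ`. -/
lemma exists_divisor_bound {μ : ℂ} (hμ : μ.im ≠ 0) :
    ∃ δ > 0, ∀ n : ℕ, δ ≤ ‖1 + μ * n‖ := by
  refine ⟨min 1 |μ.im|, lt_min one_pos (abs_pos.2 hμ), fun n => ?_⟩
  rcases Nat.eq_zero_or_pos n with rfl | hn
  · simp
  · have h := Complex.abs_im_le_norm (1 + μ * n)
    have e : (1 + μ * n).im = μ.im * n := by simp
    have hn' : (1 : ℝ) ≤ n := by exact_mod_cast hn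
    rw [e, abs_mul, Nat.abs_cast] at h
    have := min_le_right 1 |μ.im|
    nlinarith [abs_nonneg μ.im]

/-- The Euler equation `μ z h' + h = g` with `g` analytic at `0` and `μ` nonreal has a solution
analytic at `0`, obtained by dividing the `n`-th Taylor coefficient of `g` by `1 + μ n`. -/
lemma exists_euler_solution {μ : ℂ} (hμ : μ.im ≠ 0) {g : ℂ → ℂ} (hg : AnalyticAt ℂ g 0) :
    ∃ h : ℂ → ℂ, AnalyticAt ℂ h 0 ∧ ∀ᶠ z in 𝓝 (0 : ℂ), μ * z * deriv h z + h z = g z := by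
  obtain ⟨δ, hδ, hδn⟩ := exists_divisor_bound hμ
  obtain ⟨p, R, hp⟩ := hg
  obtain ⟨r, hr0, hrR⟩ := ENNReal.lt_iff_exists_nnreal_btwn.1 hp.r_pos
  have hr : 0 < (r : ℝ) := by exact_mod_cast hr0
  obtain ⟨C, hC, hCn⟩ := p.norm_mul_pow_le_of_lt_radius (hrR.trans_le hp.r_le)
  set c : ℕ → ℂ := fun n => p.coeff n / (1 + μ * n) with hc
  have hne : ∀ n : ℕ, 1 + μ * n ≠ 0 := fun n => norm_pos_iff.1 (hδ.trans_le (hδn n))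
  have hball : Metric.ball (0 : ℂ) (r / 2) ∈ 𝓝 (0 : ℂ) := Metric.ball_mem_nhds _ (by positivity)
  have hu : Summable fun n : ℕ => C / δ * (1 / 2 : ℝ) ^ n := summable_geometric_two.mul_left _
  have hd : ∀ n : ℕ, DifferentiableOn ℂ (fun z => c n * z ^ n) (Metric.ball (0 : ℂ) (r / 2)) :=
    fun n => by fun_prop
  have hbd : ∀ (n : ℕ) (z : ℂ), z ∈ Metric.ball (0 : ℂ) (r / 2) →
      ‖c n * z ^ n‖ ≤ C / δ * (1 / 2 : ℝ) ^ n := by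
    intro n z hz
    have hz' : ‖z‖ ≤ r * (1 / 2) := by
      have := mem_ball_zero_iff.1 hz
      linarith
    have h1 : ‖p.coeff n‖ * r ^ n ≤ C := by
      rw [← p.norm_apply_eq_norm_coef]
      exact hCn n
    calc ‖c n * z ^ n‖ = ‖p.coeff n‖ / ‖1 + μ * n‖ * ‖z‖ ^ n := by simp [hc]
      _ ≤ ‖p.coeff n‖ / δ * (r * (1 / 2)) ^ n := by
          gcongr
          exact hδn n
      _ = (‖p.coeff n‖ * r ^ n) / δ * (1 / 2) ^ n := by rw [mul_pow]; ring
      _ ≤ C / δ * (1 / 2) ^ n := by gcongr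
  refine ⟨fun z => ∑' n, c n * z ^ n, ?_, ?_⟩
  · exact (Complex.differentiableOn_tsum_of_summable_norm hu hd Metric.isOpen_ball hbd).analyticAt
      hball
  · filter_upwards [hball] with z hz
    have hs : HasSum (fun n => c n * z ^ n) (∑' n, c n * z ^ n) :=
      (Summable.of_norm_bounded hu fun n => hbd n z hz).hasSum
    have hs' := Complex.hasSum_deriv_of_summable_norm hu hd Metric.isOpen_ball hbd hz
    have hsum := (hs'.mul_left (μ * z)).add hs
    have hzR : z ∈ Metric.eball (0 : ℂ) R := by
      have h2 : ‖z‖₊ < r := by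
        have := mem_ball_zero_iff.1 hz
        have h3 : ‖z‖ < r := by linarith
        exact_mod_cast h3
      rw [mem_eball_zero_iff]
      exact lt_trans (by exact_mod_cast h2) hrR
    have hgs := hp.hasSum hzR
    rw [zero_add] at hgs
    refine hsum.unique ((congrArg (HasSum · (g z)) (funext fun n => ?_)).mpr hgs)
    rw [p.apply_eq_pow_smul_coeff, smul_eq_mul]
    have e : deriv (fun w : ℂ => c n * w ^ n) z = c n * (n * z ^ (n - 1)) := by simp
    rw [e]
    have e2 : p.coeff n = c n * (1 + μ * n) := (div_mul_cancel₀ _ (hne n)).symm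
    rw [e2]
    rcases n with _ | n
    · simp
    · simp only [Nat.add_sub_cancel]
      ring

/-- The pair `(g, h)` of functions of `y₂` entering the solution of the Bernoulli equation. -/
lemma exists_bernoulli_pair {μ : ℂ} (hμ : μ.im ≠ 0) (b : ℂ) :
    ∃ g h : ℂ → ℂ, AnalyticAt ℂ g 0 ∧ AnalyticAt ℂ h 0 ∧ g 0 = 1 ∧
      (∀ᶠ z in 𝓝 (0 : ℂ), μ * z * deriv g z = b * (z / (1 - z)) * g z) ∧
      ∀ᶠ z in 𝓝 (0 : ℂ), μ * z * deriv h z + h z = g z := by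
  have hμ0 : μ ≠ 0 := by rintro rfl; simp at hμ
  set g : ℂ → ℂ := fun z => Complex.exp (-b / μ * Complex.log (1 - z)) with hgdef
  have hslit : ∀ᶠ z : ℂ in 𝓝 0, 1 - z ∈ Complex.slitPlane :=
    (show ContinuousAt (fun z : ℂ => 1 - z) 0 by fun_prop).eventually
      (Complex.isOpen_slitPlane.mem_nhds (by simp))
  have hgd : ∀ᶠ z : ℂ in 𝓝 0, HasDerivAt g (g z * (-b / μ * (-1 / (1 - z)))) z := by
    filter_upwards [hslit] with z hz
    exact ((((hasDerivAt_id z).const_sub 1).clog hz).const_mul (-b / μ)).cexp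
  have hg : AnalyticAt ℂ g 0 :=
    Complex.analyticAt_iff_eventually_differentiableAt.2
      (hgd.mono fun z hz => hz.differentiableAt)
  obtain ⟨h, hh, hE⟩ := exists_euler_solution hμ hg
  refine ⟨g, h, hg, hh, by simp [hgdef], ?_, hE⟩
  filter_upwards [hgd, hslit] with z hz hz'
  have := Complex.slitPlane_ne_zero hz'
  rw [hz.deriv]
  field_simp

/-- The solution `s g(z) / (1 - a s h(z))` of the Bernoulli equation. -/
noncomputable def bernoulliSol (a : ℂ) (g h : ℂ → ℂ) (s z : ℂ) : ℂ := s * g z / (1 - a * s * h z)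

lemma hasDerivAt_bernoulliSol {a : ℂ} {g h : ℂ → ℂ} {s z σ τ : ℂ} (hg : DifferentiableAt ℂ g z)
    (hh : DifferentiableAt ℂ h z) (hd : 1 - a * s * h z ≠ 0) :
    HasDerivAt (fun t : ℂ => bernoulliSol a g h (s + t * σ) (z + t * τ))
      (((σ * g z + s * (deriv g z * τ)) * (1 - a * s * h z)
        + s * g z * (a * σ * h z + a * s * (deriv h z * τ))) / (1 - a * s * h z) ^ 2) 0 := by
  have hl : ∀ x v : ℂ, HasDerivAt (fun t : ℂ => x + t * v) v 0 := fun x v => by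
    simpa using ((hasDerivAt_id (0 : ℂ)).mul_const v).const_add x
  have hG : HasDerivAt (fun t : ℂ => g (z + t * τ)) (deriv g z * τ) 0 :=
    HasDerivAt.comp (0 : ℂ) (by simpa using hg.hasDerivAt) (hl z τ)
  have hH : HasDerivAt (fun t : ℂ => h (z + t * τ)) (deriv h z * τ) 0 :=
    HasDerivAt.comp (0 : ℂ) (by simpa using hh.hasDerivAt) (hl z τ)
  have := ((hl s σ).mul hG).div ((((hl s σ).const_mul a).mul hH).const_sub 1) (by simpa using hd)
  refine this.congr_deriv ?_
  simp
  ring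

/-- `bernoulliSol` solves `x' = l x (1 + a x + b z / (1 - z))` along `s' = l s`, `z' = l μ z`. -/
lemma bernoulliSol_eq {a b l μ : ℂ} {g h : ℂ → ℂ} {s z : ℂ}
    (hd : 1 - a * s * h z ≠ 0) (h1 : μ * z * deriv g z = b * (z / (1 - z)) * g z)
    (h2 : μ * z * deriv h z + h z = g z) :
    ((l * s * g z + s * (deriv g z * (l * μ * z))) * (1 - a * s * h z)
        + s * g z * (a * (l * s) * h z + a * s * (deriv h z * (l * μ * z))))
          / (1 - a * s * h z) ^ 2
      = l * bernoulliSol a g h s z * (1 + b * (z / (1 - z)) + a * bernoulliSol a g h s z) := by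
  generalize z / (1 - z) = w at *
  have e1 : deriv g z * (l * μ * z) = l * (b * w * g z) := by rw [← h1]; ring
  have e2 : deriv h z * (l * μ * z) = l * (g z - h z) := by rw [← h2]; ring
  rw [e1, e2, bernoulliSol]
  generalize g z = G at *
  generalize h z = K at *
  generalize 1 - a * s * K = D at *
  field_simp
  ring

/-- A primitive cube root of unity is not real. -/
lemma im_ne_zero_of_cube {ζ : ℂ} (h3 : ζ ^ 3 = 1) (h1 : ζ ≠ 1) : ζ.im ≠ 0 := by
  intro h
  have hq : ζ ^ 2 + ζ + 1 = 0 := by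
    have : (ζ - 1) * (ζ ^ 2 + ζ + 1) = 0 := by linear_combination h3
    exact (mul_eq_zero.1 this).resolve_left (sub_ne_zero.2 h1)
  have := congrArg Complex.re hq
  simp [pow_two, h] at this
  nlinarith [sq_nonneg (ζ.re + 1 / 2)]

/-- The quadratic system (case (5))
ẋ₁ = x₁(1 + a₁₀₀x₁ + a₀₁₀x₂), ẋ₂ = ζx₂(1 + x₂),
ẋ₃ = ζ²x₃(1 + c₀₁₀x₂ + c₀₀₁x₃) is analytically linearizable. -/
theorem stmt_17 (ζ : ℂ) (h3 : ζ ^ 3 = 1) (h1 : ζ ≠ 1)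
    (a₁₀₀ a₀₁₀ c₀₁₀ c₀₀₁ : ℂ)
    (F : ℂ × ℂ × ℂ → ℂ × ℂ × ℂ)
    (hF : ∀ x : ℂ × ℂ × ℂ, F x =
      (x.1 * (1 + a₁₀₀ * x.1 + a₀₁₀ * x.2.1),
       ζ * x.2.1 * (1 + x.2.1),
       ζ ^ 2 * x.2.2 * (1 + c₀₁₀ * x.2.1 + c₀₀₁ * x.2.2))) :
    ∃ (U : Set (ℂ × ℂ × ℂ)) (H : ℂ × ℂ × ℂ → ℂ × ℂ × ℂ),
      U ∈ nhds (0 : ℂ × ℂ × ℂ) ∧ (∀ y ∈ U, AnalyticAt ℂ H y) ∧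
      H 0 = 0 ∧ fderiv ℂ H 0 = ContinuousLinearMap.id ℂ (ℂ × ℂ × ℂ) ∧
      ∀ y ∈ U, F (H y) = fderiv ℂ H y (y.1, ζ * y.2.1, ζ ^ 2 * y.2.2) := by
  have hζ2 : (ζ ^ 2) ^ 3 = 1 := by rw [← pow_mul, mul_comm, pow_mul, h3, one_pow]
  have hsq_ne : ζ ^ 2 ≠ 1 := fun h => h1 (by linear_combination h3 - ζ * h)
  obtain ⟨g, h, hg, hh, hg0, hgE, hhE⟩ := exists_bernoulli_pair (im_ne_zero_of_cube h3 h1) a₀₁₀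
  obtain ⟨k, m, hk, hm, hk0, hkE, hmE⟩ :=
    exists_bernoulli_pair (im_ne_zero_of_cube hζ2 hsq_ne) c₀₁₀
  -- The middle component `y₂ / (1 - y₂)` is itself a Bernoulli solution with `g = h = 1`.
  set H : ℂ × ℂ × ℂ → ℂ × ℂ × ℂ := fun y =>
    (bernoulliSol a₁₀₀ g h y.1 y.2.1, bernoulliSol 1 (fun _ => 1) (fun _ => 1) y.2.1 y.2.1,
      bernoulliSol c₀₀₁ k m y.2.2 y.2.1) with hH
  have hline : ∀ y v : ℂ × ℂ × ℂ, DifferentiableAt ℂ H y → ∀ w : ℂ × ℂ × ℂ,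
      HasDerivAt (fun t : ℂ => H (y + t • v)) w 0 → fderiv ℂ H y v = w := by
    intro y v hy w hw
    rw [← hy.lineDeriv_eq_fderiv]
    exact hw.deriv
  have p1 : AnalyticAt ℂ (fun y : ℂ × ℂ × ℂ => y.1) 0 := analyticAt_fst
  have p2 : AnalyticAt ℂ (fun y : ℂ × ℂ × ℂ => y.2.1) 0 :=
    analyticAt_fst.comp analyticAt_snd
  have p3 : AnalyticAt ℂ (fun y : ℂ × ℂ × ℂ => y.2.2) 0 :=
    analyticAt_snd.comp analyticAt_snd
  have comp2 : ∀ f : ℂ → ℂ, AnalyticAt ℂ f 0 →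
      AnalyticAt ℂ (fun y : ℂ × ℂ × ℂ => f y.2.1) 0 := fun f hf =>
    AnalyticAt.comp (g := f) (f := fun y : ℂ × ℂ × ℂ => y.2.1) hf p2
  have han : AnalyticAt ℂ H 0 := by
    refine AnalyticAt.prod ?_ (AnalyticAt.prod ?_ ?_)
    · exact (p1.mul (comp2 g hg)).div
        (analyticAt_const.sub ((analyticAt_const.mul p1).mul (comp2 h hh))) (by simp)
    · exact (p2.mul analyticAt_const).div
        (analyticAt_const.sub ((analyticAt_const.mul p2).mul analyticAt_const)) (by simp)
    · exact (p3.mul (comp2 k hk)).div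
        (analyticAt_const.sub ((analyticAt_const.mul p3).mul (comp2 m hm))) (by simp)
  have t2 : Tendsto (fun y : ℂ × ℂ × ℂ => y.2.1) (𝓝 0) (𝓝 0) := p2.continuousAt
  have hA : ∀ᶠ z in 𝓝 (0 : ℂ), DifferentiableAt ℂ g z ∧ DifferentiableAt ℂ h z ∧
      DifferentiableAt ℂ k z ∧ DifferentiableAt ℂ m z := by
    filter_upwards [hg.eventually_analyticAt, hh.eventually_analyticAt,
      hk.eventually_analyticAt, hm.eventually_analyticAt] with z z1 z2 z3 z4
    exact ⟨z1.differentiableAt, z2.differentiableAt, z3.differentiableAt, z4.differentiableAt⟩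
  have d1 : ∀ᶠ y : ℂ × ℂ × ℂ in 𝓝 0, 1 - a₁₀₀ * y.1 * h y.2.1 ≠ 0 :=
    (analyticAt_const.sub
      ((analyticAt_const.mul p1).mul (comp2 h hh))).continuousAt.eventually_ne (by simp)
  have d2 : ∀ᶠ y : ℂ × ℂ × ℂ in 𝓝 0, 1 - 1 * y.2.1 * 1 ≠ 0 :=
    (analyticAt_const.sub
      ((analyticAt_const.mul p2).mul analyticAt_const)).continuousAt.eventually_ne (by simp)
  have d3 : ∀ᶠ y : ℂ × ℂ × ℂ in 𝓝 0, 1 - c₀₀₁ * y.2.2 * m y.2.1 ≠ 0 :=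
    (analyticAt_const.sub
      ((analyticAt_const.mul p3).mul (comp2 m hm))).continuousAt.eventually_ne (by simp)
  have main : ∀ᶠ y : ℂ × ℂ × ℂ in 𝓝 0, AnalyticAt ℂ H y ∧
      F (H y) = fderiv ℂ H y (y.1, ζ * y.2.1, ζ ^ 2 * y.2.2) := by
    filter_upwards [han.eventually_analyticAt, t2.eventually hA, t2.eventually hgE,
      t2.eventually hhE, t2.eventually hkE, t2.eventually hmE, d1, d2, d3]
      with y hy ⟨y1, y2, y3, y4⟩ e1 e2 e3 e4 n1 n2 n3
    refine ⟨hy, (hline _ _ hy.differentiableAt _ ?_).symm⟩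
    have q1 := bernoulliSol_eq (l := 1) n1 e1 e2
    have q3 := bernoulliSol_eq (l := ζ ^ 2) n3 e3 e4
    have r1 := hasDerivAt_bernoulliSol (σ := 1 * y.1) (τ := 1 * ζ * y.2.1) y1 y2 n1
    have r2 := hasDerivAt_bernoulliSol (a := 1) (σ := ζ * y.2.1) (τ := ζ * y.2.1)
      (differentiableAt_const (x := y.2.1) (1 : ℂ)) (differentiableAt_const (1 : ℂ)) n2
    have r3 := hasDerivAt_bernoulliSol (σ := ζ ^ 2 * y.2.2) (τ := ζ ^ 2 * ζ ^ 2 * y.2.1) y3 y4 n3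
    rw [q1] at r1
    rw [q3] at r3
    -- The flow in `z = y₂` has rate `ζ² μ` with `μ = ζ²`, which is `ζ`.
    have hz4 : ζ ^ 2 * ζ ^ 2 = ζ := by linear_combination ζ * h3
    rw [hz4] at r3
    simp only [one_mul] at r1
    refine (r1.prodMk (r2.prodMk r3)).congr_deriv ?_
    have hb : bernoulliSol 1 (fun _ => 1) (fun _ => 1) y.2.1 y.2.1 = y.2.1 / (1 - y.2.1) := by
      simp [bernoulliSol]
    have n2' : 1 - y.2.1 ≠ 0 := by simpa using n2
    rw [hF]
    simp only [hH, hb]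
    refine Prod.ext ?_ (Prod.ext ?_ ?_)
    · simp only
      ring
    · simp
      field_simp
    · simp only
  refine ⟨{y | AnalyticAt ℂ H y ∧ F (H y) = fderiv ℂ H y (y.1, ζ * y.2.1, ζ ^ 2 * y.2.2)}, H,
    main, fun y hy => hy.1, by simp [hH, bernoulliSol], ?_, fun y hy => hy.2⟩
  refine ContinuousLinearMap.ext fun v => hline 0 v han.differentiableAt _ ?_
  have r1 := hasDerivAt_bernoulliSol (a := a₁₀₀) (s := 0) (σ := v.1) (τ := v.2.1)
    hg.differentiableAt hh.differentiableAt (by simp)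
  have r2 := hasDerivAt_bernoulliSol (a := 1) (s := 0) (σ := v.2.1) (τ := v.2.1)
    (differentiableAt_const (x := (0 : ℂ)) (1 : ℂ)) (differentiableAt_const (1 : ℂ)) (by simp)
  have r3 := hasDerivAt_bernoulliSol (a := c₀₀₁) (s := 0) (σ := v.2.2) (τ := v.2.1)
    hk.differentiableAt hm.differentiableAt (by simp)
  refine (r1.prodMk (r2.prodMk r3)).congr_deriv ?_
  simp [hg0, hk0]
end

section
/- Let ζ ∈ ℂ satisfy ζ³ = 1 and ζ ≠ 1, and let a₁₀₀, a₀₀₁, c₀₁₀, c₀₀₁ ∈ ℂ. Consider the vector field F : ℂ³ → ℂ³ given by F(x₁, x₂, x₃) = (x₁·(1 + a₁₀₀x₁ + ζ·c₀₁₀x₂ + a₀₀₁x₃), ζ·x₂·(1 + x₂), ζ²·x₃·(1 + c₀₁₀x₂ + c₀₀₁x₃)). Then this system is analytically linearizable: there exist a neighborhood U of the origin in ℂ³ and a map H : ℂ³ → ℂ³ analytic on U with H(0) = 0 and derivative at 0 equal to the identity, such that for all y ∈ U, F(H(y)) = DH(y)·(y₁, ζ·y₂, ζ²·y₃), where DH(y)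 denotes the (Fréchet) derivative of H at y. -/
/-!
Write `x₂ = y₂ / (1 - y₂)`, `x₃ = y₃ P(y₂, y₃)` and `x₁ = y₁ eᵘ / (1 - y₁ h)` with `P`, `u`, `h`
depending only on `(y₂, y₃)`. With `X = ζ y₂ ∂₂ + ζ² y₃ ∂₃`, the conjugacy equation becomes

* `P = eᵐ / (1 - y₃ g)` with `X m = ζ² c₀₁₀ x₂` and `X g + ζ² g = ζ² c₀₀₁ eᵐ`,
* `X u = ζ c₀₁₀ x₂ + a₀₀₁ x₃`,
* `X h + h = a₁₀₀ eᵘ`.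

All of these are equations `X h + l h = f` in two variables. Both eigenvalues `ζ`, `ζ²` of `X` have
real part `-1/2`, so the flow `e t` of `X` is a contraction and
`h(y) = -∫₀^∞ e^{l t} f(e t y) dt` is an analytic solution as soon as `f = O(‖y‖ᵏ)` with
`Re l < k / 2` (`exists_solution`; analyticity comes from integrating the power series of `f` degree
by degree). This settles the equations for `m` and `u` (`l = 0`, `k = 1`) and `g` (`l = ζ²`, `k = 0`).

The equation for `h` has `l = 1` and is resonant at the monomial `y₂ y₃`, since `1 + ζ + ζ² = 0`.
A quadratic polynomial `K` in `x₂`, `x₃` is chosen such that `h = eᵘ K` solves the equation up to terms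
of degree at least three; the coefficient of `x₂ x₃` in the error is then
`a₁₀₀ a₀₀₁ c₀₁₀ ζ² (1 + ζ + ζ²) = 0`, thanks to the relation `a₀₁₀ = ζ c₀₁₀`. The remaining
error is `O(‖y‖³)`, and `1 < 3 / 2`.

Derivatives along the vector field are expressed with `HasLineDerivAt`, so that the calculus rules
for functions of one variable apply.
-/

open Set Filter Topology MeasureTheory Asymptotics

/-! ### The equation `X h + l h = f` for a contracting linear flow -/

theorem powerSeries_apply_eq_zero_of_isBigO {E : Type*} [NormedAddCommGroup E] [NormedSpace ℂ E]
    {f : E → ℂ} {p : FormalMultilinearSeries ℂ E ℂ} (hf : HasFPowerSeriesAt f p 0) {k : ℕ}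
    (hO : f =O[𝓝 0] fun y => ‖y‖ ^ k) (n : ℕ) (hn : n < k) (y : E) : (p n fun _ => y) = 0 := by
  induction n using Nat.strong_induction_on generalizing y with
  | _ n ih =>
    refine IsBigO.continuousMultilinearMap_apply_eq_zero ?_ y
    have h1 := hf.isBigO_sub_partialSum_pow (n + 1)
    have h2 : f =O[𝓝 0] fun y => ‖y‖ ^ (n + 1) := by
      refine hO.trans (IsBigO.of_bound 1 ?_)
      filter_upwards [Metric.ball_mem_nhds (0 : E) one_pos] with z hz
      simp only [norm_pow, norm_norm, one_mul]
      exact pow_le_pow_of_le_one (norm_nonneg _) (by simpa using (mem_ball_zero_iff.1 hz).le) hn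
    refine (h2.sub h1).congr_left fun z => ?_
    have h3 : p.partialSum (n + 1) z = p n fun _ => z := by
      rw [FormalMultilinearSeries.partialSum, Finset.sum_range_succ, Finset.sum_eq_zero, zero_add]
      intro m hm
      exact ih m (Finset.mem_range.1 hm) ((Finset.mem_range.1 hm).trans hn) z
    simp [h3]

/-- If `A` generates a linear flow `e t` contracting at rate `1/2` and `f` is analytic at `0` with
`f = O(‖y‖ᵏ)`, `Re l < k / 2`, then `h(y) = -∫₀^∞ exp(l t) f(e t y) dt` is analytic at `0` and solves
`Dh(y)(A y) + l h(y) = f(y)`. -/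
theorem exists_solution {E : Type*} [NormedAddCommGroup E] [NormedSpace ℂ E]
    (e : ℝ → E →L[ℂ] E) (A : E →L[ℂ] E) (hcont : Continuous e) (h0 : e 0 = 1)
    (hadd : ∀ s t, e (s + t) = e s * e t) (hA : HasDerivAt e A 0)
    (hle : ∀ t, 0 ≤ t → ‖e t‖ ≤ Real.exp (-t / 2))
    (l : ℂ) (k : ℕ) (hl : l.re < k / 2) (f : E → ℂ) (hf : AnalyticAt ℂ f 0)
    (hO : f =O[𝓝 0] fun y => ‖y‖ ^ k) :
    ∃ h : E → ℂ, AnalyticAt ℂ h 0 ∧ ∀ᶠ y in 𝓝 0, fderiv ℂ h y (A y) + l * h y = f y := by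
  obtain ⟨p, r, hp⟩ := hf
  have hvan := powerSeries_apply_eq_zero_of_isBigO hp.hasFPowerSeriesAt hO
  set δ : ℝ := k / 2 - l.re with hδ
  have hδ0 : 0 < δ := by linarith
  have hint : IntegrableOn (fun t : ℝ => Real.exp (-δ * t)) (Ioi 0) := exp_neg_integrableOn_Ioi 0 hδ0
  have hval : ∫ t in Ioi (0 : ℝ), Real.exp (-δ * t) = 1 / δ := by
    rw [integral_exp_mul_Ioi (by linarith)]; simp
  -- the integrand in degree `n`, with values in the `n`-linear maps
  let G (n : ℕ) (t : ℝ) : E [×n]→L[ℂ] ℂ :=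
    Complex.exp (l * t) • (p n).compContinuousLinearMap fun _ => e t
  have hGc (n : ℕ) : Continuous (G n) := by
    have := (ContinuousMultilinearMap.compContinuousLinearMapLRight (𝕜 := ℂ) (E := fun _ : Fin n => E) (p n)).cont.comp
      (continuous_pi fun _ : Fin n => hcont)
    exact (by fun_prop : Continuous fun t : ℝ => Complex.exp (l * t)).smul this
  have hGn (n : ℕ) (hn : k ≤ n) (t : ℝ) (ht : t ∈ Ioi (0 : ℝ)) :
      ‖G n t‖ ≤ ‖p n‖ * Real.exp (-δ * t) := by
    have ht' : 0 ≤ t := le_of_lt ht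
    have h1 := (p n).norm_compContinuousLinearMap_le fun _ : Fin n => e t
    have h2 : ‖e t‖ ^ n ≤ Real.exp (-t / 2) ^ n := pow_le_pow_left₀ (norm_nonneg _) (hle t ht') n
    simp only [Finset.prod_const, Finset.card_univ, Fintype.card_fin] at h1
    have hn' : (k : ℝ) ≤ n := by exact_mod_cast hn
    calc ‖G n t‖ = Real.exp (l.re * t) * ‖(p n).compContinuousLinearMap fun _ => e t‖ := by
          simp only [G, norm_smul, Complex.norm_exp]; simp
      _ ≤ Real.exp (l.re * t) * (‖p n‖ * Real.exp (-t / 2) ^ n) := by gcongr; exact h1.trans (by gcongr)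
      _ = ‖p n‖ * Real.exp (l.re * t + n * (-t / 2)) := by rw [Real.exp_add, Real.exp_nat_mul]; ring
      _ ≤ ‖p n‖ * Real.exp (-δ * t) := by
          gcongr
          rw [hδ]
          nlinarith
  have hGi (n : ℕ) (hn : k ≤ n) : IntegrableOn (G n) (Ioi 0) := by
    refine Integrable.mono' (hint.const_mul ‖p n‖) (hGc n).aestronglyMeasurable ?_
    exact (ae_restrict_iff' measurableSet_Ioi).2 (ae_of_all _ fun t ht => hGn n hn t ht)
  -- the low degrees are dropped: their diagonal parts vanish, but their integrals may diverge
  let q : FormalMultilinearSeries ℂ E ℂ := fun n =>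
    if n < k then 0 else -∫ t in Ioi (0 : ℝ), G n t
  have hqn (n : ℕ) : ‖q n‖ ≤ ‖p n‖ * (1 / δ) := by
    by_cases hn : n < k
    · simp only [q, if_pos hn, norm_zero]; positivity
    · simp only [q, if_neg hn, norm_neg]
      rw [← hval, ← integral_const_mul]
      exact norm_integral_le_of_norm_le (hint.const_mul _)
        ((ae_restrict_iff' measurableSet_Ioi).2 (ae_of_all _ fun t ht => hGn n (not_lt.1 hn) t ht))
  have hrad : p.radius ≤ q.radius := by
    refine ENNReal.le_of_forall_nnreal_lt fun ρ hρ => ?_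
    obtain ⟨C, hC, hb⟩ := p.norm_mul_pow_le_of_lt_radius hρ
    refine q.le_radius_of_bound (C * (1 / δ)) fun n => ?_
    calc ‖q n‖ * (ρ : ℝ) ^ n ≤ ‖p n‖ * (1 / δ) * (ρ : ℝ) ^ n := by gcongr; exact hqn n
      _ = ‖p n‖ * (ρ : ℝ) ^ n * (1 / δ) := by ring
      _ ≤ C * (1 / δ) := by gcongr; exact hb n
  have hr : r ≤ p.radius := hp.r_le
  have hr0 := hp.r_pos
  have hq : HasFPowerSeriesOnBall q.sum q 0 r :=
    (q.hasFPowerSeriesOnBall (hr0.trans_le (hr.trans hrad))).mono hr0 (hr.trans hrad)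
  have hball (y : E) (hy : y ∈ Metric.eball (0 : E) r) (t : ℝ) (ht : 0 ≤ t) :
      e t y ∈ Metric.eball (0 : E) r := by
    have h1 : ‖e t y‖ ≤ ‖y‖ := by
      refine ((e t).le_opNorm y).trans (mul_le_of_le_one_left (norm_nonneg _) ((hle t ht).trans ?_))
      rw [Real.exp_le_one_iff]; linarith
    simp only [Metric.mem_eball, edist_zero_right] at hy ⊢
    refine lt_of_le_of_lt ?_ hy
    exact enorm_le_iff_norm_le.2 h1
  -- the sum of `q` is `-∫₀^∞ exp(l t) f(e t y) dt`, by exchanging sum and integral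
  have hrep (y : E) (hy : y ∈ Metric.eball (0 : E) r) :
      IntegrableOn (fun t : ℝ => Complex.exp (l * t) * f (e t y)) (Ioi 0) ∧
      q.sum y = -∫ t in Ioi (0 : ℝ), Complex.exp (l * t) * f (e t y) := by
    have hphi : ContinuousOn (fun t : ℝ => Complex.exp (l * t) * f (e t y)) (Ici 0) := by
      refine ContinuousOn.mul (by fun_prop) ?_
      refine hp.continuousOn.comp (t := Metric.eball (0 : E) r) ?_ fun t ht => hball y hy t ht
      exact (hcont.clm_apply continuous_const).continuousOn
    let F (n : ℕ) (t : ℝ) : ℂ := if n < k then 0 else G n t fun _ => y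
    have hFsum (t : ℝ) (ht : t ∈ Ioi (0 : ℝ)) :
        HasSum (fun n => F n t) (Complex.exp (l * t) * f (e t y)) := by
      have h1 := (hp.hasSum (hball y hy t (le_of_lt ht))).mul_left (Complex.exp (l * t))
      rw [zero_add] at h1
      refine h1.congr_fun fun n => ?_
      by_cases hn : n < k
      · simp [F, if_pos hn, hvan n hn]
      · simp [F, if_neg hn, G]
    have hsum : Summable fun n => ‖p n‖ * ‖y‖ ^ n := by
      have : (‖y‖₊ : ENNReal) < p.radius := by
        refine lt_of_lt_of_le ?_ hr
        rw [Metric.mem_eball, edist_zero_right] at hy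
        exact hy
      simpa using p.summable_norm_mul_pow this
    have hFn (n : ℕ) (t : ℝ) (ht : t ∈ Ioi (0 : ℝ)) :
        ‖F n t‖ ≤ ‖p n‖ * ‖y‖ ^ n * Real.exp (-δ * t) := by
      by_cases hn : n < k
      · simp only [F, if_pos hn, norm_zero]; positivity
      · simp only [F, if_neg hn]
        refine ((G n t).le_opNorm _).trans ?_
        have := hGn n (not_lt.1 hn) t ht
        simp only [Finset.prod_const, Finset.card_univ, Fintype.card_fin]
        calc ‖G n t‖ * ‖y‖ ^ n ≤ ‖p n‖ * Real.exp (-δ * t) * ‖y‖ ^ n := by gcongr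
          _ = _ := by ring
    have hFi (n : ℕ) : IntegrableOn (F n) (Ioi 0) := by
      refine Integrable.mono' (hint.const_mul (‖p n‖ * ‖y‖ ^ n)) ?_
        ((ae_restrict_iff' measurableSet_Ioi).2 (ae_of_all _ fun t ht => hFn n t ht))
      refine Continuous.aestronglyMeasurable ?_
      by_cases hn : n < k
      · simp only [F, if_pos hn]; exact continuous_const
      · simp only [F, if_neg hn]
        exact (ContinuousMultilinearMap.apply ℂ (fun _ : Fin n => E) ℂ fun _ => y).continuous.comp
          (hGc n)
    constructor
    · refine Integrable.mono' (hint.const_mul (∑' n, ‖p n‖ * ‖y‖ ^ n))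
        ((hphi.mono Ioi_subset_Ici_self).aestronglyMeasurable measurableSet_Ioi)
        ((ae_restrict_iff' measurableSet_Ioi).2 (ae_of_all _ fun t ht => ?_))
      rw [← (hFsum t ht).tsum_eq, ← tsum_mul_right]
      exact tsum_of_norm_bounded (hsum.mul_right _).hasSum fun n => hFn n t ht
    · have h1 := hasSum_integral_of_summable_integral_norm (μ := volume.restrict (Ioi 0)) hFi (by
        refine Summable.of_nonneg_of_le (fun n => by positivity) (fun n => ?_)
          (hsum.mul_right (1 / δ))
        rw [← hval, ← integral_const_mul]
        exact setIntegral_mono_on (hFi n).norm (hint.const_mul _) measurableSet_Ioi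
          fun t ht => hFn n t ht)
      have h2 : ∫ t in Ioi (0 : ℝ), ∑' n, F n t =
          ∫ t in Ioi (0 : ℝ), Complex.exp (l * t) * f (e t y) :=
        setIntegral_congr_fun measurableSet_Ioi fun t ht => (hFsum t ht).tsum_eq
      rw [← h2, ← h1.neg.tsum_eq, FormalMultilinearSeries.sum]
      refine tsum_congr fun n => ?_
      by_cases hn : n < k
      · simp [q, F, if_pos hn]
      · simp only [q, F, if_neg hn, neg_apply]
        rw [ContinuousMultilinearMap.integral_apply (hGi n (not_lt.1 hn))]
  refine ⟨q.sum, hq.analyticAt, ?_⟩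
  filter_upwards [Metric.eball_mem_nhds (0 : E) hr0] with y hy
  have hphi : ContinuousOn (fun t : ℝ => Complex.exp (l * t) * f (e t y)) (Ici 0) := by
    refine ContinuousOn.mul (by fun_prop) ?_
    refine hp.continuousOn.comp (t := Metric.eball (0 : E) r) ?_ fun t ht => hball y hy t ht
    exact (hcont.clm_apply continuous_const).continuousOn
  -- the equation integrated along the flow; differentiating it from the right at `s = 0` gives
  -- the claim
  have hflow (s : ℝ) (hs : s ∈ Ici (0 : ℝ)) : Complex.exp (l * s) * q.sum (e s y) =
      q.sum y + ∫ t in (0 : ℝ)..s, Complex.exp (l * t) * f (e t y) := by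
    have hi := (hrep y hy).1
    rw [(hrep y hy).2, (hrep _ (hball y hy s hs)).2,
      ← intervalIntegral.integral_interval_add_Ioi hi (hi.mono_set (Ioi_subset_Ioi hs))]
    have hshift : ∫ t in Ioi s, Complex.exp (l * t) * f (e t y) =
        ∫ t in Ioi (0 : ℝ), Complex.exp (l * (t + s : ℝ)) * f (e (t + s) y) := by
      have := (measurePreserving_add_right volume s).setIntegral_preimage_emb
        (measurableEmbedding_addRight s) (fun t : ℝ => Complex.exp (l * t) * f (e t y)) (Ioi s)
      rw [← this]
      simp
    rw [hshift, mul_neg, ← integral_const_mul]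
    have : ∀ t : ℝ, Complex.exp (l * s) * (Complex.exp (l * t) * f (e t (e s y))) =
        Complex.exp (l * (t + s : ℝ)) * f (e (t + s) y) := fun t => by
      rw [hadd, ← mul_assoc, ← Complex.exp_add]
      push_cast
      rw [mul_add, add_comm (l * (t : ℂ))]
      rfl
    simp_rw [this]
    ring
  have hd1 : HasDerivWithinAt (fun s : ℝ => Complex.exp (l * s) * q.sum (e s y))
      (f y) (Ici 0) 0 := by
    have h1 : HasDerivWithinAt (fun s : ℝ => ∫ t in (0 : ℝ)..s, Complex.exp (l * t) * f (e t y))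
        (Complex.exp (l * (0 : ℝ)) * f (e 0 y)) (Ici 0) 0 := by
      refine intervalIntegral.integral_hasDerivWithinAt_right (t := Ioi 0) (by simp) ?_
        ((hphi 0 self_mem_Ici).mono Ioi_subset_Ici_self)
      exact ⟨Ioi 0, self_mem_nhdsWithin, (hrep y hy).1.aestronglyMeasurable⟩
    have h2 := (h1.const_add (q.sum y)).congr hflow (hflow 0 self_mem_Ici)
    simpa [h0] using h2
  have hd2 : HasDerivAt (fun s : ℝ => Complex.exp (l * s) * q.sum (e s y))
      (fderiv ℂ q.sum y (A y) + l * q.sum y) 0 := by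
    have h1 : HasDerivAt (fun s : ℝ => e s y) (A y) 0 := by
      have := ((ContinuousLinearMap.apply ℂ E y).restrictScalars ℝ).hasFDerivAt.comp_hasDerivAt
        (0 : ℝ) hA
      exact this
    have h2 : HasFDerivAt q.sum (fderiv ℂ q.sum y) (e 0 y) := by
      rw [h0]
      exact (hq.analyticAt_of_mem hy).differentiableAt.hasFDerivAt
    have h3 : HasDerivAt (fun s : ℝ => q.sum (e s y)) (fderiv ℂ q.sum y (A y)) 0 := by
      have := HasFDerivAt.comp_hasDerivAt (f := fun s : ℝ => e s y) (0 : ℝ)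
        (h2.restrictScalars ℝ) h1
      exact this
    have h4 : HasDerivAt (fun s : ℝ => Complex.exp (l * s)) l 0 := by
      have := (((Complex.ofRealCLM.hasDerivAt (x := (0 : ℝ))).const_mul l).cexp)
      simpa using this
    have := h4.mul h3
    simp only [h0, Complex.ofReal_zero, mul_zero, Complex.exp_zero, one_mul,
      one_apply_eq_self] at this
    rw [add_comm]
    exact this
  exact (uniqueDiffOn_Ici (0 : ℝ) 0 self_mem_Ici).eq_deriv _ hd2.hasDerivWithinAt hd1

/-! ### The vector field `ζ y₂ ∂₂ + ζ² y₃ ∂₃` on `ℂ²` -/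

theorem sq_add_self_add_one {ζ : ℂ} (h3 : ζ ^ 3 = 1) (h1 : ζ ≠ 1) : ζ ^ 2 + ζ + 1 = 0 := by
  have : (ζ - 1) * (ζ ^ 2 + ζ + 1) = 0 := by linear_combination h3
  exact (mul_eq_zero.1 this).resolve_left (sub_ne_zero.2 h1)

theorem re_eq {ζ : ℂ} (h3 : ζ ^ 3 = 1) (h1 : ζ ≠ 1) : ζ.re = -1 / 2 ∧ (ζ ^ 2).re = -1 / 2 := by
  have h := sq_add_self_add_one h3 h1
  have hre := congrArg Complex.re h
  have him := congrArg Complex.im h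
  simp only [pow_two, Complex.add_re, Complex.mul_re, Complex.one_re, Complex.zero_re,
    Complex.add_im, Complex.mul_im, Complex.one_im, Complex.zero_im] at hre him ⊢
  have h2 : ζ.im * (2 * ζ.re + 1) = 0 := by linarith
  rcases mul_eq_zero.1 h2 with h4 | h4
  · rw [h4] at hre
    nlinarith [sq_nonneg (ζ.re + 1 / 2)]
  · constructor <;> linarith

/-- `exists_solution` for `A = diag(ζ, ζ²)`, whose flow contracts like `exp(-t / 2)`. -/
theorem exists_lineDeriv_solution {ζ : ℂ} (h3 : ζ ^ 3 = 1) (h1 : ζ ≠ 1) (l : ℂ) (k : ℕ)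
    (hl : l.re < k / 2) (f : ℂ × ℂ → ℂ) (hf : AnalyticAt ℂ f 0)
    (hO : f =O[𝓝 0] fun y => ‖y‖ ^ k) :
    ∃ h : ℂ × ℂ → ℂ, AnalyticAt ℂ h 0 ∧
      ∀ᶠ y in 𝓝 0, HasLineDerivAt ℂ h (f y - l * h y) y (ζ * y.1, ζ ^ 2 * y.2) := by
  obtain ⟨hr1, hr2⟩ := re_eq h3 h1
  let L₁ : ℂ × ℂ →L[ℂ] ℂ × ℂ := (ContinuousLinearMap.fst ℂ ℂ ℂ).prod 0
  let L₂ : ℂ × ℂ →L[ℂ] ℂ × ℂ := (0 : ℂ × ℂ →L[ℂ] ℂ).prod (ContinuousLinearMap.snd ℂ ℂ ℂ)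
  have hexp (z : ℂ) : HasDerivAt (fun s : ℝ => Complex.exp (z * s)) z 0 := by
    have := (((Complex.ofRealCLM.hasDerivAt (x := (0 : ℝ))).const_mul z).cexp)
    simpa using this
  obtain ⟨h, hh, hsol⟩ := exists_solution
    (fun t : ℝ => Complex.exp (ζ * t) • L₁ + Complex.exp (ζ ^ 2 * t) • L₂)
    (ζ • L₁ + ζ ^ 2 • L₂) (by fun_prop)
    (by ext <;> simp [L₁, L₂])
    (by
      intro s t
      ext <;> simp [L₁, L₂, mul_add, Complex.exp_add] <;> ring)
    (((hexp ζ).smul_const L₁).add ((hexp (ζ ^ 2)).smul_const L₂))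
    (by
      intro t ht
      refine ContinuousLinearMap.opNorm_le_bound _ (Real.exp_pos _).le fun y => ?_
      have e1 : ‖Complex.exp (ζ * t)‖ = Real.exp (-t / 2) := by
        rw [Complex.norm_exp, Complex.re_mul_ofReal, hr1]; ring_nf
      have e2 : ‖Complex.exp (ζ ^ 2 * t)‖ = Real.exp (-t / 2) := by
        rw [Complex.norm_exp, Complex.re_mul_ofReal, hr2]; ring_nf
      have : (Complex.exp (ζ * t) • L₁ + Complex.exp (ζ ^ 2 * t) • L₂) y =
          (Complex.exp (ζ * t) * y.1, Complex.exp (ζ ^ 2 * t) * y.2) := by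
        simp [L₁, L₂]
      rw [this, Prod.norm_def, norm_mul, norm_mul, e1, e2]
      exact max_le (by gcongr; exact norm_fst_le y) (by gcongr; exact norm_snd_le y))
    l k hl f hf hO
  refine ⟨h, hh, ?_⟩
  filter_upwards [hsol, hh.eventually_analyticAt] with y hy hya
  have hv : (ζ • L₁ + ζ ^ 2 • L₂) y = (ζ * y.1, ζ ^ 2 * y.2) := by simp [L₁, L₂]
  rw [hv] at hy
  rw [← hy, add_sub_cancel_right]
  exact hya.differentiableAt.hasFDerivAt.hasLineDerivAt _

theorem AnalyticAt.isBigO_norm {f : ℂ × ℂ → ℂ} (hf : AnalyticAt ℂ f 0) (h0 : f 0 = 0) :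
    f =O[𝓝 0] fun y => ‖y‖ := by
  have := hf.differentiableAt.isBigO_sub
  simpa [h0] using this.norm_right

/-- The case `l = 0`, normalized by subtracting the value at the origin. -/
theorem exists_primitive {ζ : ℂ} (h3 : ζ ^ 3 = 1) (h1 : ζ ≠ 1) (f : ℂ × ℂ → ℂ)
    (hf : AnalyticAt ℂ f 0) (h0 : f 0 = 0) :
    ∃ u : ℂ × ℂ → ℂ, AnalyticAt ℂ u 0 ∧ u 0 = 0 ∧
      ∀ᶠ y in 𝓝 0, HasLineDerivAt ℂ u (f y) y (ζ * y.1, ζ ^ 2 * y.2) := by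
  obtain ⟨u, hu, hsol⟩ := exists_lineDeriv_solution h3 h1 0 1 (by simp) f hf
    (by simpa using hf.isBigO_norm h0)
  refine ⟨fun y => u y - u 0, hu.sub analyticAt_const, by simp, ?_⟩
  filter_upwards [hsol] with y hy
  have := HasDerivAt.sub_const (u 0) hy
  rw [zero_mul, sub_zero] at this
  exact this

theorem hasDerivAt_coord (y : ℂ × ℂ) (v : ℂ × ℂ) :
    HasDerivAt (fun s : ℂ => (y + s • v).1) v.1 0 ∧ HasDerivAt (fun s : ℂ => (y + s • v).2) v.2 0 := by
  constructor
  · simpa using ((hasDerivAt_id (0 : ℂ)).mul_const v.1).const_add y.1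
  · simpa using ((hasDerivAt_id (0 : ℂ)).mul_const v.2).const_add y.2

/-! ### The components of the linearizing map -/

theorem analyticAt_x₂ : AnalyticAt ℂ (fun y : ℂ × ℂ => y.1 / (1 - y.1)) 0 :=
  analyticAt_fst.div (analyticAt_const.sub analyticAt_fst) (by simp)

theorem lineDeriv_x₂ (ζ : ℂ) : ∀ᶠ y : ℂ × ℂ in 𝓝 0,
    HasLineDerivAt ℂ (fun y : ℂ × ℂ => y.1 / (1 - y.1))
      (ζ * (y.1 / (1 - y.1)) * (1 + y.1 / (1 - y.1))) y (ζ * y.1, ζ ^ 2 * y.2) := by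
  have hc : ContinuousAt (fun y : ℂ × ℂ => 1 - y.1) 0 := by fun_prop
  filter_upwards [hc.eventually_ne (y := 0) (by simp)] with y hy
  have h := (hasDerivAt_coord y (ζ * y.1, ζ ^ 2 * y.2)).1
  have h' := h.div (h.const_sub 1) (by simpa using hy)
  refine HasDerivAt.congr_deriv h' ?_
  simp only [zero_smul, add_zero]
  field_simp
  ring

/-- The third component is `x₃ = y₃ P`: the equation below is equivalent to
`X x₃ = ζ² x₃ (1 + c x₂ + d x₃)`. Here `P = eᵐ / (1 - y₃ g)`, the substitution that linearizes a
Riccati equation. -/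
theorem exists_P {ζ : ℂ} (h3 : ζ ^ 3 = 1) (h1 : ζ ≠ 1) (c d : ℂ) :
    ∃ P : ℂ × ℂ → ℂ, AnalyticAt ℂ P 0 ∧ P 0 = 1 ∧ ∀ᶠ y in 𝓝 0,
      HasLineDerivAt ℂ P (ζ ^ 2 * P y * (c * (y.1 / (1 - y.1)) + d * (y.2 * P y))) y
        (ζ * y.1, ζ ^ 2 * y.2) := by
  obtain ⟨m, hm, hm0, hDm⟩ := exists_primitive h3 h1
    (fun y => ζ ^ 2 * c * (y.1 / (1 - y.1))) (analyticAt_const.mul analyticAt_x₂) (by simp)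
  have hf : AnalyticAt ℂ (fun y => ζ ^ 2 * d * Complex.exp (m y)) 0 := analyticAt_const.mul hm.cexp
  obtain ⟨g, hg, hDg⟩ := exists_lineDeriv_solution h3 h1 (ζ ^ 2) 0
    (by rw [(re_eq h3 h1).2]; norm_num) _ hf (by simpa using hf.continuousAt.isBigO_one ℂ |>.norm_right)
  have hden : AnalyticAt ℂ (fun y : ℂ × ℂ => 1 - y.2 * g y) 0 :=
    analyticAt_const.sub (analyticAt_snd.mul hg)
  refine ⟨fun y => Complex.exp (m y) / (1 - y.2 * g y), hm.cexp.div hden (by simp), by simp [hm0], ?_⟩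
  filter_upwards [hDm, hDg, hden.continuousAt.eventually_ne (y := 0) (by simp)] with y hmy hgy hy
  have h := (hasDerivAt_coord y (ζ * y.1, ζ ^ 2 * y.2)).2
  have h' := (HasDerivAt.cexp hmy).div ((h.mul hgy).const_sub 1)
    (by simpa only [Pi.mul_apply, zero_smul, add_zero] using hy)
  refine HasDerivAt.congr_deriv h' ?_
  simp only [zero_smul, add_zero, Pi.mul_apply]
  generalize y.1 / (1 - y.1) = X
  field_simp
  ring

/-- The resonant equation `X h + h = a eᵘ`. The hypotheses on `x₂`, `x₃`, `u` turn `X` into a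
derivation on polynomials in `x₂`, `x₃` times `eᵘ`, so the quadratic correction is found by comparing
coefficients. -/
theorem exists_h {ζ : ℂ} (h3 : ζ ^ 3 = 1) (h1 : ζ ≠ 1) (a b c d : ℂ) (x₂ x₃ u : ℂ × ℂ → ℂ)
    (h₂ : AnalyticAt ℂ x₂ 0) (h₃ : AnalyticAt ℂ x₃ 0) (hu : AnalyticAt ℂ u 0)
    (h₂0 : x₂ 0 = 0) (h₃0 : x₃ 0 = 0)
    (hD₂ : ∀ᶠ y in 𝓝 0,
      HasLineDerivAt ℂ x₂ (ζ * x₂ y * (1 + x₂ y)) y (ζ * y.1, ζ ^ 2 * y.2))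
    (hD₃ : ∀ᶠ y in 𝓝 0,
      HasLineDerivAt ℂ x₃ (ζ ^ 2 * x₃ y * (1 + c * x₂ y + d * x₃ y)) y (ζ * y.1, ζ ^ 2 * y.2))
    (hDu : ∀ᶠ y in 𝓝 0,
      HasLineDerivAt ℂ u (ζ * c * x₂ y + b * x₃ y) y (ζ * y.1, ζ ^ 2 * y.2)) :
    ∃ h : ℂ × ℂ → ℂ, AnalyticAt ℂ h 0 ∧ ∀ᶠ y in 𝓝 0,
      HasLineDerivAt ℂ h (a * Complex.exp (u y) - h y) y (ζ * y.1, ζ ^ 2 * y.2) := by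
  have hζ := sq_add_self_add_one h3 h1
  have hne1 : 1 + 2 * ζ ≠ 0 := fun h => by
    have : (3 : ℂ) = 0 := by linear_combination 4 * hζ - (1 + 2 * ζ) * h
    norm_num at this
  have hne2 : 1 + 2 * ζ ^ 2 ≠ 0 := fun h => by
    apply hne1
    linear_combination 2 * hζ - h
  -- coefficients of `x₂`, `x₃`, `x₂²`, `x₃²` in the quadratic approximate solution `eᵘ K`
  obtain ⟨p, hp⟩ : ∃ p, p = ζ ^ 2 * c := ⟨_, rfl⟩
  obtain ⟨q, hq⟩ : ∃ q, q = ζ ^ 2 * b := ⟨_, rfl⟩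
  obtain ⟨r, hr⟩ : ∃ r, r * (1 + 2 * ζ) = -(ζ * p * (1 + c)) := ⟨_, div_mul_cancel₀ _ hne1⟩
  obtain ⟨t, ht⟩ : ∃ t, t * (1 + 2 * ζ ^ 2) = -(q * (ζ ^ 2 * d + b)) :=
    ⟨_, div_mul_cancel₀ _ hne2⟩
  let K : ℂ × ℂ → ℂ := fun y =>
    a * (1 + p * x₂ y + q * x₃ y + r * x₂ y ^ 2 + t * x₃ y ^ 2)
  let w₁ : ℂ × ℂ → ℂ := fun y => 2 * r * ζ * x₂ y + r * (ζ * c * x₂ y + b * x₃ y)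
  let w₂ : ℂ × ℂ → ℂ := fun y =>
    2 * t * ζ ^ 2 * (c * x₂ y + d * x₃ y) + t * (ζ * c * x₂ y + b * x₃ y)
  -- what `eᵘ K` leaves unsolved, a cubic in `x₂`, `x₃` up to the factor `-a eᵘ`
  let f : ℂ × ℂ → ℂ := fun y =>
    -a * Complex.exp (u y) * (x₂ y * x₂ y * w₁ y + x₃ y * x₃ y * w₂ y)
  have hw₁ : AnalyticAt ℂ w₁ 0 := by fun_prop
  have hw₂ : AnalyticAt ℂ w₂ 0 := by fun_prop
  have hKa : AnalyticAt ℂ K 0 := by fun_prop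
  have hexp : AnalyticAt ℂ (fun y => Complex.exp (u y)) 0 := hu.cexp
  have hO : f =O[𝓝 0] fun y => ‖y‖ ^ 3 := by
    have o₂ := h₂.isBigO_norm h₂0
    have o₃ := h₃.isBigO_norm h₃0
    have ow₁ := hw₁.isBigO_norm (by simp [w₁, h₂0, h₃0])
    have ow₂ := hw₂.isBigO_norm (by simp [w₂, h₂0, h₃0])
    have oc : (fun y => -a * Complex.exp (u y)) =O[𝓝 0] fun _ => (1 : ℝ) :=
      (analyticAt_const.mul hexp).continuousAt.isBigO_one ℝ
    have h1 := ((o₂.mul o₂).mul ow₁).add ((o₃.mul o₃).mul ow₂)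
    exact (oc.mul h1).congr_right fun y => by ring
  obtain ⟨h, hh, hsol⟩ := exists_lineDeriv_solution h3 h1 1 3 (by norm_num) f (by fun_prop) hO
  refine ⟨fun y => Complex.exp (u y) * K y + h y, (hexp.mul hKa).add hh, ?_⟩
  filter_upwards [hsol, hD₂, hD₃, hDu] with y hy hy₂ hy₃ hyu
  have k1 := HasDerivAt.const_mul p hy₂
  have k2 := HasDerivAt.const_mul q hy₃
  have k3 := (HasDerivAt.pow hy₂ 2).const_mul r
  have k4 := (HasDerivAt.pow hy₃ 2).const_mul t
  have kK := ((((k1.const_add 1).add k2).add k3).add k4).const_mul a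
  have k := ((HasDerivAt.cexp hyu).mul kK).add hy
  refine HasDerivAt.congr_deriv k ?_
  simp only [zero_smul, add_zero, f, K, w₁, w₂, Pi.add_apply, Pi.pow_apply]
  generalize Complex.exp (u y) = U
  generalize x₂ y = X
  generalize x₃ y = Z
  subst hp hq
  push_cast
  -- the five terms are the coefficients of `x₂`, `x₃`, `x₂²`, `x₃²` and the resonant `x₂ x₃`
  linear_combination a * U * (X * ζ * c * hζ + Z * b * (hζ + ζ * h3) + X ^ 2 * hr + Z ^ 2 * ht
    + X * Z * b * c * ζ ^ 2 * hζ)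

theorem hasFDerivAt_clm_mul_zero {E : Type*} [NormedAddCommGroup E] [NormedSpace ℂ E] (L : E →L[ℂ] ℂ)
    {Q : E → ℂ} (hQ : DifferentiableAt ℂ Q 0) (hQ0 : Q 0 = 1) :
    HasFDerivAt (fun y => L y * Q y) L 0 := by
  have := L.hasFDerivAt.fun_mul hQ.hasFDerivAt
  refine this.congr_fderiv ?_
  ext v
  simp [hQ0]

/-- The quadratic system (case (9))
ẋ₁ = x₁(1 + a₁₀₀x₁ + ζc₀₁₀x₂ + a₀₀₁x₃), ẋ₂ = ζx₂(1 + x₂),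
ẋ₃ = ζ²x₃(1 + c₀₁₀x₂ + c₀₀₁x₃) is analytically linearizable. -/
theorem stmt_19 (ζ : ℂ) (h3 : ζ ^ 3 = 1) (h1 : ζ ≠ 1)
    (a₁₀₀ a₀₀₁ c₀₁₀ c₀₀₁ : ℂ)
    (F : ℂ × ℂ × ℂ → ℂ × ℂ × ℂ)
    (hF : ∀ x : ℂ × ℂ × ℂ, F x =
      (x.1 * (1 + a₁₀₀ * x.1 + ζ * c₀₁₀ * x.2.1 + a₀₀₁ * x.2.2),
       ζ * x.2.1 * (1 + x.2.1),
       ζ ^ 2 * x.2.2 * (1 + c₀₁₀ * x.2.1 + c₀₀₁ * x.2.2))) :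
    ∃ (U : Set (ℂ × ℂ × ℂ)) (H : ℂ × ℂ × ℂ → ℂ × ℂ × ℂ),
      U ∈ nhds (0 : ℂ × ℂ × ℂ) ∧ (∀ y ∈ U, AnalyticAt ℂ H y) ∧
      H 0 = 0 ∧ fderiv ℂ H 0 = ContinuousLinearMap.id ℂ (ℂ × ℂ × ℂ) ∧
      ∀ y ∈ U, F (H y) = fderiv ℂ H y (y.1, ζ * y.2.1, ζ ^ 2 * y.2.2) := by
  obtain ⟨P, hP, hP0, hDP⟩ := exists_P h3 h1 c₀₁₀ c₀₀₁
  let x₂ : ℂ × ℂ → ℂ := fun y => y.1 / (1 - y.1)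
  let x₃ : ℂ × ℂ → ℂ := fun y => y.2 * P y
  have h₂ : AnalyticAt ℂ x₂ 0 := analyticAt_x₂
  have h₃ : AnalyticAt ℂ x₃ 0 := analyticAt_snd.mul hP
  have hD₂ : ∀ᶠ y in 𝓝 0, HasLineDerivAt ℂ x₂ (ζ * x₂ y * (1 + x₂ y)) y (ζ * y.1, ζ ^ 2 * y.2) :=
    lineDeriv_x₂ ζ
  have hD₃ : ∀ᶠ y in 𝓝 0, HasLineDerivAt ℂ x₃
      (ζ ^ 2 * x₃ y * (1 + c₀₁₀ * x₂ y + c₀₀₁ * x₃ y)) y (ζ * y.1, ζ ^ 2 * y.2) := by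
    filter_upwards [hDP] with y hy
    refine HasDerivAt.congr_deriv ((hasDerivAt_coord y (ζ * y.1, ζ ^ 2 * y.2)).2.mul hy) ?_
    simp only [zero_smul, add_zero, x₂, x₃]
    ring
  obtain ⟨u, hu, hu0, hDu⟩ := exists_primitive h3 h1
    (fun y => ζ * c₀₁₀ * x₂ y + a₀₀₁ * x₃ y) (by fun_prop) (by simp [x₂, x₃])
  obtain ⟨h, hh, hDh⟩ := exists_h h3 h1 a₁₀₀ a₀₀₁ c₀₁₀ c₀₀₁ x₂ x₃ u h₂ h₃ hu (by simp [x₂])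
    (by simp [x₃]) hD₂ hD₃ hDu
  let Q₁ : ℂ × ℂ × ℂ → ℂ := fun y => Complex.exp (u y.2) / (1 - y.1 * h y.2)
  let Q₂ : ℂ × ℂ × ℂ → ℂ := fun y => 1 / (1 - y.2.1)
  let Q₃ : ℂ × ℂ × ℂ → ℂ := fun y => P y.2
  let H : ℂ × ℂ × ℂ → ℂ × ℂ × ℂ := fun y => (y.1 * Q₁ y, y.2.1 * Q₂ y, y.2.2 * Q₃ y)
  have hs : AnalyticAt ℂ (fun y : ℂ × ℂ × ℂ => y.2) 0 := analyticAt_snd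
  have hu' : AnalyticAt ℂ (fun y : ℂ × ℂ × ℂ => u y.2) 0 := AnalyticAt.fun_comp hu hs
  have hh' : AnalyticAt ℂ (fun y : ℂ × ℂ × ℂ => h y.2) 0 := AnalyticAt.fun_comp hh hs
  have hden : AnalyticAt ℂ (fun y : ℂ × ℂ × ℂ => 1 - y.1 * h y.2) 0 :=
    analyticAt_const.sub (analyticAt_fst.mul hh')
  have hQ₁ : AnalyticAt ℂ Q₁ 0 := hu'.cexp.div hden (by simp)
  have hQ₂ : AnalyticAt ℂ Q₂ 0 :=
    analyticAt_const.div (analyticAt_const.sub (analyticAt_fst.fun_comp hs)) (by simp)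
  have hQ₃ : AnalyticAt ℂ Q₃ 0 := AnalyticAt.fun_comp hP hs
  have hH : AnalyticAt ℂ H 0 :=
    (analyticAt_fst.mul hQ₁).prod (((analyticAt_fst.fun_comp hs).mul hQ₂).prod
      ((analyticAt_snd.fun_comp hs).mul hQ₃))
  have hd : HasFDerivAt H (ContinuousLinearMap.id ℂ (ℂ × ℂ × ℂ)) 0 :=
    (hasFDerivAt_clm_mul_zero (ContinuousLinearMap.fst ℂ ℂ (ℂ × ℂ)) hQ₁.differentiableAt
      (by simp [Q₁, hu0])).prodMk
    ((hasFDerivAt_clm_mul_zero ((ContinuousLinearMap.fst ℂ ℂ ℂ).comp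
      (ContinuousLinearMap.snd ℂ ℂ (ℂ × ℂ))) hQ₂.differentiableAt (by simp [Q₂])).prodMk
    (hasFDerivAt_clm_mul_zero ((ContinuousLinearMap.snd ℂ ℂ ℂ).comp
      (ContinuousLinearMap.snd ℂ ℂ (ℂ × ℂ))) hQ₃.differentiableAt (by simp [Q₃, hP0])))
  have hsnd : Tendsto (fun y : ℂ × ℂ × ℂ => y.2) (𝓝 0) (𝓝 0) := hs.continuousAt
  have hev : ∀ᶠ y in 𝓝 (0 : ℂ × ℂ × ℂ), AnalyticAt ℂ H y ∧
      F (H y) = fderiv ℂ H y (y.1, ζ * y.2.1, ζ ^ 2 * y.2.2) := by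
    filter_upwards [hH.eventually_analyticAt, hsnd.eventually hD₂, hsnd.eventually hD₃,
      hsnd.eventually hDu, hsnd.eventually hDh,
      hden.continuousAt.eventually_ne (y := 0) (by simp)] with y hya hy₂ hy₃ hyu hyh hyne
    refine ⟨hya, ?_⟩
    set v : ℂ × ℂ × ℂ := (y.1, ζ * y.2.1, ζ ^ 2 * y.2.2) with hv
    have hline := hya.differentiableAt.hasFDerivAt.hasLineDerivAt v
    have hc₁ : HasDerivAt (fun s : ℂ => (y + s • v).1) y.1 0 := by
      simpa [hv] using ((hasDerivAt_id (0 : ℂ)).mul_const y.1).const_add y.1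
    have hx₁ : HasLineDerivAt ℂ (fun y => y.1 * Q₁ y) (F (H y)).1 y v := by
      refine HasDerivAt.congr_deriv (hc₁.mul ((HasDerivAt.cexp hyu).div
        ((hc₁.mul hyh).const_sub 1) (by simpa using hyne))) ?_
      rw [hF]
      simp only [zero_smul, add_zero, H, Q₁, Q₂, Q₃, x₂, x₃, mul_one_div]
      generalize y.2.1 / (1 - y.2.1) = X
      field_simp
      ring
    have hx₂ : HasLineDerivAt ℂ (fun y => y.2.1 * Q₂ y) (F (H y)).2.1 y v := by
      rw [hF]
      simp only [H, Q₂, mul_one_div]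
      exact hy₂
    have hx₃ : HasLineDerivAt ℂ (fun y => y.2.2 * Q₃ y) (F (H y)).2.2 y v := by
      rw [hF]
      simp only [H, Q₂, Q₃, mul_one_div]
      exact hy₃
    exact HasDerivAt.unique (HasDerivAt.prodMk hx₁ (HasDerivAt.prodMk hx₂ hx₃)) hline
  exact ⟨_, H, hev, fun y hy => hy.1, by simp [H], hd.fderiv, fun y hy => hy.2⟩
end
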